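/- arXiv:math/0101123 — 6 statements merged into one kernel-verified Lean document; each statement's English description precedes it below -/
import Mathlib

section
/- Let λ ∈ ℤ with v(λ̄) = 0. Then, as a module over the K-subalgebra of 𝔗(v) generated by b (which is isomorphic to K[b]/(b^p)), the baby Verma module V(λ) is free of rank one; consequently V(λ) has a unique maximal 𝔗(v)-submodule, i.e. the quotient of V(λ) by its radical is a simple module. -/
/-!
The explicit model of `V(λ)` is the space `Fin p → K` of coordinates with respect to the vectors
`b ^ i • m`, `i < p`, on which `h` acts diagonally with eigenvalues `λ - i`, `b` shifts up, and `a`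
shifts down with weights `v (λ - i - 1)`. The relations hold there; the only delicate ones are at
the two ends `i = 0` and `i = p - 1`, where `v(λ) = 0` and `p = 0` in `K` are used. Applying
elements of `𝔗(v)` to the first basis vector gives a `K`-linear map `vermaCoord` that kills `I(λ)`
and sends `q(b)` to the first `p` coefficients of `q`. Hence `q(b) ∈ I(λ)` forces `X ^ p ∣ q`, and so
`q(b) = 0` (`X_pow_dvd_of_mem`, `aeval_b_eq_zero`). This gives both the isomorphism `K[b] ≃ K[X]/(X ^ p)` and the
uniqueness of coordinates in `V(λ)`.

Existence of coordinates is `𝔗(v) = K[b] + I(λ)` (`exists_sub_aeval_mem`): the right-hand side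
contains `1` and is stable under left multiplication by `a`, `b`, `h`.

Finally, if a submodule of `V(λ)` contains `q(b) m` with `q(0) ≠ 0`, then it contains `m`, because
`q` is invertible modulo `X ^ p`. So every proper submodule lies in the hyperplane where the zeroth
coordinate vanishes, hence so does the sum of all proper submodules, which is therefore proper.
-/

/-!
The algebra `𝔗(v) = T(v)/(a^p, b^p)`, where `T(v)` is Hodges' algebra: the quotient of the
free algebra `K⟨a,b,h⟩` by the two-sided ideal generated by `ha − ah − a`, `hb − bh + b`,
`ba − v(h)`, `ab − v(h−1)`.  We realise `𝔗(v)` as a `RingQuot` of the free algebra on three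
generators (`0 ↦ a`, `1 ↦ b`, `2 ↦ h`), imposing in addition the relations `a^p = 0`,
`b^p = 0`.
-/

open Polynomial

noncomputable section

/-- the generator `a` of the free algebra `K⟨a,b,h⟩` -/
def fa (K : Type) [Field K] : FreeAlgebra K (Fin 3) := FreeAlgebra.ι K 0

/-- the generator `b` of the free algebra `K⟨a,b,h⟩` -/
def fb (K : Type) [Field K] : FreeAlgebra K (Fin 3) := FreeAlgebra.ι K 1

/-- the generator `h` of the free algebra `K⟨a,b,h⟩` -/
def fh (K : Type) [Field K] : FreeAlgebra K (Fin 3) := FreeAlgebra.ι K 2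

/-- The defining relations of `𝔗(v) = T(v)/(a^p, b^p)`. -/
inductive TTvRel (K : Type) [Field K] (v : K[X]) (p : ℕ) :
    FreeAlgebra K (Fin 3) → FreeAlgebra K (Fin 3) → Prop
  | ha : TTvRel K v p (fh K * fa K) (fa K * (fh K + 1))
  | hb : TTvRel K v p (fh K * fb K) (fb K * (fh K - 1))
  | ba : TTvRel K v p (fb K * fa K) (aeval (fh K) v)
  | ab : TTvRel K v p (fa K * fb K) (aeval (fh K - 1) v)
  | ap : TTvRel K v p (fa K ^ p) 0
  | bp : TTvRel K v p (fb K ^ p) 0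

/-- the algebra `𝔗(v) = T(v)/(a^p, b^p)` -/
abbrev TTv (K : Type) [Field K] (v : K[X]) (p : ℕ) := RingQuot (TTvRel K v p)

/-- the image of `a` in `𝔗(v)` -/
def TTa (K : Type) [Field K] (v : K[X]) (p : ℕ) : TTv K v p :=
  RingQuot.mkAlgHom K (TTvRel K v p) (fa K)

/-- the image of `b` in `𝔗(v)` -/
def TTb (K : Type) [Field K] (v : K[X]) (p : ℕ) : TTv K v p :=
  RingQuot.mkAlgHom K (TTvRel K v p) (fb K)

/-- the image of `h` in `𝔗(v)` -/
def TTh (K : Type) [Field K] (v : K[X]) (p : ℕ) : TTv K v p :=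
  RingQuot.mkAlgHom K (TTvRel K v p) (fh K)

/-- The left ideal `I(λ)` of `𝔗(v)` generated by `a` and `h − λ̄`; the baby Verma module
`V(λ)` is the quotient `𝔗(v) ⧸ I(λ)`. -/
def babyVermaIdeal (K : Type) [Field K] (v : K[X]) (p : ℕ) (lam : ℤ) :
    Ideal (TTv K v p) :=
  Ideal.span {TTa K v p, TTh K v p - algebraMap K (TTv K v p) ((lam : ℤ) : K)}

/-! ### Relations in `𝔗(v)` -/

section Relations

variable (K : Type) [Field K] (v : K[X]) (p : ℕ)

theorem TTh_mul_TTb : TTh K v p * TTb K v p = TTb K v p * (TTh K v p - 1) := by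
  simpa [TTh, TTb] using RingQuot.mkAlgHom_rel K (TTvRel.hb (K := K) (v := v) (p := p))

theorem TTa_mul_TTb : TTa K v p * TTb K v p = aeval (TTh K v p - 1) v := by
  have h := RingQuot.mkAlgHom_rel K (TTvRel.ab (K := K) (v := v) (p := p))
  rw [← aeval_algHom_apply] at h
  simpa [TTh, TTa, TTb] using h

theorem TTb_pow : TTb K v p ^ p = 0 := by
  simpa [TTb] using RingQuot.mkAlgHom_rel K (TTvRel.bp (K := K) (v := v) (p := p))

theorem aeval_b_eq_zero {q : K[X]} (h : X ^ p ∣ q) : aeval (TTb K v p) q = 0 := by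
  obtain ⟨r, rfl⟩ := h
  simp [TTb_pow]

theorem mem_of_generators_mem (C : Subalgebra K (TTv K v p)) (ha : TTa K v p ∈ C)
    (hb : TTb K v p ∈ C) (hh : TTh K v p ∈ C) (t : TTv K v p) : t ∈ C := by
  obtain ⟨x, rfl⟩ := RingQuot.mkAlgHom_surjective K (TTvRel K v p) t
  induction x using FreeAlgebra.induction with
  | grade0 r => simp
  | grade1 i => fin_cases i <;> assumption
  | mul x y hx hy => simpa using C.mul_mem hx hy
  | add x y hx hy => simpa using C.add_mem hx hy

theorem TTh_mul_TTb_pow (k : ℕ) :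
    TTh K v p * TTb K v p ^ k = TTb K v p ^ k * (TTh K v p - (k : TTv K v p)) := by
  induction k with
  | zero => simp
  | succ k ih =>
    have hc : (k : TTv K v p) * TTb K v p = TTb K v p * (k : TTv K v p) := Nat.cast_comm k _
    rw [pow_succ, ← mul_assoc, ih, mul_assoc, sub_mul, TTh_mul_TTb, hc, mul_assoc, ← mul_sub]
    push_cast
    congr 2
    abel

end Relations

/-! ### The explicit model of `V(λ)` -/

section Model

variable (K : Type) [Field K] (v : K[X]) (p : ℕ) (lam : ℤ)

/-- The weights `λ - i` of `h` on the model. -/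
def vermaWeight : Fin p → K := fun i => (lam : K) - (i : ℕ)

/-- The action of `h` on the model: multiplication by the weights. -/
def vermaH : Module.End K (Fin p → K) := Algebra.lmul K (Fin p → K) (vermaWeight K p lam)

/-- The action of `b` on the model: the truncated shift `e_i ↦ e_{i+1}`, `e_{p-1} ↦ 0`. -/
def vermaB : Module.End K (Fin p → K) where
  toFun f i := if (i : ℕ) = 0 then 0 else f ⟨i - 1, by omega⟩
  map_add' f g := by ext i; by_cases h : (i : ℕ) = 0 <;> simp [h]
  map_smul' r f := by ext i; by_cases h : (i : ℕ) = 0 <;> simp [h]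

/-- The action of `a` on the model: `e_{i+1} ↦ v(λ - i - 1) e_i` and `e_0 ↦ 0`. -/
def vermaA : Module.End K (Fin p → K) where
  toFun f i := if h : (i : ℕ) + 1 < p then v.eval ((lam : K) - (i : ℕ) - 1) * f ⟨i + 1, h⟩ else 0
  map_add' f g := by ext i; by_cases h : (i : ℕ) + 1 < p <;> simp [h, mul_add]
  map_smul' r f := by ext i; by_cases h : (i : ℕ) + 1 < p <;> simp [h, mul_left_comm]

theorem vermaH_apply (f : Fin p → K) (i : Fin p) :
    vermaH K p lam f i = ((lam : K) - (i : ℕ)) * f i := rfl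

theorem vermaB_apply (f : Fin p → K) (i : Fin p) :
    vermaB K p f i = if (i : ℕ) = 0 then 0 else f ⟨i - 1, by omega⟩ := rfl

theorem vermaA_apply (f : Fin p → K) (i : Fin p) :
    vermaA K v p lam f i =
      if h : (i : ℕ) + 1 < p then v.eval ((lam : K) - (i : ℕ) - 1) * f ⟨i + 1, h⟩ else 0 := rfl

theorem aeval_lmul_apply (g f : Fin p → K) (i : Fin p) :
    aeval (Algebra.lmul K (Fin p → K) g) v f i = v.eval (g i) * f i := by
  rw [aeval_algHom_apply]
  have h : (aeval g v) i = v.eval (g i) := by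
    have := aeval_algHom_apply (Pi.evalAlgHom K (fun _ : Fin p => K) i) g v
    rw [Pi.evalAlgHom_apply, Pi.evalAlgHom_apply] at this
    rw [← this, coe_aeval_eq_eval]
  simp [h]

theorem aeval_vermaH_apply (f : Fin p → K) (i : Fin p) :
    aeval (vermaH K p lam) v f i = v.eval ((lam : K) - (i : ℕ)) * f i :=
  aeval_lmul_apply K v p _ f i

theorem aeval_vermaH_sub_one_apply (f : Fin p → K) (i : Fin p) :
    aeval (vermaH K p lam - 1) v f i = v.eval ((lam : K) - (i : ℕ) - 1) * f i := by
  have h : vermaH K p lam - 1 = Algebra.lmul K (Fin p → K) (vermaWeight K p lam - 1) := by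
    rw [map_sub, map_one]; rfl
  rw [h, aeval_lmul_apply]
  rfl

theorem vermaB_pow_apply (k : ℕ) (f : Fin p → K) (i : Fin p) :
    (vermaB K p ^ k) f i = if (i : ℕ) < k then 0 else f ⟨i - k, by omega⟩ := by
  induction k generalizing i with
  | zero => simp
  | succ k ih =>
    rw [pow_succ', Module.End.mul_apply, vermaB_apply]
    by_cases h0 : (i : ℕ) = 0
    · simp [h0]
    · rw [if_neg h0, ih]
      by_cases h : (i : ℕ) < k + 1
      · rw [if_pos h, if_pos (by simp only; omega)]
      · rw [if_neg h, if_neg (by simp only; omega)]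
        congr 2
        simp only
        omega

theorem vermaA_pow_apply (k : ℕ) (f : Fin p → K) (i : Fin p) (h : p ≤ (i : ℕ) + k) :
    (vermaA K v p lam ^ k) f i = 0 := by
  induction k generalizing i with
  | zero => omega
  | succ k ih =>
    rw [pow_succ', Module.End.mul_apply, vermaA_apply]
    split_ifs with h'
    · rw [ih _ (by simp only; omega), mul_zero]
    · rfl

/-- The images of the generators `a`, `b`, `h` in the endomorphisms of the model. -/
def vermaGen : Fin 3 → Module.End K (Fin p → K) :=
  ![vermaA K v p lam, vermaB K p, vermaH K p lam]

variable [CharP K p]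

/-- The model satisfies the defining relations of `𝔗(v)`, provided `v(λ) = 0`. -/
theorem vermaGen_rel (hroot : v.IsRoot (lam : K)) ⦃x y : FreeAlgebra K (Fin 3)⦄
    (hxy : TTvRel K v p x y) :
    FreeAlgebra.lift K (vermaGen K v p lam) x = FreeAlgebra.lift K (vermaGen K v p lam) y := by
  have ea : FreeAlgebra.lift K (vermaGen K v p lam) (fa K) = vermaA K v p lam := by
    simp [fa, vermaGen]
  have eb : FreeAlgebra.lift K (vermaGen K v p lam) (fb K) = vermaB K p := by
    simp [fb, vermaGen]
  have eh : FreeAlgebra.lift K (vermaGen K v p lam) (fh K) = vermaH K p lam := by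
    simp [fh, vermaGen]
  have hr : v.eval (lam : K) = 0 := hroot
  cases hxy with
  | ha =>
    rw [map_mul, map_mul, map_add, map_one, ea, eh]
    refine LinearMap.ext fun f => funext fun i => ?_
    simp only [Module.End.mul_apply, LinearMap.add_apply, Module.End.one_apply, vermaH_apply,
      vermaA_apply, Pi.add_apply]
    split_ifs with h
    · push_cast; ring
    · simp
  | hb =>
    rw [map_mul, map_mul, map_sub, map_one, eb, eh]
    refine LinearMap.ext fun f => funext fun i => ?_
    simp only [Module.End.mul_apply, LinearMap.sub_apply, Module.End.one_apply, vermaH_apply,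
      vermaB_apply, Pi.sub_apply]
    split_ifs with h
    · simp
    · rw [Nat.cast_sub (by omega)]; push_cast; ring
  | ba =>
    rw [map_mul, ← aeval_algHom_apply, ea, eb, eh]
    refine LinearMap.ext fun f => funext fun i => ?_
    rw [aeval_vermaH_apply, Module.End.mul_apply, vermaB_apply]
    split_ifs with h
    · simp [h, hr]
    · rw [vermaA_apply, dif_pos (by simp only; omega)]
      simp only
      rw [Nat.cast_sub (by omega)]
      congr 2
      · push_cast; ring
      · exact Fin.ext (by simp only; omega)
  | ab =>
    rw [map_mul, ← aeval_algHom_apply, map_sub, map_one, ea, eb, eh]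
    refine LinearMap.ext fun f => funext fun i => ?_
    rw [aeval_vermaH_sub_one_apply, Module.End.mul_apply, vermaA_apply]
    split_ifs with h
    · rw [vermaB_apply, if_neg (by simp)]
      rfl
    -- here `i = p - 1`, so the weight `λ - i - 1` equals `λ` in characteristic `p`
    · have hi : ((i : ℕ) : K) + 1 = 0 := by
        have : (i : ℕ) + 1 = p := by omega
        exact_mod_cast this ▸ CharP.cast_eq_zero K p
      rw [sub_sub, hi, sub_zero, hr, zero_mul]
  | ap =>
    rw [map_pow, ea, map_zero]
    exact LinearMap.ext fun f => funext fun i => vermaA_pow_apply K v p lam p f i (by omega)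
  | bp =>
    rw [map_pow, eb, map_zero]
    refine LinearMap.ext fun f => funext fun i => ?_
    rw [vermaB_pow_apply, if_pos i.2]
    rfl

/-- The representation of `𝔗(v)` on the model. -/
def vermaRep (hroot : v.IsRoot (lam : K)) : TTv K v p →ₐ[K] Module.End K (Fin p → K) :=
  RingQuot.liftAlgHom K ⟨FreeAlgebra.lift K (vermaGen K v p lam), vermaGen_rel K v p lam hroot⟩

variable (hroot : v.IsRoot (lam : K))

theorem vermaRep_a : vermaRep K v p lam hroot (TTa K v p) = vermaA K v p lam := by
  simp [vermaRep, TTa, fa, vermaGen]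

theorem vermaRep_b : vermaRep K v p lam hroot (TTb K v p) = vermaB K p := by
  simp [vermaRep, TTb, fb, vermaGen]

theorem vermaRep_h : vermaRep K v p lam hroot (TTh K v p) = vermaH K p lam := by
  simp [vermaRep, TTh, fh, vermaGen]

/-- The highest weight vector `e_0` of the model. -/
def vermaVec : Fin p → K := fun i => if (i : ℕ) = 0 then 1 else 0

/-- The orbit map `t ↦ t • e_0` of the highest weight vector. -/
def vermaCoord : TTv K v p →ₗ[K] (Fin p → K) :=
  LinearMap.applyₗ (vermaVec K p) ∘ₗ (vermaRep K v p lam hroot).toLinearMap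

theorem vermaCoord_apply (t : TTv K v p) :
    vermaCoord K v p lam hroot t = vermaRep K v p lam hroot t (vermaVec K p) := rfl

theorem vermaCoord_eq_zero {t : TTv K v p} (ht : t ∈ babyVermaIdeal K v p lam) :
    vermaCoord K v p lam hroot t = 0 := by
  induction ht using Submodule.span_induction with
  | mem x hx =>
    rcases hx with rfl | rfl
    · rw [vermaCoord_apply, vermaRep_a]
      ext i
      rw [vermaA_apply]
      simp [vermaVec]
    · rw [vermaCoord_apply, map_sub, vermaRep_h, AlgHom.commutes]
      ext i
      rw [LinearMap.sub_apply, Pi.sub_apply, vermaH_apply, Module.algebraMap_end_apply]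
      by_cases h : (i : ℕ) = 0 <;> simp [vermaVec, h]
  | zero => simp
  | add x y _ _ hx hy => rw [map_add, hx, hy, add_zero]
  | smul r x _ hx =>
    rw [vermaCoord_apply] at hx ⊢
    rw [smul_eq_mul, map_mul, Module.End.mul_apply, hx, map_zero]

theorem vermaCoord_aeval (q : K[X]) (i : Fin p) :
    vermaCoord K v p lam hroot (aeval (TTb K v p) q) i = q.coeff i := by
  induction q using Polynomial.induction_on' with
  | add q r hq hr => simp [hq, hr]
  | monomial k c =>
    rw [aeval_monomial, ← Algebra.smul_def, map_smul, Pi.smul_apply, vermaCoord_apply, map_pow,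
      vermaRep_b, vermaB_pow_apply, coeff_monomial]
    by_cases h : (i : ℕ) < k
    · simp [h, h.ne']
    · by_cases h' : k = i
      · simp [vermaVec, h']
      · have : (i : ℕ) - k ≠ 0 := by omega
        simp [vermaVec, h, h', this]

theorem X_pow_dvd_of_mem (hroot : v.IsRoot (lam : K)) {q : K[X]}
    (h : aeval (TTb K v p) q ∈ babyVermaIdeal K v p lam) :
    X ^ p ∣ q := by
  rw [X_pow_dvd_iff]
  intro d hd
  rw [← vermaCoord_aeval K v p lam hroot q ⟨d, hd⟩, vermaCoord_eq_zero K v p lam hroot h]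
  rfl

end Model

/-! ### The decomposition `𝔗(v) = K[b] + I(λ)` -/

section Generation

variable (K : Type) [Field K] (v : K[X]) (p : ℕ) (lam : ℤ)

/-- The `K`-subspace `K[b] + I(λ)` of `𝔗(v)`. -/
def bPlusIdeal : Submodule K (TTv K v p) :=
  LinearMap.range (aeval (R := K) (TTb K v p)).toLinearMap ⊔
    (babyVermaIdeal K v p lam).restrictScalars K

theorem ideal_mem_bPlusIdeal {t : TTv K v p} (ht : t ∈ babyVermaIdeal K v p lam) :
    t ∈ bPlusIdeal K v p lam :=
  Submodule.mem_sup_right ht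

theorem pow_mem_bPlusIdeal (k : ℕ) : TTb K v p ^ k ∈ bPlusIdeal K v p lam :=
  Submodule.mem_sup_left ⟨X ^ k, by simp⟩

/-- Stability of `K[b] + I(λ)` under left multiplication by `t` only has to be tested on the
powers of `b`, since `I(λ)` is a left ideal. -/
theorem bPlusIdeal_stable (t : TTv K v p)
    (H : ∀ k : ℕ, t * TTb K v p ^ k ∈ bPlusIdeal K v p lam) {s : TTv K v p}
    (hs : s ∈ bPlusIdeal K v p lam) : t * s ∈ bPlusIdeal K v p lam := by
  obtain ⟨_, ⟨q, rfl⟩, y, hy, rfl⟩ := Submodule.mem_sup.1 hs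
  rw [mul_add]
  refine add_mem ?_ (ideal_mem_bPlusIdeal K v p lam (Ideal.mul_mem_left _ t hy))
  rw [AlgHom.toLinearMap_apply]
  clear hs
  induction q using Polynomial.induction_on' with
  | add q r hq hr =>
    rw [map_add, mul_add]
    exact add_mem hq hr
  | monomial k c =>
    rw [aeval_monomial, ← Algebra.smul_def, mul_smul_comm]
    exact Submodule.smul_mem _ c (H k)

/-- The elements of `𝔗(v)` whose left multiplication preserves `K[b] + I(λ)`. -/
def stabilizer : Subalgebra K (TTv K v p) where
  carrier := {t | ∀ s ∈ bPlusIdeal K v p lam, t * s ∈ bPlusIdeal K v p lam}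
  mul_mem' hx hy s hs := by rw [mul_assoc]; exact hx _ (hy _ hs)
  add_mem' hx hy s hs := by rw [add_mul]; exact add_mem (hx _ hs) (hy _ hs)
  algebraMap_mem' r s hs := by rw [← Algebra.smul_def]; exact Submodule.smul_mem _ r hs

theorem TTh_mem_stabilizer : TTh K v p ∈ stabilizer K v p lam := by
  intro s hs
  refine bPlusIdeal_stable K v p lam _ (fun k => ?_) hs
  have h : TTh K v p * TTb K v p ^ k =
      TTb K v p ^ k * (TTh K v p - algebraMap K (TTv K v p) (lam : K)) +
        ((lam : K) - k) • TTb K v p ^ k := by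
    rw [TTh_mul_TTb_pow, Algebra.smul_def, Algebra.commutes, ← mul_add, map_sub, map_natCast]
    congr 1
    abel
  rw [h]
  exact add_mem (ideal_mem_bPlusIdeal K v p lam (Ideal.mul_mem_left _ _ (Ideal.subset_span (by simp))))
    (Submodule.smul_mem _ _ (pow_mem_bPlusIdeal K v p lam k))

theorem TTa_mem_stabilizer : TTa K v p ∈ stabilizer K v p lam := by
  intro s hs
  refine bPlusIdeal_stable K v p lam _ (fun k => ?_) hs
  cases k with
  | zero =>
    rw [pow_zero, mul_one]
    exact ideal_mem_bPlusIdeal K v p lam (Ideal.subset_span (by simp))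
  | succ k =>
    rw [pow_succ', ← mul_assoc, TTa_mul_TTb]
    have h : aeval (TTh K v p - 1) v ∈ stabilizer K v p lam :=
      Algebra.adjoin_le (Set.singleton_subset_iff.2
        (sub_mem (TTh_mem_stabilizer K v p lam) (one_mem (stabilizer K v p lam))))
        (aeval_mem_adjoin_singleton K _)
    exact h _ (pow_mem_bPlusIdeal K v p lam k)

/-- `𝔗(v) = K[b] + I(λ)`. -/
theorem exists_sub_aeval_mem (t : TTv K v p) :
    ∃ q : K[X], t - aeval (TTb K v p) q ∈ babyVermaIdeal K v p lam := by
  have hb : TTb K v p ∈ stabilizer K v p lam := fun s hs =>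
    bPlusIdeal_stable K v p lam _
      (fun k => by rw [← pow_succ']; exact pow_mem_bPlusIdeal K v p lam (k + 1)) hs
  have ht := mem_of_generators_mem K v p (stabilizer K v p lam) (TTa_mem_stabilizer K v p lam) hb
    (TTh_mem_stabilizer K v p lam) t 1 (by simpa using pow_mem_bPlusIdeal K v p lam 0)
  obtain ⟨_, ⟨q, rfl⟩, y, hy, hq⟩ := Submodule.mem_sup.1 ht
  refine ⟨q, ?_⟩
  rw [mul_one] at hq
  rw [← hq, AlgHom.toLinearMap_apply, add_sub_cancel_left]
  exact hy

end Generation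

/-!
STATEMENT 11: Let `λ ∈ ℤ` with `v(λ̄) = 0`.  Then, as a module over the `K`-subalgebra of
`𝔗(v)` generated by `b` (which is isomorphic to `K[b]/(b^p)`), the baby Verma module
`V(λ)` is free of rank one (i.e. it has a one-element basis: there is `m ∈ V(λ)` such that
every element is uniquely `s • m` for `s` in the subalgebra); consequently `V(λ)` has a
unique maximal `𝔗(v)`-submodule (a proper submodule containing every proper submodule),
i.e. the quotient of `V(λ)` by its radical is simple.
-/

theorem statement_11 (K : Type) [Field K] (p n : ℕ) [Fact p.Prime] [CharP K p]
    [IsAlgClosed K] (hn : 0 < n) (hpn : Nat.Coprime p n)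
    (v : K[X]) (hmonic : v.Monic) (hdeg : v.natDegree = n)
    (hroots : ∀ x : K, v.IsRoot x → ∃ m : ℕ, (m : K) = x)
    (lam : ℤ) (hroot : v.IsRoot ((lam : ℤ) : K)) :
    Nonempty ((Polynomial K ⧸ (Ideal.span {(Polynomial.X : Polynomial K) ^ p} :
        Ideal (Polynomial K))) ≃ₐ[K] Algebra.adjoin K ({TTb K v p} : Set (TTv K v p))) ∧
    (∃ m : TTv K v p ⧸ babyVermaIdeal K v p lam,
      ∀ x : TTv K v p ⧸ babyVermaIdeal K v p lam,
        ∃! s : Algebra.adjoin K ({TTb K v p} : Set (TTv K v p)),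
          (s : TTv K v p) • m = x) ∧
    (∃ N : Submodule (TTv K v p) (TTv K v p ⧸ babyVermaIdeal K v p lam),
      N ≠ ⊤ ∧
        ∀ N' : Submodule (TTv K v p) (TTv K v p ⧸ babyVermaIdeal K v p lam),
          N' ≠ ⊤ → N' ≤ N) := by
  have hpp : 0 < p := (Fact.out : p.Prime).pos
  refine ⟨?_, ⟨Submodule.Quotient.mk 1, fun x => ?_⟩, ?_⟩
  · have hker : RingHom.ker (aeval (R := K) (TTb K v p)) = Ideal.span {(X : K[X]) ^ p} := by
      ext q
      rw [RingHom.mem_ker, Ideal.mem_span_singleton]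
      refine ⟨fun h => X_pow_dvd_of_mem K v p lam hroot (h ▸ zero_mem _), aeval_b_eq_zero K v p⟩
    exact ⟨(Ideal.quotientEquivAlgOfEq K hker.symm).trans
      ((Ideal.quotientKerEquivRange (aeval (R := K) (TTb K v p))).trans
        (Subalgebra.equivOfEq _ _ (Algebra.adjoin_singleton_eq_range_aeval K (TTb K v p)).symm))⟩
  · obtain ⟨t, rfl⟩ := Submodule.Quotient.mk_surjective _ x
    obtain ⟨q, hq⟩ := exists_sub_aeval_mem K v p lam t
    refine ⟨⟨aeval (TTb K v p) q, aeval_mem_adjoin_singleton K _⟩, ?_, ?_⟩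
    · simp only
      rw [← Submodule.Quotient.mk_smul, smul_eq_mul, mul_one, eq_comm, Submodule.Quotient.eq]
      exact hq
    · rintro ⟨s, hs⟩ h
      rw [Algebra.adjoin_singleton_eq_range_aeval] at hs
      obtain ⟨r, rfl⟩ := hs
      simp only [RingHom.coe_coe, AlgHom.toRingHom_eq_coe] at h ⊢
      rw [← Submodule.Quotient.mk_smul, smul_eq_mul, mul_one, Submodule.Quotient.eq] at h
      have h2 := add_mem h hq
      rw [sub_add_sub_cancel, ← map_sub] at h2
      have h3 := aeval_b_eq_zero K v p (X_pow_dvd_of_mem K v p lam hroot h2)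
      rw [map_sub, sub_eq_zero] at h3
      exact Subtype.ext h3
  -- the zeroth coordinate vanishes on every proper submodule
  · have key : ∀ N' : Submodule (TTv K v p) (TTv K v p ⧸ babyVermaIdeal K v p lam), N' ≠ ⊤ →
        ∀ t : TTv K v p, Submodule.Quotient.mk t ∈ N' →
          vermaCoord K v p lam hroot t ⟨0, hpp⟩ = 0 := by
      intro N' hN' t ht
      obtain ⟨q, hq⟩ := exists_sub_aeval_mem K v p lam t
      have hc : vermaCoord K v p lam hroot t ⟨0, hpp⟩ = q.coeff 0 := by
        have := vermaCoord_eq_zero K v p lam hroot hq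
        rw [map_sub, sub_eq_zero] at this
        rw [this, vermaCoord_aeval]
      rw [hc]
      by_contra h0
      apply hN'
      have hcop : IsCoprime q (X ^ p) := by
        refine IsCoprime.pow_right (IsCoprime.symm ?_)
        exact (Polynomial.irreducible_X.coprime_iff_not_dvd).2 (by rwa [X_dvd_iff])
      obtain ⟨u, w, huw⟩ := hcop
      have hu : aeval (TTb K v p) u * aeval (TTb K v p) q = 1 := by
        have := congrArg (aeval (TTb K v p)) huw
        rwa [map_add, map_mul, map_mul, aeval_b_eq_zero K v p dvd_rfl, mul_zero, add_zero,
          map_one] at this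
      have h1 : (Submodule.Quotient.mk 1 : TTv K v p ⧸ babyVermaIdeal K v p lam) ∈ N' := by
        have h2 := N'.smul_mem (aeval (TTb K v p) u) ht
        rwa [(Submodule.Quotient.eq _).2 hq, ← Submodule.Quotient.mk_smul, smul_eq_mul, hu] at h2
      rw [eq_top_iff]
      intro x _
      obtain ⟨t', rfl⟩ := Submodule.Quotient.mk_surjective _ x
      have h2 := N'.smul_mem t' h1
      rwa [← Submodule.Quotient.mk_smul, smul_eq_mul, mul_one] at h2
    refine ⟨sSup {N' | N' ≠ ⊤}, fun htop => ?_, fun N' hN' => le_sSup hN'⟩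
    -- vanishing of the zeroth coordinate is additive, so it passes to the sum of all of them
    have hall : ∀ x ∈ sSup {N' : Submodule (TTv K v p)
        (TTv K v p ⧸ babyVermaIdeal K v p lam) | N' ≠ ⊤},
        ∃ t, Submodule.Quotient.mk t = x ∧ vermaCoord K v p lam hroot t ⟨0, hpp⟩ = 0 := by
      intro x hx
      rw [sSup_eq_iSup'] at hx
      induction hx using Submodule.iSup_induction' with
      | mem N' x hx =>
        obtain ⟨t, rfl⟩ := Submodule.Quotient.mk_surjective _ x
        exact ⟨t, rfl, key N'.1 N'.2 t hx⟩
      | zero => exact ⟨0, by simp, by simp⟩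
      | add x y _ _ hx hy =>
        obtain ⟨t, rfl, ht⟩ := hx
        obtain ⟨s, rfl, hs⟩ := hy
        exact ⟨t + s, by simp, by rw [map_add, Pi.add_apply, ht, hs, add_zero]⟩
    obtain ⟨t, ht, ht0⟩ := hall (Submodule.Quotient.mk 1) (by rw [htop]; exact Submodule.mem_top)
    have h := vermaCoord_eq_zero K v p lam hroot ((Submodule.Quotient.eq _).1 ht)
    rw [map_sub, sub_eq_zero] at h
    have h1 := vermaCoord_aeval K v p lam hroot 1 ⟨0, hpp⟩
    rw [map_one, ← h, ht0] at h1
    simp at h1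
end
end

section
/- Every simple left t(v)-module is isomorphic to a quotient of the baby Verma module V(λ) for some λ ∈ ℤ with v(λ̄) = 0. -/
/-!
Since `a` is nilpotent on the simple module `M`, its kernel is nonzero, and it is `h`-stable because
`a h = h a - a`. On this kernel `v(h) = b a` vanishes, and `v` is a product of linear factors, so
`h` has an eigenvector `w ∈ ker a` whose eigenvalue is a root of `v`
(`exists_eigenvector_in_ker`); such a root lies in the prime field by hypothesis. Thus `1 ↦ w`
factors through the baby Verma module, and it is onto because `M` is simple.
-/

/-!
The algebra `t(v) = T(v)/(a^p, b^p, h^p − h)`, where `T(v)` is Hodges' algebra: the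
quotient of the free algebra `K⟨a,b,h⟩` by the two-sided ideal generated by
`ha − ah − a`, `hb − bh + b`, `ba − v(h)`, `ab − v(h−1)`.  We realise `t(v)` as a
`RingQuot` of the free algebra on three generators (`0 ↦ a`, `1 ↦ b`, `2 ↦ h`), imposing
in addition the relations `a^p = 0`, `b^p = 0`, `h^p = h`.
-/

open Polynomial

noncomputable section

/-- The defining relations of `t(v) = T(v)/(a^p, b^p, h^p − h)`. -/
inductive tvRel (K : Type) [Field K] (v : K[X]) (p : ℕ) :
    FreeAlgebra K (Fin 3) → FreeAlgebra K (Fin 3) → Prop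
  | ha : tvRel K v p (fh K * fa K) (fa K * (fh K + 1))
  | hb : tvRel K v p (fh K * fb K) (fb K * (fh K - 1))
  | ba : tvRel K v p (fb K * fa K) (aeval (fh K) v)
  | ab : tvRel K v p (fa K * fb K) (aeval (fh K - 1) v)
  | ap : tvRel K v p (fa K ^ p) 0
  | bp : tvRel K v p (fb K ^ p) 0
  | hp : tvRel K v p (fh K ^ p) (fh K)

/-- the algebra `t(v) = T(v)/(a^p, b^p, h^p − h)` -/
abbrev tv (K : Type) [Field K] (v : K[X]) (p : ℕ) := RingQuot (tvRel K v p)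

/-- the image of `a` in `t(v)` -/
def ta (K : Type) [Field K] (v : K[X]) (p : ℕ) : tv K v p :=
  RingQuot.mkAlgHom K (tvRel K v p) (fa K)

/-- the image of `b` in `t(v)` -/
def tb (K : Type) [Field K] (v : K[X]) (p : ℕ) : tv K v p :=
  RingQuot.mkAlgHom K (tvRel K v p) (fb K)

/-- the image of `h` in `t(v)` -/
def th (K : Type) [Field K] (v : K[X]) (p : ℕ) : tv K v p :=
  RingQuot.mkAlgHom K (tvRel K v p) (fh K)

/-- The left ideal of `t(v)` generated by `a` and `h − λ̄`; the baby Verma module `V(λ)`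
is the quotient `t(v) ⧸ I(λ)`.  (The further generators `a^p`, `b^p`, `h^p − h` of the
ideal `I(λ)` of `T(v)` are already zero in `t(v)`.) -/
def tBabyVermaIdeal (K : Type) [Field K] (v : Polynomial K) (p : ℕ) (lam : ℤ) :
    Ideal (tv K v p) :=
  Ideal.span {ta K v p, th K v p - algebraMap K (tv K v p) ((lam : ℤ) : K)}

/-- Commutation in `t(v)`: the kernel of `a` on a module is stable under `h`. -/
lemma ta_smul_th_smul_eq_zero {K : Type} [Field K] {v : K[X]} {p : ℕ} {M : Type}
    [AddCommGroup M] [Module (tv K v p) M] {m : M} (hm : ta K v p • m = 0) :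
    ta K v p • th K v p • m = 0 := by
  have h : th K v p * ta K v p = ta K v p * (th K v p + 1) := by
    simpa [th, ta] using RingQuot.mkAlgHom_rel K (tvRel.ha (K := K) (v := v) (p := p))
  have h2 : ta K v p * th K v p = th K v p * ta K v p - ta K v p := by
    rw [h]; noncomm_ring
  rw [← mul_smul, h2, sub_smul, mul_smul, hm, smul_zero, sub_zero]

/-- A nonzero vector of `ker a` killed by a split polynomial in `h` yields an eigenvector of `h`
in `ker a` whose eigenvalue is a root of that polynomial. -/
lemma exists_eigenvector_in_ker {K : Type} [Field K] {v : K[X]} {p : ℕ} {M : Type}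
    [AddCommGroup M] [Module (tv K v p) M] (s : Multiset K) :
    ∀ m : M, m ≠ 0 → ta K v p • m = 0 →
      aeval (th K v p) (s.map fun r => X - C r).prod • m = 0 →
      ∃ r ∈ s, ∃ w : M, w ≠ 0 ∧ ta K v p • w = 0 ∧
        (th K v p - algebraMap K (tv K v p) r) • w = 0 := by
  induction s using Multiset.induction_on with
  | empty => intro m hm _ h; simp at h; exact absurd h hm
  | cons r s ih =>
    intro m hm ham h
    by_cases h0 : (th K v p - algebraMap K (tv K v p) r) • m = 0
    · exact ⟨r, Multiset.mem_cons_self r s, m, hm, ham, h0⟩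
    · have haw : ta K v p • (th K v p - algebraMap K (tv K v p) r) • m = 0 := by
        rw [sub_smul, smul_sub, ta_smul_th_smul_eq_zero ham, ← mul_smul,
          ← Algebra.commutes, mul_smul, ham, smul_zero, sub_zero]
      obtain ⟨r', hr', w, hw⟩ := ih _ h0 haw (by
        rw [Multiset.map_cons, Multiset.prod_cons, mul_comm, map_mul, mul_smul] at h
        simpa using h)
      exact ⟨r', Multiset.mem_cons_of_mem hr', w, hw⟩

/-!
STATEMENT 12: Every simple left `t(v)`-module is isomorphic to a quotient of the baby
Verma module `V(λ)` for some `λ ∈ ℤ` with `v(λ̄) = 0` (i.e. there is a surjective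
`t(v)`-linear map `V(λ) → M`).
-/

theorem statement_12 (K : Type) [Field K] (p n : ℕ) [Fact p.Prime] [CharP K p]
    [IsAlgClosed K] (hn : 0 < n) (hpn : Nat.Coprime p n)
    (v : Polynomial K) (hmonic : v.Monic) (hdeg : v.natDegree = n)
    (hroots : ∀ x : K, v.IsRoot x → ∃ m : ℕ, (m : K) = x)
    (M : Type) [AddCommGroup M] [Module (tv K v p) M]
    (hM : IsSimpleModule (tv K v p) M) :
    ∃ lam : ℤ, v.IsRoot ((lam : ℤ) : K) ∧
      ∃ f : (tv K v p ⧸ tBabyVermaIdeal K v p lam) →ₗ[tv K v p] M,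
        Function.Surjective f := by
  have hap : ta K v p ^ p = 0 := by
    simpa [ta] using RingQuot.mkAlgHom_rel K (tvRel.ap (K := K) (v := v) (p := p))
  have hba : tb K v p * ta K v p = aeval (th K v p) v := by
    have := RingQuot.mkAlgHom_rel K (tvRel.ba (K := K) (v := v) (p := p))
    rwa [map_mul, ← Polynomial.aeval_algHom_apply] at this
  have := hM.nontrivial
  obtain ⟨m₀, hm₀⟩ := exists_ne (0 : M)
  -- Nilpotency of `a` gives a nonzero vector in its kernel: the last nonzero `a ^ k • m₀`.
  obtain ⟨m, hm, ham⟩ : ∃ m : M, m ≠ 0 ∧ ta K v p • m = 0 := by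
    classical
    have hex : ∃ k, ta K v p ^ k • m₀ = 0 := ⟨p, by rw [hap, zero_smul]⟩
    obtain ⟨k, hk⟩ : ∃ k, Nat.find hex = k + 1 := by
      refine Nat.exists_eq_succ_of_ne_zero fun h => hm₀ ?_
      simpa [h] using Nat.find_spec hex
    refine ⟨ta K v p ^ k • m₀, Nat.find_min hex (by omega), ?_⟩
    rw [← mul_smul, ← pow_succ', ← hk]
    exact Nat.find_spec hex
  have hv : (v.roots.map fun r => X - C r).prod = v := by
    have h := (IsAlgClosed.splits v).eq_prod_roots
    rw [hmonic.leadingCoeff, C_1, one_mul] at h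
    exact h.symm
  obtain ⟨r, hr, w, hw, haw, hhw⟩ := exists_eigenvector_in_ker v.roots m hm ham (by
    rw [hv, ← hba, mul_smul, ham, smul_zero])
  have hroot : v.IsRoot r := isRoot_of_mem_roots hr
  obtain ⟨l, rfl⟩ := hroots r hroot
  refine ⟨l, by simpa using hroot, ?_⟩
  refine ⟨Submodule.liftQ _ (LinearMap.toSpanSingleton (tv K v p) M w) ?_, ?_⟩
  · refine Submodule.span_le.2 ?_
    rintro x (rfl | rfl)
    · simpa using haw
    · simpa using hhw
  · intro x
    obtain ⟨t, ht⟩ := IsSimpleModule.toSpanSingleton_surjective (tv K v p) hw x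
    exact ⟨Submodule.Quotient.mk t, ht⟩
end
end

section
/- Let k be the number of indices i ∈ {0, …, n−1} with r_i ≠ 0. Then t(v) has exactly k isomorphism classes of simple left modules: there is a family (L_i), indexed by those i ∈ {0, …, n−1} with r_{n−1−i} ≠ 0, of pairwise non-isomorphic simple t(v)-modules with dim_K L_i = r_{n−1−i}, and every simple left t(v)-module is isomorphic to some L_i. -/
/-!
Call an `h`-eigenvalue in a `t(v)`-module a weight. The relations say that `a` raises weights by
one, `b` lowers them by one, and `ba = v(h)`, `ab = v(h - 1)`. The roots of `v` are the residues
modulo `p` of the partial sums `S_k` of the composition `p = r_1 + ⋯ + r_{n-1} + r_0`, so they cut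
the circle `F_p` of weights into intervals `{S_k + 1, …, S_{k+1}}`, whose lengths are the parts
of the composition. The simple modules are supported on the nonempty intervals.

For an interval `{s + 1, …, s + d}` between roots `s` and `s + d`, the space `K^d` with
`a e_j = e_{j+1}`, `b e_{j+1} = v(s + j + 1) e_j`, `h e_j = (s + j + 1) e_j` is a module
(`rep`, `IntervalModule`). If no root lies strictly inside, the kernel of `b` is spanned by `e_0`
(`eq_smul_e_zero`). As `b` is nilpotent, every nonzero submodule contains `e_0`, hence everything
(`interval_isSimple`); and the weight `s + 1` of the kernel of `b` distinguishes the modules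
(`eq_of_equiv`).

Conversely a simple module contains a vector `y` with `b y = 0` of some weight `c + 1`
(`exists_lowest`), where `v(c) = 0` (`root_of_lowest`), so `c` is the left end `S_k` of a nonempty
interval of length `d`. If `a^d y ≠ 0`, then `a^d y` is again such a vector, killed by a smaller
power of `a`; by descent one may assume `a^d y = 0` (`IsComposition.exists_short`). Then
`e_j ↦ a^j y` is a nonzero homomorphism from the interval module (`exists_hom`), and it is an
isomorphism by Schur's lemma.
-/

/-!
The algebra `t(v) = T(v)/(a^p, b^p, h^p − h)`, where `T(v)` is Hodges' algebra: the
quotient of the free algebra `K⟨a,b,h⟩` by the two-sided ideal generated by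
`ha − ah − a`, `hb − bh + b`, `ba − v(h)`, `ab − v(h−1)`.  We realise `t(v)` as a
`RingQuot` of the free algebra on three generators (`0 ↦ a`, `1 ↦ b`, `2 ↦ h`), imposing
in addition the relations `a^p = 0`, `b^p = 0`, `h^p = h`.
-/

open Polynomial

noncomputable section

/-- The polynomial `v(z) = ∏_{i=0}^{n−1} (z − (r̄_1 + ⋯ + r̄_i))` determined by the
nonnegative integers `r_1, …, r_{n−1}`. -/
def vr (K : Type) [Field K] (n : ℕ) (r : ℕ → ℕ) : Polynomial K :=
  ∏ i ∈ Finset.range n,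
    (Polynomial.X - Polynomial.C ((∑ j ∈ Finset.Ico 1 (i + 1), r j : ℕ) : K))

/-! ### The generators of `t(v)` and their action on modules -/

namespace HodgesSimple

section Relations

variable {K : Type} [Field K] {v : K[X]} {p : ℕ}

lemma th_mul_ta : th K v p * ta K v p = ta K v p * (th K v p + 1) := by
  simpa [th, ta] using RingQuot.mkAlgHom_rel K (tvRel.ha (K := K) (v := v) (p := p))

lemma th_mul_tb : th K v p * tb K v p = tb K v p * (th K v p - 1) := by
  simpa [th, tb] using RingQuot.mkAlgHom_rel K (tvRel.hb (K := K) (v := v) (p := p))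

lemma tb_mul_ta : tb K v p * ta K v p = aeval (th K v p) v := by
  have := RingQuot.mkAlgHom_rel K (tvRel.ba (K := K) (v := v) (p := p))
  rwa [map_mul, ← aeval_algHom_apply] at this

lemma ta_mul_tb : ta K v p * tb K v p = aeval (th K v p - 1) v := by
  have := RingQuot.mkAlgHom_rel K (tvRel.ab (K := K) (v := v) (p := p))
  rwa [map_mul, ← aeval_algHom_apply, map_sub, map_one] at this

lemma ta_pow : ta K v p ^ p = 0 := by
  simpa [ta] using RingQuot.mkAlgHom_rel K (tvRel.ap (K := K) (v := v) (p := p))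

lemma tb_pow : tb K v p ^ p = 0 := by
  simpa [tb] using RingQuot.mkAlgHom_rel K (tvRel.bp (K := K) (v := v) (p := p))

lemma th_pow : th K v p ^ p = th K v p := by
  simpa [th] using RingQuot.mkAlgHom_rel K (tvRel.hp (K := K) (v := v) (p := p))

/-- `t(v)` is generated by `a`, `b`, `h`, so a `K`-linear map commuting with these three
elements commutes with all of `t(v)`. -/
lemma map_smul_of_generators {M N : Type*} [AddCommGroup M] [AddCommGroup N]
    [Module K M] [Module (tv K v p) M] [IsScalarTower K (tv K v p) M]
    [Module K N] [Module (tv K v p) N] [IsScalarTower K (tv K v p) N]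
    (f : M →ₗ[K] N)
    (ha : ∀ x, f (ta K v p • x) = ta K v p • f x)
    (hb : ∀ x, f (tb K v p • x) = tb K v p • f x)
    (hh : ∀ x, f (th K v p • x) = th K v p • f x)
    (t : tv K v p) (x : M) : f (t • x) = t • f x := by
  obtain ⟨t, rfl⟩ := RingQuot.mkAlgHom_surjective K (tvRel K v p) t
  induction t using FreeAlgebra.induction generalizing x with
  | grade0 c => simp
  | grade1 i =>
    fin_cases i
    · exact ha x
    · exact hb x
    · exact hh x
  | mul s t hs ht => rw [map_mul, mul_smul, mul_smul, hs, ht]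
  | add s t hs ht => rw [map_add, add_smul, add_smul, map_add, hs, ht]

end Relations

section Weights

variable {K : Type} [Field K] {v : K[X]} {p : ℕ}
  {M : Type*} [AddCommGroup M] [Module K M] [Module (tv K v p) M] [IsScalarTower K (tv K v p) M]

lemma aeval_smul_of_eigen {A : Type*} [Ring A] [Algebra K A] [Module A M] [IsScalarTower K A M]
    {t : A} {c : K} {x : M} (h : t • x = c • x) (q : K[X]) :
    aeval t q • x = q.eval c • x := by
  have : SMulCommClass K A M := IsScalarTower.to_smulCommClass
  induction q using Polynomial.induction_on' with
  | add q₁ q₂ h₁ h₂ => simp [add_smul, h₁, h₂]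
  | monomial k r =>
    have hk : ∀ k : ℕ, t ^ k • x = c ^ k • x := by
      intro k
      induction k with
      | zero => simp
      | succ k ih => rw [pow_succ', mul_smul, ih, smul_comm, h, smul_smul, ← pow_succ]
    rw [aeval_monomial, eval_monomial, mul_smul, hk, algebraMap_smul, smul_smul]

lemma th_smul_ta {c : K} {x : M} (h : th K v p • x = c • x) :
    th K v p • ta K v p • x = (c + 1) • ta K v p • x := by
  have : SMulCommClass K (tv K v p) M := IsScalarTower.to_smulCommClass
  rw [smul_smul, th_mul_ta, mul_smul, add_smul, h, one_smul, smul_add, add_smul, one_smul,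
    smul_comm]

lemma th_smul_tb {c : K} {x : M} (h : th K v p • x = c • x) :
    th K v p • tb K v p • x = (c - 1) • tb K v p • x := by
  have : SMulCommClass K (tv K v p) M := IsScalarTower.to_smulCommClass
  rw [smul_smul, th_mul_tb, mul_smul, sub_smul, h, one_smul, smul_sub, sub_smul, one_smul,
    smul_comm]

lemma th_smul_ta_pow {c : K} {x : M} (h : th K v p • x = c • x) (k : ℕ) :
    th K v p • ta K v p ^ k • x = (c + k) • ta K v p ^ k • x := by
  induction k with
  | zero => simpa using h
  | succ k ih =>
    rw [pow_succ', mul_smul, th_smul_ta ih]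
    push_cast
    rw [add_assoc]

lemma th_smul_tb_pow {c : K} {x : M} (h : th K v p • x = c • x) (k : ℕ) :
    th K v p • tb K v p ^ k • x = (c - k) • tb K v p ^ k • x := by
  induction k with
  | zero => simpa using h
  | succ k ih =>
    rw [pow_succ', mul_smul, th_smul_tb ih]
    push_cast
    rw [sub_sub]

/-- `b a^{k+1} y = v(c + k) a^k y` for `y` of weight `c`. -/
lemma tb_smul_ta_pow_succ {c : K} {x : M} (h : th K v p • x = c • x) (k : ℕ) :
    tb K v p • ta K v p ^ (k + 1) • x = v.eval (c + k) • ta K v p ^ k • x := by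
  rw [pow_succ', mul_smul, smul_smul, tb_mul_ta, aeval_smul_of_eigen (th_smul_ta_pow h k)]

/-- The last nonzero vector in the orbit of `x` under an element acting nilpotently. -/
lemma exists_last {A : Type*} [Ring A] [Module A M] (t : A) {q : ℕ} {x : M} (hx : x ≠ 0)
    (h : t ^ q • x = 0) : ∃ k, t ^ k • x ≠ 0 ∧ t • t ^ k • x = 0 := by
  classical
  have hex : ∃ q, t ^ q • x = 0 := ⟨q, h⟩
  obtain ⟨k, hk⟩ : ∃ k, Nat.find hex = k + 1 := by
    refine Nat.exists_eq_succ_of_ne_zero fun h0 => hx ?_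
    have := Nat.find_spec hex
    rwa [h0, pow_zero, one_smul] at this
  refine ⟨k, Nat.find_min hex (by omega), ?_⟩
  rw [smul_smul, ← pow_succ', ← hk]
  exact Nat.find_spec hex

lemma exists_eigen_of_prod {A : Type*} [Ring A] [Algebra K A] [Module A M] [IsScalarTower K A M]
    (t : A) (s : Multiset K) {x : M} (hx : x ≠ 0)
    (h : aeval t (s.map fun c => X - C c).prod • x = 0) :
    ∃ (c : K) (y : M), y ≠ 0 ∧ t • y = c • y := by
  induction s using Multiset.induction_on generalizing x with
  | empty => simp [hx] at h
  | cons c s ih =>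
    by_cases h0 : t • x = c • x
    · exact ⟨c, x, hx, h0⟩
    · refine ih (x := (t - algebraMap K A c) • x) ?_ ?_
      · rw [sub_smul, algebraMap_smul]
        exact sub_ne_zero.mpr h0
      · rw [Multiset.map_cons, Multiset.prod_cons, mul_comm, map_mul, mul_smul] at h
        simpa using h

lemma exists_eigen [IsAlgClosed K] [hp : Fact p.Prime] [Nontrivial M] :
    ∃ (c : K) (y : M), y ≠ 0 ∧ th K v p • y = c • y := by
  obtain ⟨x, hx⟩ := exists_ne (0 : M)
  have hm : (X ^ p - X : K[X]).Monic :=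
    monic_X_pow_sub (by rw [degree_X]; exact_mod_cast hp.out.one_lt)
  refine exists_eigen_of_prod (th K v p) (X ^ p - X : K[X]).roots hx ?_
  rw [← (IsAlgClosed.splits (X ^ p - X : K[X])).eq_prod_roots_of_monic hm]
  simp [th_pow]

/-- A nonzero `t(v)`-module contains a lowest weight vector, since `h` is annihilated by
`X^p - X` and `b` is nilpotent. The weight is written `c + 1` because `c` will be a root of `v`. -/
lemma exists_lowest [IsAlgClosed K] [Fact p.Prime] [Nontrivial M] :
    ∃ (c : K) (y : M), y ≠ 0 ∧ th K v p • y = (c + 1) • y ∧ tb K v p • y = 0 := by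
  obtain ⟨c, x, hx, hc⟩ := exists_eigen (K := K) (v := v) (p := p) (M := M)
  obtain ⟨k, hk, hk'⟩ := exists_last (tb K v p) (q := p) hx (by rw [tb_pow, zero_smul])
  exact ⟨c - k - 1, _, hk, by rw [th_smul_tb_pow hc, sub_add_cancel], hk'⟩

/-- The relation `ab = v(h - 1)` forces a lowest weight to be one more than a root of `v`. -/
lemma root_of_lowest {c : K} {y : M} (hy : y ≠ 0) (hc : th K v p • y = (c + 1) • y)
    (hb : tb K v p • y = 0) : v.eval c = 0 := by
  have h1 : (th K v p - 1) • y = c • y := by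
    rw [sub_smul, hc, one_smul, add_smul, one_smul, add_sub_cancel_right]
  have h2 : v.eval c • y = 0 := by
    rw [← aeval_smul_of_eigen h1, ← ta_mul_tb, mul_smul, hb, smul_zero]
  exact (smul_eq_zero.mp h2).resolve_right hy

end Weights

/-! ### The interval modules -/

section Interval

variable {K : Type} [Field K]

/-- The raising operator `e_j ↦ e_{j+1}` on `K^d`. -/
def opA (K : Type) [Field K] (d : ℕ) : Module.End K (Fin d → K) where
  toFun f j := if h : 0 < (j : ℕ) then f ⟨j - 1, by omega⟩ else 0
  map_add' f g := by ext j; by_cases h : 0 < (j : ℕ) <;> simp [h]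
  map_smul' c f := by ext j; by_cases h : 0 < (j : ℕ) <;> simp [h]

/-- The lowering operator `e_{j+1} ↦ v(s + j + 1) e_j`, `e_0 ↦ 0` on `K^d`. -/
def opB (v : K[X]) (s : K) (d : ℕ) : Module.End K (Fin d → K) where
  toFun f j := if h : (j : ℕ) + 1 < d then v.eval (s + (j + 1 : ℕ)) * f ⟨j + 1, h⟩ else 0
  map_add' f g := by ext j; by_cases h : (j : ℕ) + 1 < d <;> simp [h, mul_add]
  map_smul' c f := by ext j; by_cases h : (j : ℕ) + 1 < d <;> simp [h, mul_left_comm]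

/-- The weights `s + 1, …, s + d` of the interval module. -/
def wt (s : K) (d : ℕ) : Fin d → K := fun j => s + (j + 1 : ℕ)

/-- The diagonal operator `e_j ↦ (s + j + 1) e_j` on `K^d`. -/
def opH (s : K) (d : ℕ) : Module.End K (Fin d → K) := Algebra.lmul K (Fin d → K) (wt s d)

lemma opA_apply (d : ℕ) (f : Fin d → K) (j : Fin d) :
    opA K d f j = if h : 0 < (j : ℕ) then f ⟨j - 1, by omega⟩ else 0 := rfl

lemma opB_apply (v : K[X]) (s : K) (d : ℕ) (f : Fin d → K) (j : Fin d) :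
    opB v s d f j =
      if h : (j : ℕ) + 1 < d then v.eval (s + (j + 1 : ℕ)) * f ⟨j + 1, h⟩ else 0 := rfl

lemma opH_apply (s : K) (d : ℕ) (f : Fin d → K) (j : Fin d) :
    opH s d f j = (s + (j + 1 : ℕ)) * f j := rfl

lemma aeval_lmul_apply (q : K[X]) (d : ℕ) (w f : Fin d → K) (j : Fin d) :
    aeval (Algebra.lmul K (Fin d → K) w) q f j = q.eval (w j) * f j := by
  rw [aeval_algHom_apply, Algebra.coe_lmul_eq_mul, LinearMap.mul_apply', Pi.mul_apply]
  congr 1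
  simp

lemma opA_pow_apply (d k : ℕ) (f : Fin d → K) (j : Fin d) (h : (j : ℕ) < k) :
    (opA K d ^ k) f j = 0 := by
  induction k generalizing j with
  | zero => omega
  | succ k ih =>
    rw [pow_succ', Module.End.mul_apply, opA_apply]
    split_ifs with h0
    · exact ih _ (by simp only; omega)
    · rfl

lemma opB_pow_apply (v : K[X]) (s : K) (d k : ℕ) (f : Fin d → K) (j : Fin d)
    (h : d ≤ (j : ℕ) + k) : (opB v s d ^ k) f j = 0 := by
  induction k generalizing j with
  | zero => omega
  | succ k ih =>
    rw [pow_succ', Module.End.mul_apply, opB_apply]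
    split_ifs with h0
    · rw [ih _ (by simp only; omega), mul_zero]
    · rfl

/-- The data making `K^d` with the operators above a `t(v)`-module: the weights `s + 1, …, s + d`
are cut off at both ends by roots `s`, `s + d` of `v`. -/
structure IsCut (v : K[X]) (p : ℕ) (s d : ℕ) : Prop where
  left : v.eval (s : K) = 0
  right : v.eval ((s : K) + d) = 0
  le : d ≤ p

variable {v : K[X]} {p s d : ℕ}

lemma IsCut.ba (hc : IsCut v p s d) :
    opB v (s : K) d * opA K d = aeval (opH (s : K) d) v := by
  refine LinearMap.ext fun f => funext fun j => ?_
  rw [opH, aeval_lmul_apply, Module.End.mul_apply, opB_apply]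
  split_ifs with h
  · simp [opA_apply, wt]
  · have hj : (j : ℕ) + 1 = d := by omega
    rw [wt, hj, hc.right, zero_mul]

lemma IsCut.ab (hc : IsCut v p s d) :
    opA K d * opB v (s : K) d = aeval (opH (s : K) d - 1) v := by
  refine LinearMap.ext fun f => funext fun j => ?_
  have h1 : opH (s : K) d - 1 = Algebra.lmul K (Fin d → K) (wt (s : K) d - 1) := by
    rw [map_sub, map_one, opH]
  rw [h1, aeval_lmul_apply, Module.End.mul_apply, opA_apply]
  split_ifs with h
  · have hj : (j : ℕ) - 1 + 1 = j := by omega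
    simp [opB_apply, wt, hj, ← add_assoc]
  · have hj : (j : ℕ) = 0 := by omega
    simp [wt, hj, hc.left]

/-- The vector space `K^d`, viewed as a `t(v)`-module through `rep`: the interval module with
weights `s + 1, …, s + d`. -/
def IntervalModule (_ : IsCut v p s d) : Type := Fin d → K

variable (hc : IsCut v p s d)

instance : AddCommGroup (IntervalModule hc) := inferInstanceAs (AddCommGroup (Fin d → K))

instance : Module K (IntervalModule hc) := inferInstanceAs (Module K (Fin d → K))

/-- The coordinates of a vector of the interval module. -/
def coord : IntervalModule hc ≃ₗ[K] (Fin d → K) := LinearEquiv.refl K (Fin d → K)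

/-- The `k`-th standard basis vector, with the convention `e_k = 0` for `k ≥ d`. -/
def e (k : ℕ) : IntervalModule hc := (coord hc).symm fun j => if (j : ℕ) = k then 1 else 0

lemma coord_e (k : ℕ) (j : Fin d) : coord hc (e hc k) j = if (j : ℕ) = k then 1 else 0 := by
  rw [e, LinearEquiv.apply_symm_apply]

variable {hc} in
lemma ext_coord {x y : IntervalModule hc} (h : ∀ j, coord hc x j = coord hc y j) : x = y :=
  (coord hc).injective (funext h)

lemma e_of_le {k : ℕ} (h : d ≤ k) : e hc k = 0 := by
  refine ext_coord fun j => ?_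
  rw [coord_e, if_neg (by omega), map_zero, Pi.zero_apply]

lemma e_zero_ne (h : d ≠ 0) : e hc 0 ≠ 0 := fun h0 => by
  have := coord_e hc 0 ⟨0, Nat.pos_of_ne_zero h⟩
  simp [h0] at this

lemma sum_e (x : IntervalModule hc) : x = ∑ j : Fin d, coord hc x j • e hc j := by
  refine ext_coord fun i => ?_
  rw [map_sum, Finset.sum_apply, Finset.sum_eq_single i]
  · simp [coord_e]
  · intro j _ hj
    have : (i : ℕ) ≠ j := fun h => hj (Fin.ext h.symm)
    simp [coord_e, this]
  · simp

lemma rank_interval : Module.rank K (IntervalModule hc) = d := by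
  rw [(coord hc).rank_eq]
  simp

variable [hp : Fact p.Prime] [CharP K p]

/-- The representation of `t(v)` on `K^d` with weights `s + 1, …, s + d`. -/
def rep (hc : IsCut v p s d) : tv K v p →ₐ[K] Module.End K (Fin d → K) :=
  RingQuot.liftAlgHom K ⟨FreeAlgebra.lift K ![opA K d, opB v (s : K) d, opH (s : K) d], by
    intro x y hxy
    induction hxy with
    | ha =>
      simp only [fh, fa, map_mul, map_add, map_one, FreeAlgebra.lift_ι_apply, Matrix.cons_val]
      refine LinearMap.ext fun f => funext fun j => ?_
      simp only [Module.End.mul_apply, opH_apply, opA_apply, LinearMap.add_apply,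
        Module.End.one_apply, Pi.add_apply]
      split_ifs with h
      · obtain ⟨i, hi⟩ : ∃ i, (j : ℕ) = i + 1 := ⟨j - 1, by omega⟩
        simp only [hi, Nat.add_sub_cancel]
        push_cast
        ring
      · simp
    | hb =>
      simp only [fh, fb, map_mul, map_sub, map_one, FreeAlgebra.lift_ι_apply, Matrix.cons_val]
      refine LinearMap.ext fun f => funext fun j => ?_
      simp only [Module.End.mul_apply, opH_apply, opB_apply, LinearMap.sub_apply,
        Module.End.one_apply, Pi.sub_apply]
      split_ifs with h
      · push_cast
        ring
      · simp
    | ba =>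
      simp only [map_mul, ← aeval_algHom_apply]
      simpa [fa, fb, fh] using hc.ba
    | ab =>
      simp only [map_mul, ← aeval_algHom_apply]
      simpa [fa, fb, fh] using hc.ab
    | ap =>
      simp only [fa, map_pow, map_zero, FreeAlgebra.lift_ι_apply, Matrix.cons_val]
      refine LinearMap.ext fun f => funext fun j => opA_pow_apply _ _ _ _ ?_
      exact j.2.trans_le hc.le
    | bp =>
      simp only [fb, map_pow, map_zero, FreeAlgebra.lift_ι_apply, Matrix.cons_val]
      refine LinearMap.ext fun f => funext fun j => opB_pow_apply _ _ _ _ _ _ ?_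
      exact hc.le.trans (Nat.le_add_left _ _)
    | hp =>
      simp only [fh, map_pow, FreeAlgebra.lift_ι_apply, Matrix.cons_val]
      -- the weights lie in the prime field, hence are fixed by Frobenius
      rw [opH, ← map_pow]
      congr 1
      ext j
      have := map_natCast (frobenius K p) (s + (j + 1))
      simpa [wt, frobenius_def] using this⟩

lemma rep_ta (hc : IsCut v p s d) : rep hc (ta K v p) = opA K d := by
  simp [rep, ta, fa]

lemma rep_tb (hc : IsCut v p s d) : rep hc (tb K v p) = opB v (s : K) d := by
  simp [rep, tb, fb]

lemma rep_th (hc : IsCut v p s d) : rep hc (th K v p) = opH (s : K) d := by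
  simp [rep, th, fh]

instance : Module (tv K v p) (IntervalModule hc) :=
  letI : Module (Module.End K (Fin d → K)) (IntervalModule hc) :=
    inferInstanceAs (Module (Module.End K (Fin d → K)) (Fin d → K))
  Module.compHom (IntervalModule hc) (rep hc).toRingHom

lemma coord_smul (t : tv K v p) (x : IntervalModule hc) :
    coord hc (t • x) = rep hc t (coord hc x) := rfl

instance : IsScalarTower K (tv K v p) (IntervalModule hc) where
  smul_assoc c t x := by
    apply (coord hc).injective
    rw [coord_smul, (coord hc).map_smul, coord_smul, map_smul, LinearMap.smul_apply]

lemma ta_smul_e (k : ℕ) : ta K v p • e hc k = e hc (k + 1) := by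
  refine ext_coord fun j => ?_
  rw [coord_smul, rep_ta, opA_apply, coord_e]
  by_cases h : 0 < (j : ℕ)
  · have : ((j : ℕ) - 1 = k) ↔ ((j : ℕ) = k + 1) := by omega
    simp [coord_e, h, this]
  · have : (j : ℕ) ≠ k + 1 := by omega
    simp [h, this]

lemma ta_pow_smul_e_zero (k : ℕ) : ta K v p ^ k • e hc 0 = e hc k := by
  induction k with
  | zero => simp
  | succ k ih => rw [pow_succ', mul_smul, ih, ta_smul_e]

lemma th_smul_e (k : ℕ) : th K v p • e hc k = ((s : K) + 1 + k) • e hc k := by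
  refine ext_coord fun j => ?_
  rw [coord_smul, rep_th, opH_apply, map_smul, Pi.smul_apply, coord_e, smul_eq_mul]
  by_cases h : (j : ℕ) = k
  · simp [h, add_comm, add_left_comm]
  · simp [h]

lemma tb_smul_e_zero : tb K v p • e hc 0 = 0 := by
  refine ext_coord fun j => ?_
  rw [coord_smul, rep_tb, opB_apply]
  simp [coord_e]

/-- When no root of `v` lies strictly between `s` and `s + d`, the lowest weight vectors of the
interval module are the multiples of `e_0`. -/
lemma eq_smul_e_zero (hd : d ≠ 0) (hv : ∀ j, 0 < j → j < d → v.eval ((s : K) + j) ≠ 0)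
    {x : IntervalModule hc} (hx : tb K v p • x = 0) : ∃ c : K, x = c • e hc 0 := by
  refine ⟨coord hc x ⟨0, Nat.pos_of_ne_zero hd⟩, ext_coord fun j => ?_⟩
  rw [map_smul, Pi.smul_apply, coord_e, smul_eq_mul]
  by_cases h : (j : ℕ) = 0
  · have : j = ⟨0, Nat.pos_of_ne_zero hd⟩ := Fin.ext h
    subst this
    simp
  · have h1 := congrFun (congrArg (coord hc) hx) ⟨j - 1, by omega⟩
    have hj : (j : ℕ) - 1 + 1 = j := by omega
    rw [coord_smul, rep_tb, opB_apply, dif_pos (by simp only; omega)] at h1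
    simp only [hj, map_zero, Pi.zero_apply] at h1
    rw [(mul_eq_zero.mp h1).resolve_left (hv j (by omega) j.2), if_neg h, mul_zero]

lemma interval_isSimple (hd : d ≠ 0) (hv : ∀ j, 0 < j → j < d → v.eval ((s : K) + j) ≠ 0) :
    IsSimpleModule (tv K v p) (IntervalModule hc) := by
  have : Nontrivial (IntervalModule hc) := ⟨_, _, e_zero_ne hc hd⟩
  rw [isSimpleModule_iff]
  refine { eq_bot_or_eq_top := fun N => or_iff_not_imp_left.mpr fun hN => ?_ }
  obtain ⟨x, hxN, hx⟩ := Submodule.exists_mem_ne_zero_of_ne_bot hN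
  obtain ⟨k, hk, hk'⟩ := exists_last (tb K v p) (q := p) hx (by rw [tb_pow, zero_smul])
  obtain ⟨c, hc'⟩ := eq_smul_e_zero hc hd hv hk'
  have hc0 : c ≠ 0 := fun h => hk (by rw [hc', h, zero_smul])
  have hsmul : ∀ (c : K) (y : IntervalModule hc), y ∈ N → c • y ∈ N := fun c y hy => by
    rw [← algebraMap_smul (tv K v p) c y]
    exact N.smul_mem _ hy
  have he : e hc 0 ∈ N := by
    have := hsmul c⁻¹ _ (hc' ▸ N.smul_mem (tb K v p ^ k) hxN)
    rwa [smul_smul, inv_mul_cancel₀ hc0, one_smul] at this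
  refine (Submodule.eq_top_iff').mpr fun y => ?_
  rw [sum_e hc y]
  refine N.sum_mem fun j _ => hsmul _ _ ?_
  rw [← ta_pow_smul_e_zero]
  exact N.smul_mem _ he

/-- The lowest weight is an isomorphism invariant of the interval modules. -/
lemma eq_of_equiv {s' d' : ℕ} (hc' : IsCut v p s' d') (hd : d ≠ 0) (hd' : d' ≠ 0)
    (hv' : ∀ j, 0 < j → j < d' → v.eval ((s' : K) + j) ≠ 0)
    (f : IntervalModule hc ≃ₗ[tv K v p] IntervalModule hc') : (s : K) = s' := by
  have hb : tb K v p • f (e hc 0) = 0 := by rw [← map_smul, tb_smul_e_zero, map_zero]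
  obtain ⟨c, h⟩ := eq_smul_e_zero hc' hd' hv' hb
  have hne : f (e hc 0) ≠ 0 := by simpa using e_zero_ne hc hd
  have hK : ∀ (c : K) (y : IntervalModule hc), f (c • y) = c • f y := fun c y => by
    rw [← algebraMap_smul (tv K v p) c y, map_smul, algebraMap_smul]
  have : SMulCommClass K (tv K v p) (IntervalModule hc') := IsScalarTower.to_smulCommClass
  have h1 : th K v p • f (e hc 0) = ((s : K) + 1) • f (e hc 0) := by
    rw [← map_smul, th_smul_e, hK]
    simp
  have h2 : th K v p • f (e hc 0) = ((s' : K) + 1) • f (e hc 0) := by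
    rw [h, ← smul_comm, th_smul_e, smul_comm]
    simp
  exact add_right_cancel (smul_left_injective K hne (h1.symm.trans h2))

/-- A lowest weight vector of weight `s + 1` killed by `a^d` receives a homomorphism from the
interval module. -/
lemma exists_hom {M : Type*} [AddCommGroup M] [Module K M] [Module (tv K v p) M]
    [IsScalarTower K (tv K v p) M] {y : M} (hh : th K v p • y = ((s : K) + 1) • y)
    (hb : tb K v p • y = 0) (ha : ta K v p ^ d • y = 0) :
    ∃ f : IntervalModule hc →ₗ[tv K v p] M, f (e hc 0) = y := by
  have : SMulCommClass K (tv K v p) M := IsScalarTower.to_smulCommClass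
  have : SMulCommClass K (tv K v p) (IntervalModule hc) := IsScalarTower.to_smulCommClass
  let f : IntervalModule hc →ₗ[K] M :=
    Fintype.linearCombination K (fun j : Fin d => ta K v p ^ (j : ℕ) • y) ∘ₗ (coord hc).toLinearMap
  have hfe : ∀ k ≤ d, f (e hc k) = ta K v p ^ k • y := by
    intro k hk
    rcases hk.lt_or_eq with hk | rfl
    · simp only [f, LinearMap.comp_apply, LinearEquiv.coe_coe, Fintype.linearCombination_apply,
        coord_e]
      rw [Finset.sum_eq_single ⟨k, hk⟩]
      · simp
      · intro j _ hj
        have : (j : ℕ) ≠ k := fun h => hj (Fin.ext h)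
        simp [this]
      · simp
    · rw [e_of_le hc le_rfl, map_zero, ha]
  -- `f` commutes with `t` as soon as it does so on the basis vectors
  have key : ∀ t : tv K v p, (∀ k < d, f (t • e hc k) = t • f (e hc k)) →
      ∀ x, f (t • x) = t • f x := by
    intro t ht x
    rw [sum_e hc x, Finset.smul_sum, map_sum, map_sum, Finset.smul_sum]
    refine Finset.sum_congr rfl fun j _ => ?_
    rw [← smul_comm, f.map_smul, f.map_smul, ht j j.2, smul_comm]
  have hlin := map_smul_of_generators f
    (key _ fun k hk => ?_) (key _ fun k hk => ?_) (key _ fun k hk => ?_)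
  · refine ⟨{ f with map_smul' := hlin }, ?_⟩
    change f (e hc 0) = y
    rw [hfe _ (Nat.zero_le _), pow_zero, one_smul]
  · rw [ta_smul_e, hfe _ hk, hfe _ hk.le, smul_smul, pow_succ']
  · rw [hfe _ hk.le]
    rcases k with _ | k
    · rw [tb_smul_e_zero, map_zero, pow_zero, one_smul, hb]
    · have h1 := tb_smul_ta_pow_succ (v := v) (p := p) (c := (s : K) + 1) (x := e hc 0)
        (by simpa using th_smul_e hc 0) k
      rw [ta_pow_smul_e_zero, ta_pow_smul_e_zero] at h1
      rw [h1, map_smul, hfe _ (by omega), tb_smul_ta_pow_succ hh]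
  · rw [th_smul_e, map_smul, hfe _ hk.le, th_smul_ta_pow hh]

end Interval

/-! ### The partition of the weights into intervals -/

section Classification

/-- Partial sums of a composition `R_0 + ⋯ + R_{n-1}`. -/
def ps (R : ℕ → ℕ) (k : ℕ) : ℕ := ∑ j ∈ Finset.range k, R j

lemma ps_succ (R : ℕ → ℕ) (k : ℕ) : ps R (k + 1) = ps R k + R k := Finset.sum_range_succ _ _

lemma ps_mono (R : ℕ → ℕ) : Monotone (ps R) :=
  monotone_nat_of_le_succ fun k => by rw [ps_succ]; omega

lemma ps_zero (R : ℕ → ℕ) : ps R 0 = 0 := rfl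

lemma exists_interval (R : ℕ → ℕ) {n q : ℕ} (h : q < ps R n) :
    ∃ k < n, ps R k ≤ q ∧ q < ps R (k + 1) := by
  induction n with
  | zero => simp [ps_zero] at h
  | succ n ih =>
    by_cases h' : q < ps R n
    · obtain ⟨k, hk, h1⟩ := ih h'
      exact ⟨k, by omega, h1⟩
    · exact ⟨n, by omega, by omega, h⟩

lemma ps_injOn {R : ℕ → ℕ} {k l : ℕ} (hk : R k ≠ 0) (hl : R l ≠ 0) (h : ps R k = ps R l) :
    k = l := by
  rcases lt_trichotomy k l with h' | h' | h'
  · have := ps_mono R (Nat.succ_le_of_lt h')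
    rw [Nat.succ_eq_add_one, ps_succ] at this
    omega
  · exact h'
  · have := ps_mono R (Nat.succ_le_of_lt h')
    rw [Nat.succ_eq_add_one, ps_succ] at this
    omega

/-- The roots of `v` are the residues of the partial sums `0 = S_0 ≤ ⋯ ≤ S_{n-1}` of a
composition of `p` into `n` parts. -/
structure IsComposition {K : Type} [Field K] (v : K[X]) (p n : ℕ) (R : ℕ → ℕ) : Prop where
  sum : ps R n = p
  root : ∀ c : K, v.eval c = 0 ↔ ∃ k < n, c = (ps R k : K)

variable {K : Type} [Field K] {v : K[X]} {p n : ℕ} {R : ℕ → ℕ}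

lemma IsComposition.le (H : IsComposition v p n R) {k : ℕ} (hk : k < n) : ps R k + R k ≤ p := by
  rw [← ps_succ, ← H.sum]
  exact ps_mono R hk

variable [CharP K p]

lemma IsComposition.cut (H : IsComposition v p n R) {k : ℕ} (hk : k < n) :
    IsCut v p (ps R k) (R k) where
  left := (H.root _).mpr ⟨k, hk, rfl⟩
  right := by
    rw [← Nat.cast_add, ← ps_succ]
    rcases Nat.lt_or_ge (k + 1) n with h | h
    · exact (H.root _).mpr ⟨k + 1, h, rfl⟩
    -- the last interval ends at `p`, which is the root `S_0 = 0` modulo `p`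
    · have : k + 1 = n := by omega
      refine (H.root _).mpr ⟨0, by omega, ?_⟩
      rw [this, H.sum, CharP.cast_eq_zero, ps_zero, Nat.cast_zero]
  le := by have := H.le hk; omega

lemma IsComposition.ne_root (H : IsComposition v p n R) {k : ℕ} (hk : k < n) (j : ℕ) (h0 : 0 < j)
    (h1 : j < R k) : v.eval ((ps R k : K) + j) ≠ 0 := by
  intro h
  obtain ⟨l, hl, h2⟩ := (H.root _).mp h
  rw [← Nat.cast_add, CharP.natCast_eq_natCast K p] at h2
  have hle := H.le hk
  have hlp : ps R l ≤ p := H.sum ▸ ps_mono R hl.le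
  have h3 : ps R k + j = ps R l := by
    rcases hlp.lt_or_eq with h4 | h4
    · exact h2.eq_of_lt_of_lt (by omega) h4
    · have := Nat.le_of_dvd (by omega)
        ((Nat.modEq_zero_iff_dvd).mp (h2.trans (by rw [h4]; exact Nat.mod_self p)))
      omega
  rcases Nat.lt_or_ge k l with h4 | h4
  · have := ps_mono R (Nat.succ_le_of_lt h4)
    rw [Nat.succ_eq_add_one, ps_succ] at this
    omega
  · have := ps_mono R h4
    omega

variable [hp : Fact p.Prime]

/-- Every root of `v` is the left end of a nonempty interval. -/
lemma IsComposition.exists_start (H : IsComposition v p n R) {c : K} (hc : v.eval c = 0) :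
    ∃ k < n, R k ≠ 0 ∧ c = (ps R k : K) := by
  obtain ⟨l, hl, rfl⟩ := (H.root _).mp hc
  have hlp : ps R l ≤ p := H.sum ▸ ps_mono R hl.le
  rcases hlp.lt_or_eq with h | h
  · obtain ⟨k, hk, h1, h2⟩ := exists_interval R (H.sum.symm ▸ h)
    refine ⟨k, hk, fun h0 => ?_, congrArg _ ?_⟩
    · rw [ps_succ] at h2
      omega
    · refine le_antisymm (ps_mono R ?_) h1
      by_contra! h3
      exact absurd (ps_mono R (Nat.succ_le_of_lt h3)) (by simpa using h2)
  · obtain ⟨k, hk, h1, h2⟩ := exists_interval R (n := n) (q := 0) (H.sum.symm ▸ hp.out.pos)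
    refine ⟨k, hk, fun h0 => ?_, ?_⟩
    · rw [ps_succ] at h2
      omega
    · rw [h, Nat.le_zero.mp h1, CharP.cast_eq_zero, Nat.cast_zero]

/-- Starting from any lowest weight vector `y`, one finds a lowest weight vector killed by the
power of `a` that is the length of its interval: otherwise `a^{R_k} y` is again a lowest weight
vector, and it is killed by a smaller power of `a`. -/
lemma IsComposition.exists_short (H : IsComposition v p n R)
    {M : Type*} [AddCommGroup M] [Module K M] [Module (tv K v p) M] [IsScalarTower K (tv K v p) M]
    (m : ℕ) {c : K} {y : M} (hy : y ≠ 0) (hh : th K v p • y = (c + 1) • y)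
    (hb : tb K v p • y = 0) (ha : ta K v p ^ m • y = 0) :
    ∃ k < n, R k ≠ 0 ∧ ∃ z : M, z ≠ 0 ∧ th K v p • z = ((ps R k : K) + 1) • z ∧
      tb K v p • z = 0 ∧ ta K v p ^ R k • z = 0 := by
  induction m using Nat.strong_induction_on generalizing c y with
  | h m ih =>
  obtain ⟨k, hk, hR, rfl⟩ := H.exists_start (root_of_lowest hy hh hb)
  by_cases h0 : ta K v p ^ R k • y = 0
  · exact ⟨k, hk, hR, y, hy, hh, hb, h0⟩
  have hm : R k < m := by
    by_contra! h
    apply h0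
    rw [← Nat.sub_add_cancel h, pow_add, mul_smul, ha, smul_zero]
  refine ih (m - R k) (by omega) (c := (ps R k : K) + R k) h0 ?_ ?_ ?_
  · rw [th_smul_ta_pow hh, add_right_comm]
  · obtain ⟨j, hj⟩ := Nat.exists_eq_succ_of_ne_zero hR
    have hr := (H.cut hk).right
    rw [hj, Nat.succ_eq_add_one, Nat.cast_add, Nat.cast_one, add_comm (j : K), ← add_assoc] at hr
    rw [hj, Nat.succ_eq_add_one, tb_smul_ta_pow_succ hh, hr, zero_smul]
  · rw [smul_smul, ← pow_add, Nat.sub_add_cancel hm.le, ha]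

lemma IsComposition.exists_equiv [IsAlgClosed K] (H : IsComposition v p n R)
    (M : Type*) [AddCommGroup M] [Module (tv K v p) M] [IsSimpleModule (tv K v p) M] :
    ∃ (k : ℕ) (hk : k < n), R k ≠ 0 ∧
      Nonempty (M ≃ₗ[tv K v p] IntervalModule (H.cut hk)) := by
  let : Module K M := Module.compHom M (algebraMap K (tv K v p))
  have : IsScalarTower K (tv K v p) M := IsScalarTower.of_compHom K (tv K v p) M
  have : Nontrivial M := IsSimpleModule.nontrivial (tv K v p) M
  obtain ⟨c, y, hy, hh, hb⟩ := exists_lowest (K := K) (v := v) (p := p) (M := M)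
  obtain ⟨k, hk, hR, z, hz, hh, hb, ha⟩ := H.exists_short p hy hh hb (by rw [ta_pow, zero_smul])
  obtain ⟨f, hf⟩ := exists_hom (H.cut hk) hh hb ha
  have := interval_isSimple (H.cut hk) hR (H.ne_root hk)
  have hf0 : f ≠ 0 := fun h => hz (by rw [← hf, h, LinearMap.zero_apply])
  exact ⟨k, hk, hR, ⟨(LinearEquiv.ofBijective f (f.bijective_of_ne_zero hf0)).symm⟩⟩

end Classification

/-! ### The composition attached to `r_1, …, r_{n-1}, r_0` -/

section Final

/-- The parts `r_1, …, r_{n-1}, r_0`, re-indexed from `0`. -/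
def shift (n : ℕ) (r : ℕ → ℕ) (k : ℕ) : ℕ := r ((k + 1) % n)

lemma ps_shift (n : ℕ) (r : ℕ → ℕ) {k : ℕ} (hk : k < n) :
    ps (shift n r) k = ∑ j ∈ Finset.Ico 1 (k + 1), r j := by
  rw [ps, Finset.sum_Ico_eq_sum_range, Nat.add_sub_cancel]
  refine Finset.sum_congr rfl fun j hj => ?_
  have := Finset.mem_range.mp hj
  rw [shift, Nat.mod_eq_of_lt (by omega), add_comm]

lemma isComposition_vr (K : Type) [Field K] (p n : ℕ) (hn : 0 < n) (r : ℕ → ℕ)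
    (hrsum : ∑ j ∈ Finset.Ico 1 n, r j ≤ p) (hr0 : r 0 = p - ∑ j ∈ Finset.Ico 1 n, r j) :
    IsComposition (vr K n r) p n (shift n r) where
  sum := by
    obtain ⟨m, rfl⟩ := Nat.exists_eq_succ_of_ne_zero hn.ne'
    rw [Nat.succ_eq_add_one, ps_succ, ps_shift _ _ (Nat.lt_succ_self m), shift, Nat.mod_self, hr0]
    simp only [Nat.succ_eq_add_one] at hrsum ⊢
    omega
  root c := by
    simp only [vr, eval_prod, Finset.prod_eq_zero_iff, Finset.mem_range, eval_sub, eval_X, eval_C,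
      sub_eq_zero]
    refine exists_congr fun k => and_congr_right fun hk => ?_
    rw [ps_shift n r hk]

/-- The interval whose length is `r_{n-1-i}`; an involution of `{0, …, n-1}`. -/
def idx (n i : ℕ) : ℕ := if i + 1 = n then i else n - 2 - i

lemma idx_lt {n i : ℕ} (h : i < n) : idx n i < n := by unfold idx; split_ifs <;> omega

lemma idx_idx {n i : ℕ} (h : i < n) : idx n (idx n i) = i := by
  unfold idx; split_ifs <;> omega

lemma shift_idx {n i : ℕ} (r : ℕ → ℕ) (h : i < n) : shift n r (idx n i) = r (n - 1 - i) := by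
  unfold shift idx
  split_ifs with h1
  · rw [h1, Nat.mod_self]
    congr 1
    omega
  · rw [Nat.mod_eq_of_lt (by omega)]
    congr 1
    omega

lemma card_index (n : ℕ) (r : ℕ → ℕ) :
    Nat.card {i : Fin n // r (n - 1 - (i : ℕ)) ≠ 0} =
      ((Finset.range n).filter fun i => r i ≠ 0).card := by
  rw [Nat.card_eq_fintype_card, Fintype.card_subtype]
  refine Finset.card_bij (fun i _ => n - 1 - (i : ℕ)) ?_ ?_ ?_
  · intro i hi
    have := (Finset.mem_filter.mp hi).2
    exact Finset.mem_filter.mpr ⟨Finset.mem_range.mpr (by omega), this⟩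
  · intro i _ j _ h
    exact Fin.ext (by omega)
  · intro j hj
    obtain ⟨h1, h2⟩ := Finset.mem_filter.mp hj
    have h1 := Finset.mem_range.mp h1
    have h3 : n - 1 - (n - 1 - j) = j := by omega
    refine ⟨⟨n - 1 - j, by omega⟩, Finset.mem_filter.mpr ⟨Finset.mem_univ _, ?_⟩, h3⟩
    simpa only [h3] using h2

end Final

end HodgesSimple

/-!
STATEMENT 13: Let `k` be the number of indices `i ∈ {0,…,n−1}` with `r_i ≠ 0`.  Then
`t(v)` has exactly `k` isomorphism classes of simple left modules: there is a family
`(L_i)`, indexed by those `i ∈ {0,…,n−1}` with `r_{n−1−i} ≠ 0` (an index set of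
cardinality `k`), of pairwise non-isomorphic simple `t(v)`-modules with
`dim_K L_i = r_{n−1−i}`, and every simple left `t(v)`-module is isomorphic to some `L_i`.
-/

open HodgesSimple in
theorem statement_13 (K : Type) [Field K] (p n : ℕ) [Fact p.Prime] [CharP K p]
    [IsAlgClosed K] (hn : 0 < n) (hpn : Nat.Coprime p n)
    (r : ℕ → ℕ) (hrsum : ∑ j ∈ Finset.Ico 1 n, r j ≤ p)
    (hr0 : r 0 = p - ∑ j ∈ Finset.Ico 1 n, r j) :
    Nat.card {i : Fin n // r (n - 1 - (i : ℕ)) ≠ 0} =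
      ((Finset.range n).filter fun i => r i ≠ 0).card ∧
    ∃ L : {i : Fin n // r (n - 1 - (i : ℕ)) ≠ 0} → ModuleCat.{0} (tv K (vr K n r) p),
      (∀ i, IsSimpleModule (tv K (vr K n r) p) (L i)) ∧
      (∀ i, Module.rank K (RestrictScalars K (tv K (vr K n r) p) (L i)) =
        (r (n - 1 - ((i : Fin n) : ℕ)) : Cardinal)) ∧
      (∀ i j, Nonempty ((L i) ≃ₗ[tv K (vr K n r) p] (L j)) → i = j) ∧
      (∀ M : ModuleCat.{0} (tv K (vr K n r) p), IsSimpleModule (tv K (vr K n r) p) M →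
        ∃ i, Nonempty (M ≃ₗ[tv K (vr K n r) p] (L i))) := by
  have H := isComposition_vr K p n hn r hrsum hr0
  refine ⟨card_index n r,
    fun i => ModuleCat.of _ (IntervalModule (H.cut (idx_lt i.1.2))), ?_, ?_, ?_, ?_⟩
  · intro i
    exact interval_isSimple _ (by rw [shift_idx r i.1.2]; exact i.2) (H.ne_root (idx_lt i.1.2))
  · intro i
    rw [← shift_idx r i.1.2, ← rank_interval (H.cut (idx_lt i.1.2))]
    -- the `K`-structure restricted from `t(v)` is the original one
    refine LinearEquiv.rank_eq (M := RestrictScalars K (tv K (vr K n r) p)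
      (IntervalModule (H.cut (idx_lt i.1.2))))
      { RestrictScalars.addEquiv K (tv K (vr K n r) p) (IntervalModule (H.cut (idx_lt i.1.2))) with
        map_smul' := fun c x => ?_ }
    exact (RestrictScalars.addEquiv_map_smul _ _ _ c x).trans (algebraMap_smul _ c _)
  · rintro i j ⟨f⟩
    have hi : shift n r (idx n i.1) ≠ 0 := by rw [shift_idx r i.1.2]; exact i.2
    have hj : shift n r (idx n j.1) ≠ 0 := by rw [shift_idx r j.1.2]; exact j.2
    have h1 := eq_of_equiv _ _ hi hj (H.ne_root (idx_lt j.1.2)) f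
    have hli := H.le (idx_lt i.1.2)
    have hlj := H.le (idx_lt j.1.2)
    have h2 := ((CharP.natCast_eq_natCast K p).mp h1).eq_of_lt_of_lt (by omega) (by omega)
    have h3 := congrArg (idx n) (ps_injOn hi hj h2)
    rw [idx_idx i.1.2, idx_idx j.1.2] at h3
    exact Subtype.ext (Fin.ext h3)
  · intro M hM
    obtain ⟨k, hk, hR, ⟨f⟩⟩ := H.exists_equiv M
    have hk' : idx n (idx n k) = k := idx_idx hk
    refine ⟨⟨⟨idx n k, idx_lt hk⟩, ?_⟩, ?_⟩
    · rwa [← shift_idx r (idx_lt hk), hk']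
    · have key : ∀ l (hl : l < n), l = k →
          Nonempty (M ≃ₗ[tv K (vr K n r) p] IntervalModule (H.cut hl)) := by
        rintro l hl rfl
        exact ⟨f⟩
      exact key _ (idx_lt (idx_lt hk)) hk'
end
end

section
/- Let i ∈ {0, …, n−1} with r_{n−1−i} ≠ 0 and let L_i be the corresponding simple t(v)-module of dimension r_{n−1−i}. If Q is a projective cover of L_i (i.e. Q is a finite-dimensional projective left t(v)-module together with a surjection Q → L_i whose kernel is a superfluous submodule of Q), then dim_K Q = 2p − r_{n−1−i}. -/
/-!
Why the dimension is `2p - r_k`, where `k = n - 1 - i` and `lam = r_1 + ⋯ + r_k`.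

A `t(v)`-module is a direct sum of `h`-weight spaces indexed by the circle `𝔽_p`; `a` raises and
`b` lowers the weight by one, and between the weights `μ` and `μ + 1` both composites `ab` and `ba`
are multiplication by `v(μ)`. By the choice of `v`, both `lam` and `lam - r_k` are roots of `v`, and
no `lam - j` with `0 < j < r_k` is (`vr_eval_top`, `vr_eval_bot`, `vr_eval_ne_zero`).

Let `M = t(v) / t(v)(h - lam)` be the universal module generated by a vector `m` of weight `lam`
(`WeightModule`). It is spanned by `b^j m` for `j < p` and `a^i m` for `1 ≤ i ≤ p - r_k`: higher
powers of `a` vanish on `m` because `a^p m = 0` can be pulled back by `b` through the non-roots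
`lam - j` (`HodgesRel.span_pathFamily`). These `p + (p - r_k)` vectors are independent, as one sees
in two `p`-dimensional modules with one-dimensional weight spaces (`circle_rel`,
`linearIndependent_pathFamily`). Hence `dim M = 2p - r_k` (`rank_weightModule`), and the weight
space of weight `lam` in `M` is the line through `m` (`weight_space_wgen`).

Finally `Q ≅ M` (`cover_equiv`). The generator of `L` has weight `lam`, so it lifts to a vector
`q ∈ Q` of weight `lam` by applying the projection `1 - (h - lam)^(p-1)`. Superfluity of the kernel
gives `Q = t(v) q`, hence a surjection `M → Q` sending `m` to `q`. It has a section as `Q` is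
projective, and the section maps `q` to a nonzero multiple of `m`, so it is also surjective.
-/

/-!
The algebra `t(v) = T(v)/(a^p, b^p, h^p − h)`, where `T(v)` is Hodges' algebra: the
quotient of the free algebra `K⟨a,b,h⟩` by the two-sided ideal generated by
`ha − ah − a`, `hb − bh + b`, `ba − v(h)`, `ab − v(h−1)`.  We realise `t(v)` as a
`RingQuot` of the free algebra on three generators (`0 ↦ a`, `1 ↦ b`, `2 ↦ h`), imposing
in addition the relations `a^p = 0`, `b^p = 0`, `h^p = h`.
-/

open Polynomial

noncomputable section

/-! ### Weight vectors and the spanning set -/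

/-- The relations of `t(v)`, for three elements `a`, `b`, `h` of an arbitrary `K`-algebra. -/
structure HodgesRel {K A : Type} [Field K] [Ring A] [Algebra K A] (v : K[X]) (p : ℕ)
    (a b h : A) : Prop where
  ha : h * a = a * (h + 1)
  hb : h * b = b * (h - 1)
  ba : b * a = aeval h v
  ab : a * b = aeval (h - 1) v
  ap : a ^ p = 0
  bp : b ^ p = 0
  hp : h ^ p = h

section Weights

variable {K A M : Type} [Field K] [Ring A] [Algebra K A] [AddCommGroup M] [Module K M]
  [Module A M] [IsScalarTower K A M] {v : K[X]} {p : ℕ} {a b h : A}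

lemma aeval_smul_weight {x : A} {y : M} {μ : K} (hy : x • y = μ • y) (w : K[X]) :
    aeval x w • y = w.eval μ • y := by
  induction w using Polynomial.induction_on' with
  | add q s hq hs => simp [add_smul, hq, hs]
  | monomial k c =>
    have : ∀ k : ℕ, x ^ k • y = μ ^ k • y := by
      intro k
      induction k with
      | zero => simp
      | succ k ih => rw [pow_succ, mul_smul, hy, smul_comm, ih, smul_smul, pow_succ']
    rw [aeval_monomial, mul_smul, this, algebraMap_smul, eval_monomial, smul_smul]

namespace HodgesRel

variable (R : HodgesRel v p a b h)
include R

lemma weight_a {y : M} {μ : K} (hy : h • y = μ • y) : h • a • y = (μ + 1) • a • y := by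
  rw [← mul_smul, R.ha, mul_smul, add_smul, hy, one_smul, smul_add, smul_comm, add_smul, one_smul]

lemma weight_b {y : M} {μ : K} (hy : h • y = μ • y) : h • b • y = (μ - 1) • b • y := by
  rw [← mul_smul, R.hb, mul_smul, sub_smul, hy, one_smul, smul_sub, smul_comm, sub_smul, one_smul]

lemma weight_a_pow {y : M} {μ : K} (hy : h • y = μ • y) (j : ℕ) :
    h • a ^ j • y = (μ + j) • a ^ j • y := by
  induction j with
  | zero => simpa using hy
  | succ j ih =>
    rw [pow_succ', mul_smul, R.weight_a ih]
    push_cast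
    rw [add_assoc]

lemma weight_b_pow {y : M} {μ : K} (hy : h • y = μ • y) (j : ℕ) :
    h • b ^ j • y = (μ - j) • b ^ j • y := by
  induction j with
  | zero => simpa using hy
  | succ j ih =>
    rw [pow_succ', mul_smul, R.weight_b ih]
    push_cast
    rw [sub_sub]

lemma b_smul_a_pow {y : M} {μ : K} (hy : h • y = μ • y) (j : ℕ) :
    b • a ^ (j + 1) • y = v.eval (μ + j) • a ^ j • y := by
  rw [pow_succ', mul_smul, ← mul_smul b, R.ba, aeval_smul_weight (R.weight_a_pow hy j)]

lemma a_smul_b_pow {y : M} {μ : K} (hy : h • y = μ • y) (j : ℕ) :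
    a • b ^ (j + 1) • y = v.eval (μ - j - 1) • b ^ j • y := by
  rw [pow_succ', mul_smul, ← mul_smul a, R.ab,
    aeval_smul_weight (μ := μ - j - 1)]
  rw [sub_smul, R.weight_b_pow hy j, one_smul, sub_smul _ (1 : K), one_smul]

/-- Going up from weight `lam` and almost all the way round the circle `ℤ/p` gives zero: one can
return from `a ^ p • m = 0` along the arrows `b` on which `v` does not vanish. -/
lemma a_pow_smul_eq_zero [CharP K p] {m : M} {lam : K} (hm : h • m = lam • m) {r : ℕ} (hrp : r ≤ p)
    (hnz : ∀ j : ℕ, 1 ≤ j → j < r → v.eval (lam - j) ≠ 0) (j : ℕ) (hj : j < r) :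
    a ^ (p - j) • m = 0 := by
  induction j with
  | zero => simp [R.ap]
  | succ j ih =>
    have h1 := ih (by omega)
    have e : p - j = (p - (j + 1)) + 1 := by omega
    rw [e] at h1
    have h2 := R.b_smul_a_pow hm (p - (j + 1))
    rw [h1, smul_zero] at h2
    rw [Nat.cast_sub (by omega), CharP.cast_eq_zero, zero_sub, ← sub_eq_add_neg] at h2
    exact (smul_eq_zero.1 h2.symm).resolve_left (hnz (j + 1) (by omega) hj)

end HodgesRel

/-- The family `b^j m` (`j < p`), `a^i m` (`1 ≤ i ≤ p - r`), which turns out to be a basis of the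
universal module generated by a vector `m` of weight `lam`. -/
def pathFamily (p r : ℕ) (a b : A) (m : M) : Fin p ⊕ Fin (p - r) → M :=
  Sum.elim (fun j => b ^ (j : ℕ) • m) (fun i => a ^ ((i : ℕ) + 1) • m)

/-- A `K`-subspace stable under `a`, `b`, `h` and containing a generator is everything. -/
lemma submodule_eq_top (hgen : ∀ S : Subalgebra K A, a ∈ S → b ∈ S → h ∈ S → S = ⊤)
    {m : M} (hspan : ∀ y : M, ∃ x : A, x • m = y) (S : Submodule K M) (hmS : m ∈ S)
    (hSa : ∀ y ∈ S, a • y ∈ S) (hSb : ∀ y ∈ S, b • y ∈ S) (hSh : ∀ y ∈ S, h • y ∈ S) :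
    S = ⊤ := by
  let T : Subalgebra K A :=
    { carrier := {x | ∀ y ∈ S, x • y ∈ S}
      mul_mem' := fun {x z} hx hz y hy => by
        rw [mul_smul]
        exact hx _ (hz y hy)
      add_mem' := fun {x z} hx hz y hy => by
        rw [add_smul]
        exact S.add_mem (hx y hy) (hz y hy)
      algebraMap_mem' := fun c y hy => by
        rw [algebraMap_smul]
        exact S.smul_mem c hy }
  have hT : T = ⊤ := hgen T hSa hSb hSh
  rw [eq_top_iff]
  intro y _
  obtain ⟨x, rfl⟩ := hspan y
  have hx : x ∈ T := by rw [hT]; trivial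
  exact hx m hmS

namespace HodgesRel

variable (R : HodgesRel v p a b h)
include R

lemma span_pathFamily [CharP K p]
    (hgen : ∀ S : Subalgebra K A, a ∈ S → b ∈ S → h ∈ S → S = ⊤)
    {m : M} {lam : K} (hm : h • m = lam • m) (hspan : ∀ y : M, ∃ x : A, x • m = y)
    {r : ℕ} (hr : 0 < r) (hrp : r ≤ p)
    (hnz : ∀ j : ℕ, 1 ≤ j → j < r → v.eval (lam - j) ≠ 0) :
    Submodule.span K (Set.range (pathFamily p r a b m)) = ⊤ := by
  set S := Submodule.span K (Set.range (pathFamily p r a b m)) with hS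
  have hbS : ∀ j : ℕ, b ^ j • m ∈ S := by
    intro j
    by_cases hj : j < p
    · exact Submodule.subset_span ⟨Sum.inl ⟨j, hj⟩, rfl⟩
    · rw [pow_eq_zero_of_le (by omega) R.bp, zero_smul]
      exact S.zero_mem
  have haS : ∀ j : ℕ, a ^ j • m ∈ S := by
    intro j
    rcases j with _ | j
    · simpa using hbS 0
    by_cases hj : j < p - r
    · exact Submodule.subset_span ⟨Sum.inr ⟨j, hj⟩, rfl⟩
    · have h0 := R.a_pow_smul_eq_zero hm hrp hnz (r - 1) (by omega)
      have e : j + 1 = (j + 1 - (p - (r - 1))) + (p - (r - 1)) := by omega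
      rw [e, pow_add, mul_smul, h0, smul_zero]
      exact S.zero_mem
  have key : ∀ x : A, (∀ j : ℕ, x • b ^ j • m ∈ S) → (∀ j : ℕ, x • a ^ j • m ∈ S) →
      ∀ y ∈ S, x • y ∈ S := by
    intro x h1 h2 y hy
    induction hy using Submodule.span_induction with
    | mem y hy =>
      obtain ⟨j | j, rfl⟩ := hy
      · exact h1 _
      · exact h2 _
    | zero => simp
    | add y z _ _ hy hz => rw [smul_add]; exact S.add_mem hy hz
    | smul c y _ hy => rw [smul_comm]; exact S.smul_mem c hy
  refine submodule_eq_top hgen hspan S (by simpa using hbS 0) ?_ ?_ ?_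
  · refine key a ?_ ?_
    · rintro (_ | j)
      · simpa using haS 1
      · rw [R.a_smul_b_pow hm]
        exact S.smul_mem _ (hbS j)
    · intro j
      rw [← mul_smul, ← pow_succ']
      exact haS _
  · refine key b ?_ ?_
    · intro j
      rw [← mul_smul, ← pow_succ']
      exact hbS _
    · rintro (_ | j)
      · simpa using hbS 1
      · rw [R.b_smul_a_pow hm]
        exact S.smul_mem _ (haS j)
  · refine key h ?_ ?_
    · intro j
      rw [R.weight_b_pow hm]
      exact S.smul_mem _ (hbS j)
    · intro j
      rw [R.weight_a_pow hm]
      exact S.smul_mem _ (haS j)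

/-- In characteristic `p`, `1 - (h - lam)^(p-1)` is the projection to the weight space of
`lam ∈ 𝔽_p`; this lemma says that its image consists of vectors of weight `lam`. -/
lemma weight_proj [Fact p.Prime] [CharP K p] {lam : K} (hlam : lam ^ p = lam) (y : M) :
    h • ((1 - (h - algebraMap K A lam) ^ (p - 1)) • y) =
      lam • ((1 - (h - algebraMap K A lam) ^ (p - 1)) • y) := by
  have hp : 1 ≤ p := (Fact.out : p.Prime).one_lt.le
  have hc : Commute h (algebraMap K A lam) := (Algebra.commutes lam h).symm
  have h1 : (h - algebraMap K A lam) ^ p = h - algebraMap K A lam := by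
    rcases subsingleton_or_nontrivial A with _ | _
    · exact Subsingleton.elim _ _
    have : CharP A p := charP_of_injective_algebraMap (algebraMap K A).injective p
    have : ExpChar A p := ExpChar.prime Fact.out
    rw [sub_pow_expChar_of_commute _ hc, R.hp, ← map_pow, hlam]
  have h2 : (h - algebraMap K A lam) * (1 - (h - algebraMap K A lam) ^ (p - 1)) = 0 := by
    rw [mul_sub, mul_one, ← pow_succ', Nat.sub_add_cancel hp, h1, sub_self]
  have h3 := congrArg (· • y) h2
  simp only [mul_smul, zero_smul] at h3
  rw [sub_smul, algebraMap_smul, sub_eq_zero] at h3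
  exact h3

omit R in
lemma weight_proj_apply {x : A} {lam μ : K} {y : M} (hy : x • y = μ • y) (p : ℕ) :
    (1 - (x - algebraMap K A lam) ^ (p - 1)) • y = (1 - (μ - lam) ^ (p - 1)) • y := by
  have := aeval_smul_weight hy (1 - (X - C lam) ^ (p - 1))
  simpa using this

end HodgesRel

end Weights

/-! ### Modules over the circle `ℤ/p` with one-dimensional weight spaces -/

section CircleModule

variable {K : Type} [Field K] {p : ℕ} [Fact p.Prime] [CharP K p]

/-- The inclusion `𝔽_p → K`. -/
def toK (K : Type) [Field K] (p : ℕ) [CharP K p] : ZMod p →+* K := ZMod.castHom (dvd_refl p) K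

lemma toK_natCast (j : ℕ) : toK K p (j : ZMod p) = (j : K) := map_natCast _ j

/-- The operator `e_μ ↦ α(μ) e_{μ+1}` on the space of functions `ℤ/p → K`. -/
def opA (α : ZMod p → K) : Module.End K (ZMod p → K) where
  toFun f μ := α (μ - 1) * f (μ - 1)
  map_add' f g := by ext μ; simp [mul_add]
  map_smul' c f := by ext μ; simp [mul_left_comm]

/-- The operator `e_{μ+1} ↦ β(μ) e_μ` on the space of functions `ℤ/p → K`. -/
def opB (β : ZMod p → K) : Module.End K (ZMod p → K) where
  toFun f μ := β μ * f (μ + 1)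
  map_add' f g := by ext μ; simp [mul_add]
  map_smul' c f := by ext μ; simp [mul_left_comm]

/-- The diagonal operator `e_μ ↦ μ e_μ` on the space of functions `ℤ/p → K`. -/
def opH (K : Type) [Field K] (p : ℕ) [CharP K p] : Module.End K (ZMod p → K) :=
  Algebra.lmul K (ZMod p → K) (toK K p)

omit [CharP K p] in
lemma opA_pow_apply (α : ZMod p → K) (j : ℕ) (f : ZMod p → K) (μ : ZMod p) :
    (opA α ^ j) f μ = (∏ i ∈ Finset.range j, α (μ - 1 - i)) * f (μ - j) := by
  induction j generalizing μ with
  | zero => simp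
  | succ j ih =>
    rw [pow_succ', Module.End.mul_apply]
    change α (μ - 1) * (opA α ^ j) f (μ - 1) = _
    rw [ih, Finset.prod_range_succ']
    have e1 : μ - ((j + 1 : ℕ) : ZMod p) = μ - 1 - j := by push_cast; ring
    have e2 : ∀ i : ℕ, μ - 1 - ((i + 1 : ℕ) : ZMod p) = μ - 1 - 1 - i := by
      intro i; push_cast; ring
    simp only [e1, e2, Nat.cast_zero, sub_zero]
    ring

omit [CharP K p] in
lemma opB_pow_apply (β : ZMod p → K) (j : ℕ) (f : ZMod p → K) (μ : ZMod p) :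
    (opB β ^ j) f μ = (∏ i ∈ Finset.range j, β (μ + i)) * f (μ + j) := by
  induction j generalizing μ with
  | zero => simp
  | succ j ih =>
    rw [pow_succ', Module.End.mul_apply]
    change β μ * (opB β ^ j) f (μ + 1) = _
    rw [ih, Finset.prod_range_succ']
    have e1 : μ + ((j + 1 : ℕ) : ZMod p) = μ + 1 + j := by push_cast; ring
    have e2 : ∀ i : ℕ, μ + ((i + 1 : ℕ) : ZMod p) = μ + 1 + i := by
      intro i; push_cast; ring
    simp only [e1, e2, Nat.cast_zero, add_zero]
    ring

omit [Fact p.Prime] [CharP K p] in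
lemma aeval_lmul_apply_s14 (d : ZMod p → K) (w : K[X]) (f : ZMod p → K) (μ : ZMod p) :
    aeval (Algebra.lmul K (ZMod p → K) d) w f μ = w.eval (d μ) * f μ := by
  rw [aeval_algHom_apply]
  change (aeval d w) μ * f μ = _
  have := aeval_algHom_apply (Pi.evalAlgHom K (fun _ : ZMod p => K) μ) d w
  rw [← coe_aeval_eq_eval]
  congr 1
  exact this.symm

/-- The functions `ℤ/p → K` form a `t(v)`-module under `opA α`, `opB β`, `opH` whenever
`α β = v` on `𝔽_p`; a zero of `α` and one of `β` make `a^p` and `b^p` vanish. -/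
lemma circle_rel (v : K[X]) (α β : ZMod p → K) (hαβ : ∀ μ, α μ * β μ = v.eval (toK K p μ))
    (hα : ∃ c, α c = 0) (hβ : ∃ c, β c = 0) :
    HodgesRel v p (opA α) (opB β) (opH K p) where
  ha := by
    refine LinearMap.ext fun f => funext fun μ => ?_
    simp [opA, opH]
    ring
  hb := by
    refine LinearMap.ext fun f => funext fun μ => ?_
    simp [opB, opH]
    ring
  ba := by
    refine LinearMap.ext fun f => funext fun μ => ?_
    rw [opH, aeval_lmul_apply_s14, ← hαβ]
    simp [opA, opB]
    ring
  ab := by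
    refine LinearMap.ext fun f => funext fun μ => ?_
    have e : opH K p - 1 = Algebra.lmul K (ZMod p → K) (toK K p - 1 : ZMod p → K) := by
      rw [map_sub, map_one, opH]
    rw [e, aeval_lmul_apply_s14]
    have e2 : (toK K p - 1 : ZMod p → K) μ = toK K p (μ - 1) := by simp
    rw [e2, ← hαβ]
    simp [opA, opB]
    ring
  ap := by
    obtain ⟨c, hc⟩ := hα
    refine LinearMap.ext fun f => funext fun μ => ?_
    rw [opA_pow_apply, Finset.prod_eq_zero (i := (μ - 1 - c).val)]
    · simp
    · exact Finset.mem_range.2 (ZMod.val_lt _)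
    · rw [ZMod.natCast_zmod_val, sub_sub_cancel, hc]
  bp := by
    obtain ⟨c, hc⟩ := hβ
    refine LinearMap.ext fun f => funext fun μ => ?_
    rw [opB_pow_apply, Finset.prod_eq_zero (i := (c - μ).val)]
    · simp
    · exact Finset.mem_range.2 (ZMod.val_lt _)
    · rw [ZMod.natCast_zmod_val, add_sub_cancel, hc]
  hp := by
    rw [opH, ← map_pow]
    congr 1
    funext μ
    rw [Pi.pow_apply, ← map_pow, ZMod.pow_card]

lemma natCast_inj_of_lt {i j : ℕ} (hi : i < p) (hj : j < p) (hij : (i : ZMod p) = j) : i = j := by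
  have := (ZMod.natCast_eq_natCast_iff' i j p).1 hij
  rwa [Nat.mod_eq_of_lt hi, Nat.mod_eq_of_lt hj] at this

omit [Fact p.Prime] in
lemma opH_single (lam : ZMod p) :
    opH K p (Pi.single lam 1) = toK K p lam • (Pi.single lam 1 : ZMod p → K) := by
  funext μ
  by_cases h : μ = lam
  · subst h; simp [opH]
  · simp [opH, h]

end CircleModule

/-! ### Linear independence -/

section Independence

variable {K A M : Type} [Field K] [Ring A] [Algebra K A] [AddCommGroup M] [Module K M]
  [Module A M] {p : ℕ} [Fact p.Prime] {a b : A}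

omit [Algebra K A] in
/-- The path family is linearly independent as soon as `m` maps to `e_lam` in two circle modules:
one where `b` goes all the way down from `lam` and `a` kills `e_lam`, which detects the powers of
`b`, and one where `a` goes up from `lam` until weight `lam - r`, which detects the powers
of `a`. -/
lemma linearIndependent_pathFamily {r : ℕ} (hr : 0 < r) (lam : ZMod p)
    {α₁ β₁ α₂ : ZMod p → K} (m : M)
    (hα₁ : α₁ lam = 0) (hβ₁ : ∀ μ, μ ≠ lam → β₁ μ ≠ 0) (hα₂ : ∀ μ, μ ≠ lam - r → α₂ μ ≠ 0)
    (φ₁ φ₂ : M →ₗ[K] (ZMod p → K))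
    (h1a : ∀ j : ℕ, φ₁ (a ^ j • m) = (opA α₁ ^ j) (Pi.single lam 1))
    (h1b : ∀ j : ℕ, φ₁ (b ^ j • m) = (opB β₁ ^ j) (Pi.single lam 1))
    (h2a : ∀ j : ℕ, φ₂ (a ^ j • m) = (opA α₂ ^ j) (Pi.single lam 1)) :
    LinearIndependent K (pathFamily p r a b m) := by
  rw [Fintype.linearIndependent_iff]
  intro g hg
  simp only [Fintype.sum_sum_type, pathFamily, Sum.elim_inl, Sum.elim_inr] at hg
  have hzero : ∀ j : ℕ, φ₁ (a ^ (j + 1) • m) = 0 := by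
    intro j
    rw [h1a]
    funext μ
    rw [opA_pow_apply]
    by_cases hμ : μ - ((j + 1 : ℕ) : ZMod p) = lam
    · rw [Finset.prod_eq_zero (i := j) (by simp)]
      · simp
      · rw [← hα₁, ← hμ]
        congr 1
        push_cast
        ring
    · rw [Pi.single_eq_of_ne hμ, mul_zero, Pi.zero_apply]
  have hl : ∀ j, g (Sum.inl j) = 0 := by
    intro j
    have h1 := congrFun (congrArg φ₁ hg) (lam - ((j : ℕ) : ZMod p))
    simp only [map_add, map_sum, map_smul, hzero, smul_zero, Finset.sum_const_zero, add_zero,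
      map_zero, Pi.zero_apply, Finset.sum_apply, Pi.smul_apply, h1b, opB_pow_apply] at h1
    rw [Finset.sum_eq_single j] at h1
    · rw [sub_add_cancel, Pi.single_eq_same, mul_one, smul_eq_mul, mul_eq_zero] at h1
      refine h1.resolve_right (Finset.prod_ne_zero_iff.2 fun i hi => hβ₁ _ fun h => ?_)
      have hij : (i : ZMod p) = ((j : ℕ) : ZMod p) := by linear_combination h
      have := natCast_inj_of_lt ((Finset.mem_range.1 hi).trans j.2) j.2 hij
      exact (Finset.mem_range.1 hi).ne this
    · intro i _ hij
      rw [Pi.single_eq_of_ne, mul_zero, smul_zero]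
      intro h
      have hij' : ((i : ℕ) : ZMod p) = ((j : ℕ) : ZMod p) := by linear_combination h
      exact hij (Fin.ext (natCast_inj_of_lt i.2 j.2 hij'))
    · simp
  have hrr : ∀ j, g (Sum.inr j) = 0 := by
    intro j
    have h1 := congrFun (congrArg φ₂ hg) (lam + ((j + 1 : ℕ) : ZMod p))
    simp only [hl, zero_smul, Finset.sum_const_zero, zero_add, map_sum, map_smul,
      map_zero, Pi.zero_apply, Finset.sum_apply, Pi.smul_apply, h2a, opA_pow_apply] at h1
    have hj := j.2
    rw [Finset.sum_eq_single j] at h1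
    · rw [add_sub_cancel_right, Pi.single_eq_same, mul_one, smul_eq_mul, mul_eq_zero] at h1
      refine h1.resolve_right (Finset.prod_ne_zero_iff.2 fun i hi => hα₂ _ fun h => ?_)
      have hi := Finset.mem_range.1 hi
      have e : ((j - i + r : ℕ) : ZMod p) = ((0 : ℕ) : ZMod p) := by
        rw [Nat.cast_add, Nat.cast_sub (by omega)]
        push_cast at h ⊢
        linear_combination h
      have := natCast_inj_of_lt (by omega) (by omega) e
      omega
    · intro i _ hij
      rw [Pi.single_eq_of_ne, mul_zero, smul_zero]
      intro h
      have hij' : ((i : ℕ) : ZMod p) = ((j : ℕ) : ZMod p) := by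
        push_cast at h
        linear_combination -h
      exact hij (Fin.ext (natCast_inj_of_lt (by omega) (by omega) hij'))
    · simp
  rintro (j | j)
  · exact hl j
  · exact hrr j

end Independence

/-! ### The universal module of a given weight -/

section Universal

variable {K A : Type} [Field K] [Ring A] [Algebra K A] {v : K[X]} {p : ℕ} {a b h : A}

/-- The universal `A`-module generated by a vector of weight `lam`. -/
abbrev WeightModule (h : A) (lam : K) : Type := A ⧸ Ideal.span {h - algebraMap K A lam}

/-- The generator of `WeightModule h lam`. -/
def wgen (h : A) (lam : K) : WeightModule h lam := Submodule.Quotient.mk 1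

lemma smul_wgen (h : A) (lam : K) (x : A) :
    x • wgen h lam = Submodule.Quotient.mk x := by
  rw [wgen, ← Submodule.Quotient.mk_smul, smul_eq_mul, mul_one]

lemma wgen_weight (h : A) (lam : K) : h • wgen h lam = lam • wgen h lam := by
  rw [← algebraMap_smul A lam (wgen h lam), smul_wgen, smul_wgen, Submodule.Quotient.eq]
  exact Ideal.subset_span rfl

lemma exists_smul_wgen (h : A) (lam : K) (y : WeightModule h lam) :
    ∃ x : A, x • wgen h lam = y := by
  obtain ⟨x, rfl⟩ := Submodule.Quotient.mk_surjective _ y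
  exact ⟨x, smul_wgen h lam x⟩

/-- The universal property for a representation given as an algebra homomorphism. -/
lemma exists_lift_rep {N : Type} [AddCommGroup N] [Module K N] (ρ : A →ₐ[K] Module.End K N)
    {lam : K} {u : N} (hu : ρ h u = lam • u) :
    ∃ φ : WeightModule h lam →ₗ[K] N, ∀ x : A, φ (x • wgen h lam) = ρ x u := by
  let ψ : A →ₗ[K] N := (LinearMap.applyₗ u).comp ρ.toLinearMap
  have hψ : (Ideal.span {h - algebraMap K A lam}).restrictScalars K ≤ LinearMap.ker ψ := by
    intro x hx
    obtain ⟨c, rfl⟩ := Ideal.mem_span_singleton'.1 hx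
    change ρ (c * (h - algebraMap K A lam)) u = 0
    rw [map_mul, map_sub, Module.End.mul_apply, LinearMap.sub_apply, hu, AlgHom.commutes,
      Module.algebraMap_end_apply, sub_self, map_zero]
  refine ⟨(Submodule.liftQ _ ψ hψ).comp
    (Submodule.Quotient.restrictScalarsEquiv K (Ideal.span {h - algebraMap K A lam})).symm.toLinearMap, ?_⟩
  intro x
  rw [smul_wgen]
  rfl

/-- The universal property: a vector `u` of weight `lam` receives the generator. -/
lemma exists_lift_module {N : Type} [AddCommGroup N] [Module K N] [Module A N]
    [IsScalarTower K A N] {lam : K} {u : N} (hu : h • u = lam • u) :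
    ∃ φ : WeightModule h lam →ₗ[A] N, φ (wgen h lam) = u := by
  have hψ : Ideal.span {h - algebraMap K A lam} ≤
      LinearMap.ker (LinearMap.toSpanSingleton A N u) := by
    rw [Ideal.span_le, Set.singleton_subset_iff]
    change (h - algebraMap K A lam) • u = 0
    rw [sub_smul, hu, algebraMap_smul, sub_self]
  refine ⟨Submodule.liftQ _ (LinearMap.toSpanSingleton A N u) hψ, ?_⟩
  change (1 : A) • u = u
  exact one_smul _ _

variable [Fact p.Prime] [CharP K p]

/-- The path family is a basis of the universal weight module, so its dimension is
`p + (p - r)`. -/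
lemma rank_weightModule (R : HodgesRel v p a b h)
    (hgen : ∀ S : Subalgebra K A, a ∈ S → b ∈ S → h ∈ S → S = ⊤)
    (huniv : ∀ a' b' h' : Module.End K (ZMod p → K), HodgesRel v p a' b' h' →
      ∃ ρ : A →ₐ[K] Module.End K (ZMod p → K), ρ a = a' ∧ ρ b = b' ∧ ρ h = h')
    (l r : ℕ) (hr : 0 < r) (hrp : r ≤ p) (hv0 : v.eval (l : K) = 0)
    (hvr : v.eval ((l : K) - r) = 0)
    (hnz : ∀ j : ℕ, 1 ≤ j → j < r → v.eval ((l : K) - j) ≠ 0) :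
    Module.rank K (WeightModule h (l : K)) = ((p + (p - r) : ℕ) : Cardinal) := by
  have hlt : toK K p (l : ZMod p) = (l : K) := toK_natCast l
  have hspan := R.span_pathFamily hgen (wgen_weight h (l : K)) (exists_smul_wgen h (l : K)) hr hrp
    hnz
  let α₁ : ZMod p → K := fun μ => v.eval (toK K p μ)
  let β₁ : ZMod p → K := fun μ => if μ = l then 0 else 1
  let α₂ : ZMod p → K := fun μ => if μ = l - r then 0 else 1
  let β₂ : ZMod p → K := fun μ => v.eval (toK K p μ)
  have hα₁ : α₁ l = 0 := by simp only [α₁, hlt, hv0]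
  have R₁ : HodgesRel v p (opA α₁) (opB β₁) (opH K p) := by
    refine circle_rel v α₁ β₁ (fun μ => ?_) ⟨l, hα₁⟩ ⟨l, by simp [β₁]⟩
    by_cases hμ : μ = l
    · simp only [α₁, β₁, hμ, hlt, hv0, zero_mul]
    · simp [α₁, β₁, hμ]
  have R₂ : HodgesRel v p (opA α₂) (opB β₂) (opH K p) := by
    refine circle_rel v α₂ β₂ (fun μ => ?_) ⟨l - r, by simp [α₂]⟩ ⟨l, hα₁⟩
    by_cases hμ : μ = l - r
    · simp only [α₂, β₂, hμ, map_sub, toK_natCast, hvr, mul_zero]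
    · simp [α₂, β₂, hμ]
  obtain ⟨ρ₁, ha₁, hb₁, hh₁⟩ := huniv _ _ _ R₁
  obtain ⟨ρ₂, ha₂, hb₂, hh₂⟩ := huniv _ _ _ R₂
  have hu := opH_single (K := K) (l : ZMod p)
  rw [hlt] at hu
  obtain ⟨φ₁, hφ₁⟩ := exists_lift_rep ρ₁ (hh₁ ▸ hu)
  obtain ⟨φ₂, hφ₂⟩ := exists_lift_rep ρ₂ (hh₂ ▸ hu)
  have hli : LinearIndependent K (pathFamily p r a b (wgen h (l : K))) := by
    refine linearIndependent_pathFamily (α₁ := α₁) (β₁ := β₁) (α₂ := α₂) hr (l : ZMod p) _ hα₁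
      (fun μ hμ => ?_) (fun μ hμ => ?_) φ₁ φ₂ (fun j => ?_) (fun j => ?_) (fun j => ?_)
    · simp [β₁, hμ]
    · simp [α₂, hμ]
    · rw [hφ₁, map_pow, ha₁]
    · rw [hφ₁, map_pow, hb₁]
    · rw [hφ₂, map_pow, ha₂]
  rw [rank_eq_card_basis (Module.Basis.mk hli hspan.ge)]
  simp

/-- The weight space of weight `l` in the universal module is one-dimensional. -/
lemma weight_space_wgen (R : HodgesRel v p a b h)
    (hgen : ∀ S : Subalgebra K A, a ∈ S → b ∈ S → h ∈ S → S = ⊤)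
    (l r : ℕ) (hr : 0 < r) (hrp : r ≤ p)
    (hnz : ∀ j : ℕ, 1 ≤ j → j < r → v.eval ((l : K) - j) ≠ 0)
    (y : WeightModule h (l : K)) (hy : h • y = (l : K) • y) :
    ∃ c : K, y = c • wgen h (l : K) := by
  have hspan := R.span_pathFamily hgen (wgen_weight h (l : K)) (exists_smul_wgen h (l : K)) hr hrp
    hnz
  have hp1 : p - 1 ≠ 0 := by
    have := (Fact.out : p.Prime).two_le
    omega
  set e : A := 1 - (h - algebraMap K A (l : K)) ^ (p - 1) with he
  -- the weight projection kills vectors of weight `l + t` with `t ∈ 𝔽_p` nonzero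
  have hkill : ∀ (z : WeightModule h (l : K)) (t : ZMod p), t ≠ 0 →
      h • z = ((l : K) + toK K p t) • z → e • z = 0 := by
    intro z t ht hz
    rw [he, HodgesRel.weight_proj_apply hz, add_sub_cancel_left, ← map_pow,
      ZMod.pow_card_sub_one_eq_one ht, map_one, sub_self, zero_smul]
  have hfix : ∀ z : WeightModule h (l : K), h • z = (l : K) • z → e • z = z := by
    intro z hz
    rw [he, HodgesRel.weight_proj_apply hz, sub_self, zero_pow hp1, sub_zero, one_smul]
  have hcast : ∀ j : ℕ, 0 < j → j < p → (j : ZMod p) ≠ 0 := by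
    intro j h0 hj h
    have := natCast_inj_of_lt hj (by omega) (h.trans Nat.cast_zero.symm)
    omega
  have hmem : ∀ z : WeightModule h (l : K), e • z ∈ Submodule.span K {wgen h (l : K)} := by
    intro z
    have hz : z ∈ Submodule.span K (Set.range (pathFamily p r a b (wgen h (l : K)))) := by
      rw [hspan]; trivial
    induction hz using Submodule.span_induction with
    | mem z hz =>
      obtain ⟨⟨j, hj⟩ | ⟨j, hj⟩, rfl⟩ := hz
      · change e • b ^ j • wgen h (l : K) ∈ _
        rcases j with _ | j
        · rw [pow_zero, one_smul, hfix _ (wgen_weight h _)]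
          exact Submodule.mem_span_singleton_self _
        · rw [hkill _ (-((j + 1 : ℕ) : ZMod p)) (neg_ne_zero.2 (hcast _ (by omega) hj))]
          · exact Submodule.zero_mem _
          · rw [R.weight_b_pow (wgen_weight h _), map_neg, toK_natCast, sub_eq_add_neg (l : K)]
      · change e • a ^ (j + 1) • wgen h (l : K) ∈ _
        rw [hkill _ ((j + 1 : ℕ) : ZMod p) (hcast _ (by omega) (by omega))]
        · exact Submodule.zero_mem _
        · rw [R.weight_a_pow (wgen_weight h _), toK_natCast]
    | zero => simp
    | add x z _ _ hx hz => rw [smul_add]; exact Submodule.add_mem _ hx hz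
    | smul c z _ hz => rw [smul_comm]; exact Submodule.smul_mem _ c hz
  have := hmem y
  rw [hfix y hy, Submodule.mem_span_singleton] at this
  obtain ⟨c, hc⟩ := this
  exact ⟨c, hc.symm⟩

/-- A projective cover of a module generated by a vector of weight `l` is isomorphic to the
universal module of weight `l`, when the weight space of the generator there is a line. -/
lemma cover_equiv (R : HodgesRel v p a b h) (l : ℕ)
    (hline : ∀ y : WeightModule h (l : K), h • y = (l : K) • y → ∃ c : K, y = c • wgen h (l : K))
    {L Q : Type} [AddCommGroup L] [Module A L] [AddCommGroup Q] [Module K Q] [Module A Q]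
    [IsScalarTower K A Q] [Module.Projective A Q] (f : Q →ₗ[A] L) (hf : Function.Surjective f)
    (hsup : ∀ N : Submodule A Q, N ⊔ LinearMap.ker f = ⊤ → N = ⊤)
    (x : L) (hx0 : x ≠ 0) (hx : h • x = algebraMap K A (l : K) • x)
    (hxspan : ∀ y : L, ∃ c : A, c • x = y) :
    Nonempty (Q ≃ₗ[A] WeightModule h (l : K)) := by
  have hp1 : p - 1 ≠ 0 := by
    have := (Fact.out : p.Prime).two_le
    omega
  have hlam : (l : K) ^ p = l := by
    rw [← toK_natCast (p := p) l, ← map_pow, ZMod.pow_card]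
  obtain ⟨q₀, hq₀⟩ := hf x
  set q : Q := (1 - (h - algebraMap K A (l : K)) ^ (p - 1)) • q₀ with hq
  have hqw : h • q = (l : K) • q := R.weight_proj hlam q₀
  have hfq : f q = x := by
    obtain ⟨k, hk⟩ := Nat.exists_eq_succ_of_ne_zero hp1
    rw [hq, map_smul, hq₀, sub_smul, one_smul, hk, pow_succ, mul_smul, sub_smul, hx, sub_self,
      smul_zero, sub_zero]
  have htop : Submodule.span A {q} = ⊤ := by
    refine hsup _ (eq_top_iff.2 fun y _ => ?_)
    obtain ⟨c, hc⟩ := hxspan (f y)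
    refine Submodule.mem_sup.2 ⟨c • q, Submodule.smul_mem _ c (Submodule.mem_span_singleton_self q),
      y - c • q, ?_, by abel⟩
    rw [LinearMap.mem_ker, map_sub, map_smul, hfq, hc, sub_self]
  obtain ⟨π, hπ⟩ := exists_lift_module (A := A) hqw
  have hπs : Function.Surjective π := by
    intro y
    have hy : y ∈ Submodule.span A {q} := by rw [htop]; trivial
    obtain ⟨c, rfl⟩ := Submodule.mem_span_singleton.1 hy
    exact ⟨c • wgen h (l : K), by rw [map_smul, hπ]⟩
  obtain ⟨s, hs⟩ := Module.projective_lifting_property π LinearMap.id hπs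
  have hsq : ∀ y, π (s y) = y := fun y => LinearMap.congr_fun hs y
  obtain ⟨c, hc⟩ := hline (s q) (by
    rw [← map_smul, hqw, ← algebraMap_smul A, map_smul, algebraMap_smul])
  have hc0 : c ≠ 0 := by
    rintro rfl
    rw [zero_smul] at hc
    have := hsq q
    rw [hc, map_zero] at this
    rw [← this, map_zero] at hfq
    exact hx0 hfq.symm
  have hss : Function.Surjective s := by
    intro y
    obtain ⟨z, rfl⟩ := exists_smul_wgen h (l : K) y
    refine ⟨z • algebraMap K A c⁻¹ • q, ?_⟩
    rw [map_smul, map_smul, hc, algebraMap_smul, smul_smul, inv_mul_cancel₀ hc0, one_smul]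
  exact ⟨LinearEquiv.ofBijective s ⟨Function.LeftInverse.injective hsq, hss⟩⟩

end Universal

/-! ### The presentation of `t(v)` -/

section Presentation

variable {K : Type} [Field K] (v : K[X]) (p : ℕ)

lemma tv_rel : HodgesRel v p (ta K v p) (tb K v p) (th K v p) where
  ha := by simpa [ta, tb, th] using RingQuot.mkAlgHom_rel K (tvRel.ha (K := K) (v := v) (p := p))
  hb := by simpa [ta, tb, th] using RingQuot.mkAlgHom_rel K (tvRel.hb (K := K) (v := v) (p := p))
  ba := by
    have := RingQuot.mkAlgHom_rel K (tvRel.ba (K := K) (v := v) (p := p))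
    rwa [map_mul, ← aeval_algHom_apply] at this
  ab := by
    have := RingQuot.mkAlgHom_rel K (tvRel.ab (K := K) (v := v) (p := p))
    rwa [map_mul, ← aeval_algHom_apply, map_sub, map_one] at this
  ap := by simpa [ta, tb, th] using RingQuot.mkAlgHom_rel K (tvRel.ap (K := K) (v := v) (p := p))
  bp := by simpa [ta, tb, th] using RingQuot.mkAlgHom_rel K (tvRel.bp (K := K) (v := v) (p := p))
  hp := by simpa [ta, tb, th] using RingQuot.mkAlgHom_rel K (tvRel.hp (K := K) (v := v) (p := p))

lemma tv_gen (S : Subalgebra K (tv K v p)) (ha : ta K v p ∈ S) (hb : tb K v p ∈ S)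
    (hh : th K v p ∈ S) : S = ⊤ := by
  rw [eq_top_iff]
  intro x _
  obtain ⟨y, rfl⟩ := RingQuot.mkAlgHom_surjective K (tvRel K v p) x
  induction y using FreeAlgebra.induction with
  | grade0 c => rw [AlgHom.commutes]; exact S.algebraMap_mem c
  | grade1 i =>
    fin_cases i
    · exact ha
    · exact hb
    · exact hh
  | mul x y hx hy => rw [map_mul]; exact S.mul_mem (hx trivial) (hy trivial)
  | add x y hx hy => rw [map_add]; exact S.add_mem (hx trivial) (hy trivial)

lemma tv_univ {B : Type} [Ring B] [Algebra K B] (a' b' h' : B) (R : HodgesRel v p a' b' h') :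
    ∃ ρ : tv K v p →ₐ[K] B, ρ (ta K v p) = a' ∧ ρ (tb K v p) = b' ∧ ρ (th K v p) = h' := by
  let F : FreeAlgebra K (Fin 3) →ₐ[K] B := FreeAlgebra.lift K ![a', b', h']
  have hFa : F (fa K) = a' := by simp [F, fa]
  have hFb : F (fb K) = b' := by simp [F, fb]
  have hFh : F (fh K) = h' := by simp [F, fh]
  have hF : ∀ ⦃x y⦄, tvRel K v p x y → F x = F y := by
    intro x y hxy
    cases hxy
    · simp [hFa, hFh, R.ha]
    · simp [hFb, hFh, R.hb]
    · rw [map_mul, hFb, hFa, ← aeval_algHom_apply, hFh, R.ba]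
    · rw [map_mul, hFb, hFa, ← aeval_algHom_apply, map_sub, map_one, hFh, R.ab]
    · simp [hFa, R.ap]
    · simp [hFb, R.bp]
    · simp [hFh, R.hp]
  refine ⟨RingQuot.liftAlgHom K ⟨F, hF⟩, ?_, ?_, ?_⟩
  · rw [ta, RingQuot.liftAlgHom_mkAlgHom_apply, hFa]
  · rw [tb, RingQuot.liftAlgHom_mkAlgHom_apply, hFb]
  · rw [th, RingQuot.liftAlgHom_mkAlgHom_apply, hFh]

end Presentation

/-! ### The roots of `v` -/

section Roots

variable (K : Type) [Field K] (p n : ℕ) [CharP K p] (r : ℕ → ℕ)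

/-- The partial sums `r_1 + ⋯ + r_i`. -/
def psum (r : ℕ → ℕ) (i : ℕ) : ℕ := ∑ j ∈ Finset.Ico 1 (i + 1), r j

lemma psum_mono {i j : ℕ} (hij : i ≤ j) : psum r i ≤ psum r j :=
  Finset.sum_le_sum_of_subset (Finset.Ico_subset_Ico le_rfl (by omega))

lemma psum_succ (i : ℕ) : psum r (i + 1) = psum r i + r (i + 1) :=
  Finset.sum_Ico_succ_top (by omega) _

lemma vr_eval (x : K) : (vr K n r).eval x = ∏ i ∈ Finset.range n, (x - (psum r i : K)) := by
  simp only [vr, eval_prod, psum, eval_sub, eval_X, eval_C]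

variable {n} (hn : 0 < n) (hrsum : psum r (n - 1) ≤ p) (hr0 : r 0 = p - psum r (n - 1))
include hn hrsum hr0

lemma r_le {k : ℕ} (hk : k < n) : r k ≤ p := by
  rcases k with _ | k
  · omega
  · have := psum_succ r k
    have := psum_mono r (show k + 1 ≤ n - 1 by omega)
    omega

omit [CharP K p] hn hrsum hr0 in
lemma vr_eval_top {k : ℕ} (hk : k < n) : (vr K n r).eval (psum r k : K) = 0 := by
  rw [vr_eval]
  exact Finset.prod_eq_zero (Finset.mem_range.2 hk) (sub_self _)

lemma vr_eval_bot {k : ℕ} (hk : k < n) : (vr K n r).eval ((psum r k : K) - r k) = 0 := by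
  rcases k with _ | k
  · have : ((psum r 0 : ℕ) : K) - r 0 = (psum r (n - 1) : ℕ) := by
      rw [hr0, Nat.cast_sub hrsum, CharP.cast_eq_zero K p]
      simp [psum]
    rw [this]
    exact vr_eval_top K r (by omega)
  · rw [psum_succ, Nat.cast_add, add_sub_cancel_right]
    exact vr_eval_top K r (by omega)

/-- In the block of weights `psum r k - r k < μ ≤ psum r k`, only the top weight is a root of
`v`: integers differing by less than `p` stay distinct in `K`. -/
lemma vr_eval_ne_zero {k : ℕ} (hk : k < n) (j : ℕ) (hj : 1 ≤ j) (hjr : j < r k) :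
    (vr K n r).eval ((psum r k : K) - j) ≠ 0 := by
  rw [vr_eval, Finset.prod_ne_zero_iff]
  intro i hi h0
  have hi := Finset.mem_range.1 hi
  have h1 : (((psum r k : ℤ) - j - psum r i : ℤ) : K) = 0 := by push_cast; exact h0
  rw [CharP.intCast_eq_zero_iff K p] at h1
  have h2 := psum_mono r (show i ≤ n - 1 by omega)
  have hb : ((psum r k : ℤ) - j - psum r i) ≠ 0 ∧ |(psum r k : ℤ) - j - psum r i| < p := by
    rw [abs_lt]
    rcases k with _ | k
    · have : psum r 0 = 0 := by simp [psum]
      omega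
    · have h3 := psum_succ r k
      have h4 := psum_mono r (show k + 1 ≤ n - 1 by omega)
      rcases le_or_gt i k with hik | hik
      · have := psum_mono r hik
        omega
      · have := psum_mono r (show k + 1 ≤ i from hik)
        omega
  exact hb.1 (Int.eq_zero_of_abs_lt_dvd h1 hb.2)

end Roots

/-!
STATEMENT 14: Let `i ∈ {0,…,n−1}` with `r_{n−1−i} ≠ 0` and let `L_i` be the corresponding
simple `t(v)`-module of dimension `r_{n−1−i}`, namely the head of the baby Verma module
`V(r_1 + ⋯ + r_{n−1−i})` (we encode this by saying that `L` is a simple `t(v)`-module of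
`K`-dimension `r_{n−1−i}` admitting a surjection from `V(r_1 + ⋯ + r_{n−1−i})`).
If `Q` is a projective cover of `L_i` — i.e. `Q` is a finite-dimensional projective left
`t(v)`-module together with a surjection `f : Q → L_i` whose kernel is a superfluous
submodule of `Q` — then `dim_K Q = 2p − r_{n−1−i}`.
-/

theorem statement_14 (K : Type) [Field K] (p n : ℕ) [Fact p.Prime] [CharP K p]
    [IsAlgClosed K] (hn : 0 < n) (hpn : Nat.Coprime p n)
    (r : ℕ → ℕ) (hrsum : ∑ j ∈ Finset.Ico 1 n, r j ≤ p)
    (hr0 : r 0 = p - ∑ j ∈ Finset.Ico 1 n, r j)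
    (i : ℕ) (hi : i < n) (hri : r (n - 1 - i) ≠ 0)
    (L : Type) [AddCommGroup L] [Module (tv K (vr K n r) p) L]
    (hLsimple : IsSimpleModule (tv K (vr K n r) p) L)
    (hLdim : Module.rank K (RestrictScalars K (tv K (vr K n r) p) L) =
      (r (n - 1 - i) : Cardinal))
    (hLhead : ∃ g : (tv K (vr K n r) p ⧸
        tBabyVermaIdeal K (vr K n r) p ((∑ j ∈ Finset.Ico 1 (n - i), r j : ℕ) : ℤ))
        →ₗ[tv K (vr K n r) p] L, Function.Surjective g)
    (Q : Type) [AddCommGroup Q] [Module (tv K (vr K n r) p) Q]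
    [Module.Finite (tv K (vr K n r) p) Q]
    (hQproj : Module.Projective (tv K (vr K n r) p) Q)
    (f : Q →ₗ[tv K (vr K n r) p] L) (hf : Function.Surjective f)
    (hsuperfluous : ∀ N : Submodule (tv K (vr K n r) p) Q,
      N ⊔ LinearMap.ker f = ⊤ → N = ⊤) :
    Module.rank K (RestrictScalars K (tv K (vr K n r) p) Q) =
      ((2 * p - r (n - 1 - i) : ℕ) : Cardinal) := by
  have hk : n - 1 - i < n := by omega
  have hni : n - i = n - 1 - i + 1 := by omega
  have hn1 : n = n - 1 + 1 := by omega
  generalize n - 1 - i = k at hri hk hni ⊢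
  have hs : ∑ j ∈ Finset.Ico 1 n, r j = psum r (n - 1) := by rw [psum, ← hn1]
  rw [hs] at hrsum hr0
  have R := tv_rel (vr K n r) p
  have hgen := tv_gen (vr K n r) p
  have hrp := r_le p r hn hrsum hr0 hk
  have hrpos : 0 < r k := Nat.pos_of_ne_zero hri
  have hnz := vr_eval_ne_zero K p r hn hrsum hr0 hk
  have hrank := rank_weightModule R hgen (fun a' b' h' => tv_univ (vr K n r) p a' b' h')
    (psum r k) (r k) hrpos hrp (vr_eval_top K r hk) (vr_eval_bot K p r hn hrsum hr0 hk) hnz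
  have hline := weight_space_wgen R hgen (psum r k) (r k) hrpos hrp hnz
  -- the image in `L` of the highest weight vector of the baby Verma module
  obtain ⟨g, hg⟩ := hLhead
  have hgx : ∀ c : tv K (vr K n r) p,
      g (Submodule.Quotient.mk c) = c • g (Submodule.Quotient.mk 1) := by
    intro c
    rw [← map_smul, ← Submodule.Quotient.mk_smul, smul_eq_mul, mul_one]
  have hxspan : ∀ y : L, ∃ c : tv K (vr K n r) p, c • g (Submodule.Quotient.mk 1) = y := by
    intro y
    obtain ⟨z, rfl⟩ := hg y
    obtain ⟨c, rfl⟩ := Submodule.Quotient.mk_surjective _ z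
    exact ⟨c, (hgx c).symm⟩
  have hx0 : g (Submodule.Quotient.mk 1) ≠ 0 := by
    intro h0
    have := IsSimpleModule.nontrivial (tv K (vr K n r) p) L
    obtain ⟨y, hy⟩ := exists_ne (0 : L)
    obtain ⟨c, hc⟩ := hxspan y
    rw [h0, smul_zero] at hc
    exact hy hc.symm
  have hx : th K (vr K n r) p • g (Submodule.Quotient.mk 1) =
      algebraMap K (tv K (vr K n r) p) (psum r k : K) • g (Submodule.Quotient.mk 1) := by
    rw [← hgx, ← hgx]
    congr 1
    rw [Submodule.Quotient.eq, tBabyVermaIdeal, hni]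
    refine Ideal.subset_span (Or.inr ?_)
    simp [psum]
  let mQ : Module K Q := RestrictScalars.module K (tv K (vr K n r) p) Q
  have tQ : IsScalarTower K (tv K (vr K n r) p) Q :=
    RestrictScalars.isScalarTower K (tv K (vr K n r) p) Q
  obtain ⟨E⟩ := cover_equiv R (psum r k) hline f hf hsuperfluous _ hx0 hx hxspan
  have hQ : Module.rank K Q = ((2 * p - r k : ℕ) : Cardinal) := by
    rw [(E.restrictScalars K).rank_eq, hrank]
    congr 1
    omega
  exact hQ
end
end

section
/- For every field L and every integer k ≥ 1, the no-cycle algebra N_L(k) has dimension k(2k−1) as an L-vector space. -/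
/-!
The algebra `N_L(k)` has the basis of straight paths `(i, d)`, where `i` is a vertex and `d` an
integer with `|d| < k`: the path starts at `i` and consists of `|d|` arrows, all of type `b` if
`d > 0` and all of type `a` if `d < 0`. There are `k (2k - 1)` such pairs.

They span (`ncFam_span`): their span contains `1 = ∑ e_i` and is stable under left multiplication
by the generators, because a change of direction produces a factor `a_i b_i` or `b_i a_i`, which is
a cycle, and a straight path of length `k` is a cycle too.

They are linearly independent (`ncFam_linearIndependent`): the free algebra acts on the vector
space with basis all pairs `(i, d)` by prolonging straight paths on the left. Every path of
positive length acts by zero or as left multiplication by a straight path (`ncPhi_path`), so cycles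
act by zero (`ncPhi_cycle`), since a nontrivial straight cycle has length at least `k`. The action
therefore descends to `N_L(k)`, and applying the straight path `(i, d)` to the vector `∑ i, (i, 0)`
gives the basis vector `(i, d)` (`ncEval_fam`).
-/

/-!
The no-cycle algebra `N_L(k)`: let `Q` be the quiver with vertex set `ℤ/kℤ` and, for each
`i ∈ ℤ/kℤ`, arrows `a_i : i+1 → i` and `b_i : i → i+1`.  `N_L(k)` is the quotient of the
path algebra `LQ` by the two-sided ideal generated by all paths of positive length that
start and end at the same vertex.

We realise the path algebra by generators and relations: generators are the vertex
idempotents `e_i` and the arrows `a_i`, `b_i` (as the free algebra on `Fin 3 × ZMod k`,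
with `(0, i) ↦ e_i`, `(1, i) ↦ a_i`, `(2, i) ↦ b_i`), subject to the relations
`e_i e_j = δ_{ij} e_i`, `Σ_i e_i = 1`, `a_i = e_{i+1} a_i e_i`, `b_i = e_i b_i e_{i+1}`
(products of paths are read left to right), together with the relation `x = 0` for every
path `x` of positive length starting and ending at the same vertex.
-/

noncomputable section

/-- the vertex idempotent `e_i` in the free algebra -/
def ncE (L : Type) [Field L] (k : ℕ) (i : ZMod k) : FreeAlgebra L (Fin 3 × ZMod k) :=
  FreeAlgebra.ι L (0, i)

/-- the arrow `a_i : i+1 → i` in the free algebra -/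
def ncA (L : Type) [Field L] (k : ℕ) (i : ZMod k) : FreeAlgebra L (Fin 3 × ZMod k) :=
  FreeAlgebra.ι L (1, i)

/-- the arrow `b_i : i → i+1` in the free algebra -/
def ncB (L : Type) [Field L] (k : ℕ) (i : ZMod k) : FreeAlgebra L (Fin 3 × ZMod k) :=
  FreeAlgebra.ι L (2, i)

/-- `NCPath L k i j x` means that `x` is (the product of) a path of positive length from
vertex `i` to vertex `j` in the quiver, products being read left to right. -/
inductive NCPath (L : Type) [Field L] (k : ℕ) :
    ZMod k → ZMod k → FreeAlgebra L (Fin 3 × ZMod k) → Prop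
  | a (i : ZMod k) : NCPath L k (i + 1) i (ncA L k i)
  | b (i : ZMod k) : NCPath L k i (i + 1) (ncB L k i)
  | comp {i j l : ZMod k} {x y : FreeAlgebra L (Fin 3 × ZMod k)} :
      NCPath L k i j x → NCPath L k j l y → NCPath L k i l (x * y)

/-- The defining relations of the no-cycle algebra `N_L(k)`. -/
inductive NCRel (L : Type) [Field L] (k : ℕ) :
    FreeAlgebra L (Fin 3 × ZMod k) → FreeAlgebra L (Fin 3 × ZMod k) → Prop
  | ee (i j : ZMod k) : NCRel L k (ncE L k i * ncE L k j) (if i = j then ncE L k i else 0)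
  | unit : NCRel L k (∑ᶠ i : ZMod k, ncE L k i) 1
  | aspan (i : ZMod k) : NCRel L k (ncA L k i) (ncE L k (i + 1) * ncA L k i * ncE L k i)
  | bspan (i : ZMod k) : NCRel L k (ncB L k i) (ncE L k i * ncB L k i * ncE L k (i + 1))
  | cyc (i : ZMod k) (x : FreeAlgebra L (Fin 3 × ZMod k)) :
      NCPath L k i i x → NCRel L k x 0

/-- the no-cycle algebra `N_L(k)` -/
abbrev NC (L : Type) [Field L] (k : ℕ) := RingQuot (NCRel L k)

/-!
STATEMENT 16: For every field `L` and every integer `k ≥ 1`, the no-cycle algebra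
`N_L(k)` has dimension `k(2k−1)` as an `L`-vector space.
-/

/-! ### The representation on the space of paths -/

/-- The vector space on which `N_L(k)` acts: the basis vector `(i, d)` stands for the straight path
of `|d|` arrows starting at the vertex `i`, all of type `b` if `d > 0` and all of type `a` if
`d < 0`. Vectors with `|d| ≥ k` are allowed but play no role. -/
abbrev NCV (L : Type) [Field L] (k : ℕ) := (ZMod k × ℤ) →₀ L

/-- Left multiplication by the vertex idempotent `e_i` on `NCV`. -/
def ncRepE (L : Type) [Field L] (k : ℕ) (i : ZMod k) : Module.End L (NCV L k) :=
  Finsupp.linearCombination L fun p => if p.1 = i then Finsupp.single p 1 else 0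

/-- Left multiplication on `NCV` by the straight path `(i, n)` with `n ≠ 0`: it prolongs a path
`(j, d)` when the endpoint `i + n` is `j`, the directions agree, and the total length stays
below `k`; otherwise the result is zero. -/
def ncT (L : Type) [Field L] (k : ℕ) (i : ZMod k) (n : ℤ) : Module.End L (NCV L k) :=
  Finsupp.linearCombination L fun p =>
    if p.1 = i + n ∧ 0 ≤ p.2 * n ∧ |p.2 + n| < k then Finsupp.single (i, p.2 + n) 1 else 0

lemma ncRepE_single (L : Type) [Field L] (k : ℕ) (i : ZMod k) (p : ZMod k × ℤ) :
    ncRepE L k i (Finsupp.single p 1) = if p.1 = i then Finsupp.single p 1 else 0 := by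
  simp [ncRepE]

lemma ncT_single (L : Type) [Field L] (k : ℕ) (i : ZMod k) (n : ℤ) (p : ZMod k × ℤ) :
    ncT L k i n (Finsupp.single p 1) =
      if p.1 = i + n ∧ 0 ≤ p.2 * n ∧ |p.2 + n| < k then Finsupp.single (i, p.2 + n) 1 else 0 := by
  simp [ncT]

lemma ncV_ext {L : Type} [Field L] {k : ℕ} {f g : Module.End L (NCV L k)}
    (h : ∀ p, f (Finsupp.single p 1) = g (Finsupp.single p 1)) : f = g := by
  ext p : 2
  simpa using h p

lemma ncMul_nonneg_iff_of_neg {c b : ℤ} (h : c < 0) : 0 ≤ b * c ↔ b ≤ 0 :=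
  ⟨fun h1 => by nlinarith, fun h1 => mul_nonneg_of_nonpos_of_nonpos h1 h.le⟩

lemma ncT_mul_same (L : Type) [Field L] (k : ℕ) (i : ZMod k) (n m : ℤ) (h : 0 < n * m) :
    ncT L k i n * ncT L k (i + n) m = ncT L k i (n + m) := by
  refine ncV_ext fun ⟨p, d⟩ => ?_
  rw [Module.End.mul_apply, ncT_single, ncT_single]
  have key : (0 ≤ d * m ∧ |d + m| < k ∧ 0 ≤ (d + m) * n ∧ |d + m + n| < k) ↔
      (0 ≤ d * (n + m) ∧ |d + (n + m)| < k) := by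
    rcases pos_and_pos_or_neg_and_neg_of_mul_pos h with ⟨hn, hm⟩ | ⟨hn, hm⟩
    · rw [mul_nonneg_iff_of_pos_right hm, mul_nonneg_iff_of_pos_right hn,
        mul_nonneg_iff_of_pos_right (by omega : 0 < n + m)]
      simp only [abs_lt]
      omega
    · rw [ncMul_nonneg_iff_of_neg hm, ncMul_nonneg_iff_of_neg hn,
        ncMul_nonneg_iff_of_neg (by omega : n + m < 0)]
      simp only [abs_lt]
      omega
  have e1 : d + m + n = d + (n + m) := by ring
  by_cases hp : p = i + n + m
  · by_cases h1 : 0 ≤ d * m ∧ |d + m| < k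
    · rw [if_pos ⟨hp, h1⟩, ncT_single]
      by_cases h2 : 0 ≤ (d + m) * n ∧ |d + m + n| < k
      · rw [if_pos ⟨rfl, h2⟩, if_pos ⟨by push_cast; rw [hp]; ring, key.1 ⟨h1.1, h1.2, h2⟩⟩, e1]
      · rw [if_neg (fun h => h2 h.2), if_neg]
        exact fun h => h2 (key.2 h.2).2.2
    · rw [if_neg (fun h => h1 h.2), if_neg, map_zero]
      exact fun h => h1 ⟨(key.2 h.2).1, (key.2 h.2).2.1⟩
  · rw [if_neg (fun h => hp h.1), if_neg, map_zero]
    rintro ⟨h, -⟩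
    apply hp
    rw [show p = i + ((n + m : ℤ) : ZMod k) from h]
    push_cast
    ring

lemma ncT_mul_opp (L : Type) [Field L] (k : ℕ) (i j : ZMod k) (n m : ℤ) (h : n * m < 0) :
    ncT L k i n * ncT L k j m = 0 := by
  refine ncV_ext fun ⟨p, d⟩ => ?_
  rw [Module.End.mul_apply, ncT_single]
  split_ifs with h1
  · rw [ncT_single, if_neg]
    · simp
    · rintro ⟨-, h2, -⟩
      have h3 := h1.2.1
      dsimp at h2 h3
      rcases mul_neg_iff.1 h with ⟨hn, hm⟩ | ⟨hn, hm⟩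
      · rw [mul_nonneg_iff_of_pos_right hn] at h2
        rw [ncMul_nonneg_iff_of_neg hm] at h3
        omega
      · rw [ncMul_nonneg_iff_of_neg hn] at h2
        rw [mul_nonneg_iff_of_pos_right hm] at h3
        omega
  · simp

/-- A straight path of length at least `k` acts by zero. -/
lemma ncT_eq_zero (L : Type) [Field L] (k : ℕ) (i : ZMod k) (n : ℤ) (h : (k : ℤ) ≤ |n|) :
    ncT L k i n = 0 := by
  refine ncV_ext fun ⟨p, d⟩ => ?_
  rw [ncT_single, if_neg]
  · simp
  · rintro ⟨-, h1, h2⟩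
    dsimp at h1 h2
    have : |n| ≤ |d + n| := by
      apply sq_le_sq.1
      nlinarith [sq_nonneg d]
    omega

/-- The action of the free algebra on `NCV`. -/
def ncPhi (L : Type) [Field L] (k : ℕ) :
    FreeAlgebra L (Fin 3 × ZMod k) →ₐ[L] Module.End L (NCV L k) :=
  FreeAlgebra.lift L fun g =>
    if g.1 = 0 then ncRepE L k g.2 else if g.1 = 1 then ncT L k (g.2 + 1) (-1) else ncT L k g.2 1

lemma ncPhi_E (L : Type) [Field L] (k : ℕ) (i : ZMod k) :
    ncPhi L k (ncE L k i) = ncRepE L k i := by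
  simp [ncPhi, ncE]

lemma ncPhi_A (L : Type) [Field L] (k : ℕ) (i : ZMod k) :
    ncPhi L k (ncA L k i) = ncT L k (i + 1) (-1) := by
  simp [ncPhi, ncA]

lemma ncPhi_B (L : Type) [Field L] (k : ℕ) (i : ZMod k) :
    ncPhi L k (ncB L k i) = ncT L k i 1 := by
  simp [ncPhi, ncB]

/-- A path of positive length acts either by zero or as a straight path. -/
lemma ncPhi_path {L : Type} [Field L] {k : ℕ} {i j : ZMod k}
    {x : FreeAlgebra L (Fin 3 × ZMod k)} (h : NCPath L k i j x) :
    ncPhi L k x = 0 ∨ ∃ n : ℤ, n ≠ 0 ∧ j = i + n ∧ ncPhi L k x = ncT L k i n := by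
  induction h with
  | a i => exact Or.inr ⟨-1, by simp, by simp, ncPhi_A L k i⟩
  | b i => exact Or.inr ⟨1, by simp, by simp, ncPhi_B L k i⟩
  | comp _ _ ih1 ih2 =>
    rw [map_mul]
    rcases ih1 with h1 | ⟨n, hn, rfl, h1⟩
    · left; rw [h1, zero_mul]
    rcases ih2 with h2 | ⟨m, hm, rfl, h2⟩
    · left; rw [h2, mul_zero]
    rw [h1, h2]
    rcases (mul_ne_zero hn hm).lt_or_gt with h | h
    · left; exact ncT_mul_opp L k _ _ _ _ h
    · refine Or.inr ⟨n + m, ?_, by push_cast; ring, ncT_mul_same L k _ _ _ h⟩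
      rintro h0
      obtain rfl : m = -n := by omega
      nlinarith [sq_nonneg n]

lemma ncPhi_cycle {L : Type} [Field L] {k : ℕ} {i : ZMod k}
    {x : FreeAlgebra L (Fin 3 × ZMod k)} (h : NCPath L k i i x) : ncPhi L k x = 0 := by
  rcases ncPhi_path h with h | ⟨n, hn, h1, h2⟩
  · exact h
  · rw [h2]
    apply ncT_eq_zero
    have h3 : ((n : ℤ) : ZMod k) = 0 := by simpa using h1.symm
    rw [ZMod.intCast_zmod_eq_zero_iff_dvd] at h3
    exact Int.le_of_dvd (abs_pos.2 hn) ((dvd_abs _ _).2 h3)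

lemma ncPhi_rel {L : Type} [Field L] {k : ℕ} [NeZero k] {x y : FreeAlgebra L (Fin 3 × ZMod k)}
    (h : NCRel L k x y) : ncPhi L k x = ncPhi L k y := by
  cases h with
  | ee i j =>
    rw [map_mul, apply_ite (ncPhi L k), map_zero, ncPhi_E, ncPhi_E]
    refine ncV_ext fun p => ?_
    rw [Module.End.mul_apply, ncRepE_single]
    split_ifs with h1 h2 h2
    · rw [h2]
    · rw [ncRepE_single, if_neg (fun h => h2 (h.symm.trans h1))]; simp
    · rw [map_zero, ncRepE_single, if_neg (by rwa [h2])]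
    · simp
  | unit =>
    rw [finsum_eq_sum_of_fintype, map_sum, map_one]
    refine ncV_ext fun p => ?_
    simp [ncPhi_E, ncRepE_single]
  | aspan i =>
    rw [map_mul, map_mul, ncPhi_E, ncPhi_E, ncPhi_A]
    refine ncV_ext fun p => ?_
    rw [Module.End.mul_apply, Module.End.mul_apply, ncRepE_single]
    by_cases hp : p.1 = i
    · rw [if_pos hp, ncT_single]
      split_ifs <;> simp [ncRepE_single]
    · rw [if_neg hp, ncT_single, if_neg]
      · simp
      · rintro ⟨h, -⟩
        simp at h
        exact hp h
  | bspan i =>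
    rw [map_mul, map_mul, ncPhi_E, ncPhi_E, ncPhi_B]
    refine ncV_ext fun p => ?_
    rw [Module.End.mul_apply, Module.End.mul_apply, ncRepE_single]
    by_cases hp : p.1 = i + 1
    · rw [if_pos hp, ncT_single]
      split_ifs <;> simp [ncRepE_single]
    · rw [if_neg hp, ncT_single, if_neg]
      · simp
      · rintro ⟨h, -⟩
        simp at h
        exact hp h
  | cyc i x hx => rw [ncPhi_cycle hx, map_zero]

/-- The action of `N_L(k)` on `NCV`. -/
def ncRep (L : Type) [Field L] (k : ℕ) [NeZero k] : NC L k →ₐ[L] Module.End L (NCV L k) :=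
  RingQuot.liftAlgHom L ⟨ncPhi L k, fun _ _ h => ncPhi_rel h⟩

/-- The quotient map from the free algebra to `N_L(k)`. -/
def ncPi (L : Type) [Field L] (k : ℕ) : FreeAlgebra L (Fin 3 × ZMod k) →ₐ[L] NC L k :=
  RingQuot.mkAlgHom L (NCRel L k)

lemma ncPi_rel {L : Type} [Field L] {k : ℕ} {x y : FreeAlgebra L (Fin 3 × ZMod k)}
    (h : NCRel L k x y) : ncPi L k x = ncPi L k y :=
  RingQuot.mkAlgHom_rel L h

lemma ncRep_pi (L : Type) [Field L] (k : ℕ) [NeZero k] (x : FreeAlgebra L (Fin 3 × ZMod k)) :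
    ncRep L k (ncPi L k x) = ncPhi L k x := by
  simp [ncRep, ncPi]

/-! ### Straight paths -/

/-- The path `b_i b_{i+1} ⋯ b_{i+n-1}`, with `e_i` for `n = 0`. -/
def ncPB (L : Type) [Field L] (k : ℕ) : ℕ → ZMod k → FreeAlgebra L (Fin 3 × ZMod k)
  | 0, i => ncE L k i
  | n + 1, i => ncB L k i * ncPB L k n (i + 1)

/-- The path `a_{i-1} a_{i-2} ⋯ a_{i-n}`, with `e_i` for `n = 0`. -/
def ncPA (L : Type) [Field L] (k : ℕ) : ℕ → ZMod k → FreeAlgebra L (Fin 3 × ZMod k)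
  | 0, i => ncE L k i
  | n + 1, i => ncA L k (i - 1) * ncPA L k n (i - 1)

/-- The class in `N_L(k)` of the straight path `(i, d)`. -/
def ncP (L : Type) [Field L] (k : ℕ) (p : ZMod k × ℤ) : NC L k :=
  match p.2 with
  | Int.ofNat n => ncPi L k (ncPB L k n p.1)
  | Int.negSucc n => ncPi L k (ncPA L k (n + 1) p.1)

lemma ncP_pos (L : Type) [Field L] (k : ℕ) (i : ZMod k) (n : ℕ) :
    ncP L k (i, (n : ℤ)) = ncPi L k (ncPB L k n i) := rfl

lemma ncP_neg (L : Type) [Field L] (k : ℕ) (i : ZMod k) (n : ℕ) :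
    ncP L k (i, -(n : ℤ)) = ncPi L k (ncPA L k n i) := by
  cases n with
  | zero => rfl
  | succ n => rfl

section relations

variable {L : Type} [Field L] {k : ℕ}

lemma ncPi_EE (i j : ZMod k) : ncPi L k (ncE L k i) * ncPi L k (ncE L k j) =
    if i = j then ncPi L k (ncE L k i) else 0 := by
  rw [← map_mul, ncPi_rel (NCRel.ee i j), apply_ite (ncPi L k), map_zero]

lemma ncPi_A_eq (i : ZMod k) : ncPi L k (ncA L k i) =
    ncPi L k (ncE L k (i + 1)) * ncPi L k (ncA L k i) * ncPi L k (ncE L k i) := by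
  rw [← map_mul, ← map_mul, ← ncPi_rel (NCRel.aspan i)]

lemma ncPi_B_eq (i : ZMod k) : ncPi L k (ncB L k i) =
    ncPi L k (ncE L k i) * ncPi L k (ncB L k i) * ncPi L k (ncE L k (i + 1)) := by
  rw [← map_mul, ← map_mul, ← ncPi_rel (NCRel.bspan i)]

lemma ncPi_E_A (i : ZMod k) : ncPi L k (ncE L k (i + 1)) * ncPi L k (ncA L k i) =
    ncPi L k (ncA L k i) := by
  rw [ncPi_A_eq, ← mul_assoc, ← mul_assoc, ncPi_EE, if_pos rfl]

lemma ncPi_A_E (i : ZMod k) : ncPi L k (ncA L k i) * ncPi L k (ncE L k i) =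
    ncPi L k (ncA L k i) := by
  rw [ncPi_A_eq, mul_assoc, ncPi_EE, if_pos rfl]

lemma ncPi_E_B (i : ZMod k) : ncPi L k (ncE L k i) * ncPi L k (ncB L k i) =
    ncPi L k (ncB L k i) := by
  rw [ncPi_B_eq, ← mul_assoc, ← mul_assoc, ncPi_EE, if_pos rfl]

lemma ncPi_B_E (i : ZMod k) : ncPi L k (ncB L k i) * ncPi L k (ncE L k (i + 1)) =
    ncPi L k (ncB L k i) := by
  rw [ncPi_B_eq, mul_assoc, ncPi_EE, if_pos rfl]

lemma ncPi_E_PB (n : ℕ) (i : ZMod k) :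
    ncPi L k (ncE L k i) * ncPi L k (ncPB L k n i) = ncPi L k (ncPB L k n i) := by
  cases n with
  | zero => rw [ncPB, ncPi_EE, if_pos rfl]
  | succ n => rw [ncPB, map_mul, ← mul_assoc, ncPi_E_B]

lemma ncPi_E_PA (n : ℕ) (i : ZMod k) :
    ncPi L k (ncE L k i) * ncPi L k (ncPA L k n i) = ncPi L k (ncPA L k n i) := by
  cases n with
  | zero => rw [ncPA, ncPi_EE, if_pos rfl]
  | succ n =>
    have h := ncPi_E_A (L := L) (i - 1)
    rw [sub_add_cancel] at h
    rw [ncPA, map_mul, ← mul_assoc, h]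

lemma ncE_mul_ncP (j : ZMod k) (p : ZMod k × ℤ) :
    ncPi L k (ncE L k j) * ncP L k p = if j = p.1 then ncP L k p else 0 := by
  have h : ncPi L k (ncE L k p.1) * ncP L k p = ncP L k p := by
    rcases p with ⟨i, d⟩
    rcases Int.eq_nat_or_neg d with ⟨n, rfl | rfl⟩
    · rw [ncP_pos, ncPi_E_PB]
    · rw [ncP_neg, ncPi_E_PA]
  rw [← h, ← mul_assoc, ncPi_EE]
  split_ifs with h1
  · rw [h1]
  · rw [zero_mul]

/-- `ncPB` ends in a vertex idempotent, so it is not literally an `NCPath`; in `N_L(k)` the idempotent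
is absorbed, and a nontrivial straight `b`-path is the class of a path in the quiver. -/
lemma ncPB_path (n : ℕ) (i : ZMod k) : ∃ x, NCPath L k i (i + (n + 1 : ℕ)) x ∧
    ncPi L k (ncPB L k (n + 1) i) = ncPi L k x := by
  induction n generalizing i with
  | zero =>
    refine ⟨_, by simpa using NCPath.b i, ?_⟩
    rw [ncPB, ncPB, map_mul, ncPi_B_E]
  | succ n ih =>
    obtain ⟨x, hx, h⟩ := ih (i + 1)
    refine ⟨ncB L k i * x, ?_, ?_⟩
    · have := NCPath.comp (NCPath.b i) hx
      convert this using 1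
      push_cast
      ring
    · rw [ncPB, map_mul, h, map_mul]

/-- The analogue of `ncPB_path` for straight `a`-paths. -/
lemma ncPA_path (n : ℕ) (i : ZMod k) : ∃ x, NCPath L k i (i - (n + 1 : ℕ)) x ∧
    ncPi L k (ncPA L k (n + 1) i) = ncPi L k x := by
  induction n generalizing i with
  | zero =>
    have h := NCPath.a (L := L) (i - 1)
    rw [sub_add_cancel] at h
    refine ⟨ncA L k (i - 1), by simpa using h, ?_⟩
    rw [ncPA, ncPA, map_mul, ncPi_A_E]
  | succ n ih =>
    obtain ⟨x, hx, h⟩ := ih (i - 1)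
    refine ⟨ncA L k (i - 1) * x, ?_, ?_⟩
    · have := NCPath.comp (NCPath.a (i - 1)) hx
      convert this using 1
      · ring
      · push_cast
        ring
    · rw [ncPA, map_mul, h, map_mul]

lemma ncPB_k [NeZero k] (i : ZMod k) : ncPi L k (ncPB L k k i) = 0 := by
  obtain ⟨n, hn⟩ := Nat.exists_eq_succ_of_ne_zero (NeZero.ne k)
  obtain ⟨x, hx, h⟩ := ncPB_path (L := L) n i
  rw [← Nat.succ_eq_add_one, ← hn] at hx h
  rw [h, ← map_zero (ncPi L k)]
  exact ncPi_rel (NCRel.cyc i x (by simpa using hx))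

lemma ncPA_k [NeZero k] (i : ZMod k) : ncPi L k (ncPA L k k i) = 0 := by
  obtain ⟨n, hn⟩ := Nat.exists_eq_succ_of_ne_zero (NeZero.ne k)
  obtain ⟨x, hx, h⟩ := ncPA_path (L := L) n i
  rw [← Nat.succ_eq_add_one, ← hn] at hx h
  rw [h, ← map_zero (ncPi L k)]
  exact ncPi_rel (NCRel.cyc i x (by simpa using hx))

lemma ncPi_AB (i : ZMod k) : ncPi L k (ncA L k i) * ncPi L k (ncB L k i) = 0 := by
  rw [← map_mul, ← map_zero (ncPi L k)]
  exact ncPi_rel (NCRel.cyc _ _ (NCPath.comp (NCPath.a i) (NCPath.b i)))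

lemma ncPi_BA (i : ZMod k) : ncPi L k (ncB L k i) * ncPi L k (ncA L k i) = 0 := by
  rw [← map_mul, ← map_zero (ncPi L k)]
  exact ncPi_rel (NCRel.cyc _ _ (NCPath.comp (NCPath.b i) (NCPath.a i)))

end relations

/-! ### The basis of straight paths -/

/-- The index set of the basis: straight paths of length less than `k`. -/
abbrev NCI (k : ℕ) := ZMod k × Finset.Ioo (-(k : ℤ)) k

/-- The straight paths of length less than `k`, as elements of `N_L(k)`. -/
def ncFam (L : Type) [Field L] (k : ℕ) (p : NCI k) : NC L k := ncP L k (p.1, p.2)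

lemma ncP_mem (L : Type) [Field L] (k : ℕ) [NeZero k] (i : ZMod k) (d : ℤ) (hd : |d| ≤ k) :
    ncP L k (i, d) ∈ Submodule.span L (Set.range (ncFam L k)) := by
  rcases hd.lt_or_eq with h | h
  · exact Submodule.subset_span ⟨(i, ⟨d, Finset.mem_Ioo.2 (abs_lt.1 h)⟩), rfl⟩
  · rcases Int.eq_nat_or_neg d with ⟨n, rfl | rfl⟩
    · obtain rfl : n = k := by simpa using h
      rw [ncP_pos, ncPB_k]
      exact zero_mem _
    · obtain rfl : n = k := by simpa using h
      rw [ncP_neg, ncPA_k]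
      exact zero_mem _

lemma ncB_mul_mem (L : Type) [Field L] (k : ℕ) [NeZero k] (j : ZMod k) (p : NCI k) :
    ncPi L k (ncB L k j) * ncFam L k p ∈ Submodule.span L (Set.range (ncFam L k)) := by
  rcases p with ⟨i, d, hd⟩
  rw [ncFam, ← ncPi_B_E, mul_assoc, ncE_mul_ncP]
  dsimp only
  rw [Finset.mem_Ioo] at hd
  split_ifs with h
  · subst h
    rcases Int.eq_nat_or_neg d with ⟨n, rfl | rfl⟩
    · have := ncP_mem L k j ((n + 1 : ℕ) : ℤ) (by rw [abs_le]; omega)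
      rwa [ncP_pos, ncPB, map_mul] at this
    · cases n with
      | zero =>
        have := ncP_mem L k j ((0 + 1 : ℕ) : ℤ) (by rw [abs_le]; omega)
        rwa [ncP_pos, ncPB, map_mul] at this
      | succ n =>
        rw [ncP_neg, ncPA, add_sub_cancel_right, map_mul, ← mul_assoc, ncPi_BA, zero_mul]
        exact zero_mem _
  · rw [mul_zero]
    exact zero_mem _

lemma ncA_mul_mem (L : Type) [Field L] (k : ℕ) [NeZero k] (j : ZMod k) (p : NCI k) :
    ncPi L k (ncA L k j) * ncFam L k p ∈ Submodule.span L (Set.range (ncFam L k)) := by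
  rcases p with ⟨i, d, hd⟩
  rw [ncFam, ← ncPi_A_E, mul_assoc, ncE_mul_ncP]
  dsimp only
  rw [Finset.mem_Ioo] at hd
  split_ifs with h
  · subst h
    rcases Int.eq_nat_or_neg d with ⟨n, rfl | rfl⟩
    · cases n with
      | zero =>
        have := ncP_mem L k (j + 1) (-((0 + 1 : ℕ) : ℤ)) (by rw [abs_le]; omega)
        rwa [ncP_neg, ncPA, map_mul, add_sub_cancel_right] at this
      | succ n =>
        rw [ncP_pos, ncPB, map_mul, ← mul_assoc, ncPi_AB, zero_mul]
        exact zero_mem _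
    · have := ncP_mem L k (j + 1) (-((n + 1 : ℕ) : ℤ)) (by rw [abs_le]; omega)
      rwa [ncP_neg, ncPA, map_mul, add_sub_cancel_right, ← ncP_neg] at this
  · rw [mul_zero]
    exact zero_mem _

lemma ncE_mul_mem (L : Type) [Field L] (k : ℕ) (j : ZMod k) (p : NCI k) :
    ncPi L k (ncE L k j) * ncFam L k p ∈ Submodule.span L (Set.range (ncFam L k)) := by
  rw [ncFam, ncE_mul_ncP]
  split_ifs with h
  · exact Submodule.subset_span ⟨p, rfl⟩
  · exact zero_mem _

lemma ncFam_span_mul (L : Type) [Field L] (k : ℕ) [NeZero k]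
    (x : FreeAlgebra L (Fin 3 × ZMod k)) (y : NC L k)
    (hy : y ∈ Submodule.span L (Set.range (ncFam L k))) :
    ncPi L k x * y ∈ Submodule.span L (Set.range (ncFam L k)) := by
  induction x using FreeAlgebra.induction generalizing y with
  | grade0 r =>
    rw [AlgHom.commutes, ← Algebra.smul_def]
    exact Submodule.smul_mem _ _ hy
  | grade1 g =>
    induction hy using Submodule.span_induction with
    | mem y hy =>
      obtain ⟨p, rfl⟩ := hy
      rcases g with ⟨t, j⟩
      fin_cases t
      · exact ncE_mul_mem L k j p
      · exact ncA_mul_mem L k j p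
      · exact ncB_mul_mem L k j p
    | zero => rw [mul_zero]; exact zero_mem _
    | add y z _ _ h1 h2 => rw [mul_add]; exact add_mem h1 h2
    | smul c y _ h => rw [mul_smul_comm]; exact Submodule.smul_mem _ _ h
  | mul a b ha hb => rw [map_mul, mul_assoc]; exact ha _ (hb _ hy)
  | add a b ha hb => rw [map_add, add_mul]; exact add_mem (ha _ hy) (hb _ hy)

lemma ncFam_span (L : Type) [Field L] (k : ℕ) [NeZero k] :
    ⊤ ≤ Submodule.span L (Set.range (ncFam L k)) := by
  intro y _
  obtain ⟨x, rfl⟩ : ∃ x, ncPi L k x = y := RingQuot.mkAlgHom_surjective L (NCRel L k) y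
  rw [← mul_one (ncPi L k x)]
  apply ncFam_span_mul
  rw [← map_one (ncPi L k), ← ncPi_rel NCRel.unit, finsum_eq_sum_of_fintype, map_sum]
  exact sum_mem fun i _ => ncP_mem L k i ((0 : ℕ) : ℤ) (by simp)

/-- Applying `N_L(k)` to the vector `∑ i, (i, 0)`, which corresponds to the unit of the algebra. -/
def ncEval (L : Type) [Field L] (k : ℕ) [NeZero k] : NC L k →ₗ[L] NCV L k :=
  (LinearMap.applyₗ (∑ i : ZMod k, Finsupp.single (i, (0 : ℤ)) (1 : L))) ∘ₗ
    (ncRep L k).toLinearMap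

lemma ncEval_pi (L : Type) [Field L] (k : ℕ) [NeZero k] (x : FreeAlgebra L (Fin 3 × ZMod k)) :
    ncEval L k (ncPi L k x) =
      ncPhi L k x (∑ i : ZMod k, Finsupp.single (i, (0 : ℤ)) (1 : L)) := by
  simp [ncEval, ncRep_pi]

lemma ncEval_E (L : Type) [Field L] (k : ℕ) [NeZero k] (i : ZMod k) :
    ncEval L k (ncPi L k (ncE L k i)) = Finsupp.single (i, 0) 1 := by
  rw [ncEval_pi, ncPhi_E, map_sum]
  simp [ncRepE_single]

lemma ncEval_PB (L : Type) [Field L] (k : ℕ) [NeZero k] (n : ℕ) (hn : n < k) (i : ZMod k) :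
    ncEval L k (ncPi L k (ncPB L k n i)) = Finsupp.single (i, (n : ℤ)) 1 := by
  induction n generalizing i with
  | zero => exact ncEval_E L k i
  | succ n ih =>
    have := ih (by omega) (i + 1)
    rw [ncEval_pi] at this
    rw [ncEval_pi, ncPB, map_mul, Module.End.mul_apply, this, ncPhi_B, ncT_single, if_pos]
    · push_cast; rfl
    · refine ⟨by simp, by simp, ?_⟩
      dsimp only
      rw [abs_lt]
      omega

lemma ncEval_PA (L : Type) [Field L] (k : ℕ) [NeZero k] (n : ℕ) (hn : n < k) (i : ZMod k) :
    ncEval L k (ncPi L k (ncPA L k n i)) = Finsupp.single (i, -(n : ℤ)) 1 := by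
  induction n generalizing i with
  | zero => exact ncEval_E L k i
  | succ n ih =>
    have := ih (by omega) (i - 1)
    rw [ncEval_pi] at this
    rw [ncEval_pi, ncPA, map_mul, Module.End.mul_apply, this, ncPhi_A, ncT_single,
      sub_add_cancel, if_pos]
    · push_cast
      congr 2
      ring
    · refine ⟨by simp [sub_eq_add_neg], by simp, ?_⟩
      dsimp only
      rw [abs_lt]
      omega

lemma ncEval_fam (L : Type) [Field L] (k : ℕ) [NeZero k] (p : NCI k) :
    ncEval L k (ncFam L k p) = Finsupp.single (p.1, (p.2 : ℤ)) 1 := by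
  rcases p with ⟨i, d, hd⟩
  rw [Finset.mem_Ioo] at hd
  rw [ncFam]
  dsimp only
  rcases Int.eq_nat_or_neg d with ⟨n, rfl | rfl⟩
  · rw [ncP_pos, ncEval_PB L k n (by omega)]
  · rw [ncP_neg, ncEval_PA L k n (by omega)]

lemma ncFam_linearIndependent (L : Type) [Field L] (k : ℕ) [NeZero k] :
    LinearIndependent L (ncFam L k) := by
  apply LinearIndependent.of_comp (ncEval L k)
  have h := (Finsupp.linearIndependent_single_one L (ZMod k × ℤ)).comp
    (fun p : NCI k => (p.1, (p.2 : ℤ)))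
    (fun p q h => by
      simp only [Prod.mk.injEq] at h
      exact Prod.ext h.1 (Subtype.ext h.2))
  convert h using 1
  funext p
  exact ncEval_fam L k p

theorem statement_16 (L : Type) [Field L] (k : ℕ) (hk : 1 ≤ k) :
    Module.rank L (NC L k) = ((k * (2 * k - 1) : ℕ) : Cardinal) := by
  have : NeZero k := ⟨by omega⟩
  rw [rank_eq_card_basis (Module.Basis.mk (ncFam_linearIndependent L k) (ncFam_span L k))]
  congr 1
  rw [Fintype.card_prod, ZMod.card, Fintype.card_coe, Int.card_Ioo]
  congr 1
  omega
end
end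

section
/- There is an isomorphism of L-algebras υ : N_L(n) → C_L(n) which sends Σ_{k=1}^n b_k ↦ X (i.e. X is the image of the sum of the arrows b_k), Σ_{k=1}^n a_k ↦ Y, and Σ_{k=1}^n ζ^{n−k} e_k ↦ g, where e_k are the vertex idempotents of N_L(n). In particular N_L(n) ≅ C_L(n). -/
/-!
The element `g` satisfies `g ^ n = 1`, and `n` is invertible in `L`, so finite Fourier inversion on
`ℤ/nℤ` turns `g` into the complete family of orthogonal idempotents
`E_i = n⁻¹ ∑_j ζ^{ij} g^j` (`fourierIdem`), for which `g = ∑_i ζ^{-i} E_i`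
(`fourierIdem_mul_fourierIdem`, `sum_fourierIdem`, `sum_smul_fourierIdem`).  The commutation rules
`gX = ζXg` and `gY = ζ⁻¹Yg` become `E_i X = X E_{i+1}` and `E_{i+1} Y = Y E_i`
(`fourierIdem_mul_of_comm`), so that `E_i X` and `Y E_i` behave like the arrows `b_i` and `a_i`.

* The map `N_L(n) → C_L(n)`, `e_i ↦ E_i`, `b_i ↦ E_i X`, `a_i ↦ Y E_i`, is well defined because a
  path from `i` to `j` goes to `0` (if both kinds of arrows occur in it), to `E_i X^m` with
  `j = i + m`, or to `Y^m E_j` with `i = j + m` (`pathImage`); when `i = j` the length `m > 0` is a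
  multiple of `n`, so `X^m = Y^m = 0`.
* The map `C_L(n) → N_L(n)`, `X ↦ ∑ b_i`, `Y ↦ ∑ a_i`, `g ↦ ∑ ζ^{-i} e_i`, is well defined because
  `e_i B^n` and `A^n e_i` are cycles, for `B = ∑ b_i` and `A = ∑ a_i`, as are `b_i a_i` and
  `a_i b_i`.

The two maps are mutually inverse on generators; the only computation left is that the Fourier
idempotents of `∑ ζ^{-i} e_i` are the `e_i` (`fourierIdem_eq`).
-/

/-!
The no-cycle algebra `N_L(k)`: let `Q` be the quiver with vertex set `ℤ/kℤ` and, for each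
`i ∈ ℤ/kℤ`, arrows `a_i : i+1 → i` and `b_i : i → i+1`.  `N_L(k)` is the quotient of the
path algebra `LQ` by the two-sided ideal generated by all paths of positive length that
start and end at the same vertex.

We realise the path algebra by generators and relations: generators are the vertex
idempotents `e_i` and the arrows `a_i`, `b_i` (as the free algebra on `Fin 3 × ZMod k`,
with `(0, i) ↦ e_i`, `(1, i) ↦ a_i`, `(2, i) ↦ b_i`), subject to the relations
`e_i e_j = δ_{ij} e_i`, `Σ_i e_i = 1`, `a_i = e_{i+1} a_i e_i`, `b_i = e_i b_i e_{i+1}`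
(products of paths are read left to right), together with the relation `x = 0` for every
path `x` of positive length starting and ending at the same vertex.
-/

noncomputable section

/-!
The skew coinvariant algebra `C_L(n) = (L[X,Y]/(X^n, XY, Y^n)) ⋊ ℤ/nℤ`: the associative
unital `L`-algebra with generators `X, Y, g` and relations `X^n = 0`, `Y^n = 0`, `XY = 0`,
`YX = 0`, `g^n = 1`, `gX = ζXg`, `gY = ζ⁻¹Yg`.  We realise it as a `RingQuot` of the free
algebra on three generators (`0 ↦ X`, `1 ↦ Y`, `2 ↦ g`).
-/

/-- the generator `X` of the free algebra `L⟨X,Y,g⟩` -/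
def cX (L : Type) [Field L] : FreeAlgebra L (Fin 3) := FreeAlgebra.ι L 0

/-- the generator `Y` of the free algebra `L⟨X,Y,g⟩` -/
def cY (L : Type) [Field L] : FreeAlgebra L (Fin 3) := FreeAlgebra.ι L 1

/-- the generator `g` of the free algebra `L⟨X,Y,g⟩` -/
def cG (L : Type) [Field L] : FreeAlgebra L (Fin 3) := FreeAlgebra.ι L 2

/-- The defining relations of the skew coinvariant algebra `C_L(n)`. -/
inductive CRel (L : Type) [Field L] (n : ℕ) (ζ : L) :
    FreeAlgebra L (Fin 3) → FreeAlgebra L (Fin 3) → Prop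
  | xn : CRel L n ζ (cX L ^ n) 0
  | yn : CRel L n ζ (cY L ^ n) 0
  | xy : CRel L n ζ (cX L * cY L) 0
  | yx : CRel L n ζ (cY L * cX L) 0
  | gn : CRel L n ζ (cG L ^ n) 1
  | gx : CRel L n ζ (cG L * cX L) (algebraMap L _ ζ * (cX L * cG L))
  | gy : CRel L n ζ (cG L * cY L) (algebraMap L _ ζ⁻¹ * (cY L * cG L))

/-- the skew coinvariant algebra `C_L(n)` -/
abbrev CL (L : Type) [Field L] (n : ℕ) (ζ : L) := RingQuot (CRel L n ζ)

/-! ### Fourier idempotents of an element of order dividing `n` -/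

section Fourier

variable {L A : Type} [Field L] [Semiring A] [Algebra L A] {n : ℕ} [NeZero n] {ζ : L}

/-- The character `i ↦ ζ ^ i` of `ℤ/nℤ`. -/
abbrev zchar (hζ : IsPrimitiveRoot ζ n) : AddChar (ZMod n) L :=
  AddChar.zmodChar n hζ.pow_eq_one

/-- The element `n⁻¹ ∑_j ζ^{ij} g^j`.  When `g ^ n = 1` it is the idempotent projecting onto the
`ζ^{-i}`-eigenspace of multiplication by `g`. -/
def fourierIdem (hζ : IsPrimitiveRoot ζ n) (g : A) (i : ZMod n) : A :=
  (n : L)⁻¹ • ∑ j : ZMod n, zchar hζ (i * j) • g ^ j.val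

theorem natCast_ne_zero_of_prim (hζ : IsPrimitiveRoot ζ n) : (n : L) ≠ 0 :=
  hζ.neZero'.out

theorem sum_zchar_mul (hζ : IsPrimitiveRoot ζ n) (b : ZMod n) :
    ∑ x : ZMod n, zchar hζ (x * b) = if b = 0 then (n : L) else 0 := by
  have := AddChar.sum_mulShift b (AddChar.zmodChar_primitive_of_primitive_root n hζ)
  rw [this, ZMod.card]
  split_ifs <;> simp

theorem zchar_one (hζ : IsPrimitiveRoot ζ n) : zchar hζ 1 = ζ := by
  have := AddChar.zmodChar_apply' (n := n) hζ.pow_eq_one 1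
  simpa using this

theorem zchar_neg_one (hζ : IsPrimitiveRoot ζ n) : zchar hζ (-1) = ζ⁻¹ := by
  rw [AddChar.map_neg_eq_inv, zchar_one]

theorem zchar_neg (hζ : IsPrimitiveRoot ζ n) (i : ZMod n) :
    zchar hζ (-i) = ζ ^ (n - i.val) := by
  rw [← AddChar.zmodChar_apply' (n := n) hζ.pow_eq_one, Nat.cast_sub (ZMod.val_lt i).le]
  simp

theorem zchar_pow_val (hζ : IsPrimitiveRoot ζ n) (c k : ZMod n) :
    zchar hζ c ^ k.val = zchar hζ (c * k) := by
  rw [← AddChar.map_nsmul_eq_pow, nsmul_eq_mul, ZMod.natCast_zmod_val, mul_comm]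

theorem pow_val_add {g : A} (hg : g ^ n = 1) (i j : ZMod n) :
    g ^ (i + j).val = g ^ i.val * g ^ j.val := by
  rw [ZMod.val_add, ← pow_eq_pow_mod _ hg, pow_add]

theorem fourierIdem_mul_pow (hζ : IsPrimitiveRoot ζ n) {g : A} (hg : g ^ n = 1) (i j : ZMod n) :
    fourierIdem hζ g i * g ^ j.val = zchar hζ (-(i * j)) • fourierIdem hζ g i := by
  unfold fourierIdem
  rw [smul_mul_assoc, smul_comm]
  congr 1
  conv_rhs => rw [← Equiv.sum_comp (Equiv.addRight j)]
  rw [Finset.sum_mul, Finset.smul_sum]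
  refine Finset.sum_congr rfl fun k _ => ?_
  rw [Equiv.coe_addRight, pow_val_add hg, smul_mul_assoc, smul_smul, ← AddChar.map_add_eq_mul]
  congr 2
  ring

theorem fourierIdem_mul_fourierIdem (hζ : IsPrimitiveRoot ζ n) {g : A} (hg : g ^ n = 1)
    (i j : ZMod n) :
    fourierIdem hζ g i * fourierIdem hζ g j = if i = j then fourierIdem hζ g i else 0 := by
  have h : ∑ k : ZMod n, fourierIdem hζ g i * (zchar hζ (j * k) • g ^ k.val) =
      (∑ k : ZMod n, zchar hζ (k * (j - i))) • fourierIdem hζ g i := by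
    rw [Finset.sum_smul]
    refine Finset.sum_congr rfl fun k _ => ?_
    rw [mul_smul_comm, fourierIdem_mul_pow hζ hg, smul_smul, ← AddChar.map_add_eq_mul]
    congr 2
    ring
  conv_lhs => rw [fourierIdem.eq_1 hζ g j]
  rw [mul_smul_comm, Finset.mul_sum, h, sum_zchar_mul]
  by_cases hij : i = j
  · subst hij
    simp [smul_smul, natCast_ne_zero_of_prim hζ]
  · rw [if_neg (sub_ne_zero.2 (Ne.symm hij)), if_neg hij]
    simp

theorem sum_fourierIdem (hζ : IsPrimitiveRoot ζ n) (g : A) :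
    ∑ i, fourierIdem hζ g i = 1 := by
  unfold fourierIdem
  rw [← Finset.smul_sum, Finset.sum_comm]
  simp_rw [← Finset.sum_smul, sum_zchar_mul, ite_smul, zero_smul]
  simp [smul_smul, natCast_ne_zero_of_prim hζ]

theorem sum_smul_fourierIdem (hζ : IsPrimitiveRoot ζ n) {g : A} (hg : g ^ n = 1) :
    ∑ i, zchar hζ (-i) • fourierIdem hζ g i = g := by
  have h1 : g ^ (1 : ZMod n).val = g := by
    have h := ZMod.val_natCast n 1
    rw [Nat.cast_one] at h
    rw [h, ← pow_eq_pow_mod _ hg, pow_one]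
  have h (i : ZMod n) : zchar hζ (-i) • fourierIdem hζ g i = fourierIdem hζ g i * g := by
    have := fourierIdem_mul_pow hζ hg i 1
    rw [h1, mul_one] at this
    exact this.symm
  simp_rw [h]
  rw [← Finset.sum_mul, sum_fourierIdem, one_mul]

/-- An element commuting with `g` up to the scalar `ζ^c` shifts the Fourier idempotents of `g`
by `c`. -/
theorem fourierIdem_mul_of_comm (hζ : IsPrimitiveRoot ζ n) {g x : A} (c : ZMod n)
    (h : g * x = zchar hζ c • (x * g)) (i : ZMod n) :
    fourierIdem hζ g i * x = x * fourierIdem hζ g (i + c) := by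
  have hpow (m : ℕ) : g ^ m * x = zchar hζ c ^ m • (x * g ^ m) := by
    induction m with
    | zero => simp
    | succ m ih =>
      rw [pow_succ, mul_assoc, h, mul_smul_comm, ← mul_assoc, ih, smul_mul_assoc, smul_smul,
        mul_assoc, ← pow_succ, ← pow_succ']
  unfold fourierIdem
  rw [smul_mul_assoc, mul_smul_comm, Finset.sum_mul, Finset.mul_sum]
  congr 1
  refine Finset.sum_congr rfl fun k _ => ?_
  rw [smul_mul_assoc, mul_smul_comm, hpow, smul_smul, zchar_pow_val, ← AddChar.map_add_eq_mul,
    add_mul]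

theorem sum_smul_pow {e : ZMod n → A}
    (he : ∀ i j, e i * e j = if i = j then e i else 0)
    (hsum : ∑ i, e i = 1) (c : ZMod n → L) (m : ℕ) :
    (∑ k, c k • e k) ^ m = ∑ k, c k ^ m • e k := by
  induction m with
  | zero => simp [hsum]
  | succ m ih =>
    rw [pow_succ, ih, Finset.sum_mul]
    refine Finset.sum_congr rfl fun k _ => ?_
    rw [Finset.mul_sum]
    simp [he, smul_smul, pow_succ, mul_comm]

/-- A complete orthogonal family `e` is recovered as the Fourier idempotents of
`∑ ζ^{-k} e_k`. -/
theorem fourierIdem_eq {e : ZMod n → A}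
    (he : ∀ i j, e i * e j = if i = j then e i else 0)
    (hsum : ∑ i, e i = 1) (hζ : IsPrimitiveRoot ζ n) (i : ZMod n) :
    fourierIdem hζ (∑ k, zchar hζ (-k) • e k) i = e i := by
  unfold fourierIdem
  simp_rw [sum_smul_pow he hsum, Finset.smul_sum]
  rw [Finset.sum_comm]
  have h (k : ZMod n) : ∑ j : ZMod n,
      (n : L)⁻¹ • zchar hζ (i * j) • zchar hζ (-k) ^ j.val • e k =
        ((n : L)⁻¹ * if i - k = 0 then (n : L) else 0) • e k := by
    rw [← sum_zchar_mul hζ, Finset.mul_sum, Finset.sum_smul]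
    refine Finset.sum_congr rfl fun j _ => ?_
    rw [zchar_pow_val, smul_smul, smul_smul, mul_assoc, ← AddChar.map_add_eq_mul]
    congr 3
    ring
  simp_rw [h, sub_eq_zero]
  simp [natCast_ne_zero_of_prim hζ]

theorem eq_zero_of_idem_mul {e : ZMod n → A} (hsum : ∑ i, e i = 1) {y : A}
    (h : ∀ i, e i * y = 0) : y = 0 := by
  rw [← one_mul y, ← hsum, Finset.sum_mul]
  simp [h]

end Fourier

/-! ### The no-cycle algebra -/

section NoCycle

variable (L : Type) [Field L] (n : ℕ)

/-- The vertex idempotent `e_i` of `N_L(n)`. -/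
def nE (i : ZMod n) : NC L n := RingQuot.mkAlgHom L (NCRel L n) (ncE L n i)

/-- The arrow `a_i` of `N_L(n)`. -/
def nA (i : ZMod n) : NC L n := RingQuot.mkAlgHom L (NCRel L n) (ncA L n i)

/-- The arrow `b_i` of `N_L(n)`. -/
def nB (i : ZMod n) : NC L n := RingQuot.mkAlgHom L (NCRel L n) (ncB L n i)

theorem nE_mul (i j : ZMod n) : nE L n i * nE L n j = if i = j then nE L n i else 0 := by
  have := RingQuot.mkAlgHom_rel L (NCRel.ee (L := L) i j)
  rw [map_mul] at this
  rw [nE, nE, this]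
  split_ifs <;> simp

theorem nA_eq (i : ZMod n) : nA L n i = nE L n (i + 1) * nA L n i * nE L n i := by
  simpa only [nE, nA, nB, map_mul] using RingQuot.mkAlgHom_rel L (NCRel.aspan (L := L) i)

theorem nB_eq (i : ZMod n) : nB L n i = nE L n i * nB L n i * nE L n (i + 1) := by
  simpa only [nE, nA, nB, map_mul] using RingQuot.mkAlgHom_rel L (NCRel.bspan (L := L) i)

theorem cycle_eq_zero {i : ZMod n} {x : FreeAlgebra L (Fin 3 × ZMod n)} (h : NCPath L n i i x) :
    RingQuot.mkAlgHom L (NCRel L n) x = 0 := by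
  simpa only [map_zero] using RingQuot.mkAlgHom_rel L (NCRel.cyc i x h)

theorem nA_mul_nB (i : ZMod n) : nA L n i * nB L n i = 0 := by
  simpa only [nE, nA, nB, map_mul] using cycle_eq_zero L n (.comp (.a i) (.b i))

theorem nB_mul_nA (i : ZMod n) : nB L n i * nA L n i = 0 := by
  simpa only [nE, nA, nB, map_mul] using cycle_eq_zero L n (.comp (.b i) (.a i))

theorem nE_mul_nB (i j : ZMod n) : nE L n i * nB L n j = if i = j then nB L n j else 0 := by
  rw [nB_eq, ← mul_assoc, ← mul_assoc, nE_mul]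
  split_ifs with h <;> simp [h]

theorem nB_mul_nE (i j : ZMod n) : nB L n j * nE L n i = if j + 1 = i then nB L n j else 0 := by
  rw [nB_eq, mul_assoc, nE_mul]
  split_ifs with h <;> simp

theorem nE_mul_nA (i j : ZMod n) : nE L n i * nA L n j = if i = j + 1 then nA L n j else 0 := by
  rw [nA_eq, ← mul_assoc, ← mul_assoc, nE_mul]
  split_ifs with h <;> simp [h]

theorem nA_mul_nE (i j : ZMod n) : nA L n j * nE L n i = if j = i then nA L n j else 0 := by
  rw [nA_eq, mul_assoc, nE_mul]
  split_ifs with h <;> simp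

variable [NeZero n]

theorem sum_nE : ∑ i, nE L n i = 1 := by
  have := RingQuot.mkAlgHom_rel L (NCRel.unit (L := L) (k := n))
  rwa [finsum_eq_sum_of_fintype, map_sum, map_one] at this

/-- The sum of the arrows `b_i`. -/
def sB : NC L n := ∑ i, nB L n i

/-- The sum of the arrows `a_i`. -/
def sA : NC L n := ∑ i, nA L n i

theorem nE_mul_sB (i : ZMod n) : nE L n i * sB L n = nB L n i := by
  simp [sB, Finset.mul_sum, nE_mul_nB]

theorem sB_mul_nE (i : ZMod n) : sB L n * nE L n (i + 1) = nB L n i := by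
  simp [sB, Finset.sum_mul, nB_mul_nE]

theorem nE_mul_sA (i : ZMod n) : nE L n (i + 1) * sA L n = nA L n i := by
  simp [sA, Finset.mul_sum, nE_mul_nA]

theorem sA_mul_nE (i : ZMod n) : sA L n * nE L n i = nA L n i := by
  simp [sA, Finset.sum_mul, nA_mul_nE]

theorem sB_mul_sA : sB L n * sA L n = 0 := by
  refine eq_zero_of_idem_mul (sum_nE L n) fun i => ?_
  have h : nB L n i = nB L n i * nE L n (i + 1) := by simp [nB_mul_nE]
  rw [← mul_assoc, nE_mul_sB, h, mul_assoc, nE_mul_sA, nB_mul_nA]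

theorem sA_mul_sB : sA L n * sB L n = 0 := by
  refine eq_zero_of_idem_mul (sum_nE L n) fun i => ?_
  obtain ⟨i, rfl⟩ : ∃ j, i = j + 1 := ⟨i - 1, by ring⟩
  have h : nA L n i = nA L n i * nE L n i := by simp [nA_mul_nE]
  rw [← mul_assoc, nE_mul_sA, h, mul_assoc, nE_mul_sB, nA_mul_nB]

/-- `e_i B^{m+1}` is the path `b_i b_{i+1} ⋯ b_{i+m}`. -/
theorem exists_path_sB (m : ℕ) (i : ZMod n) : ∃ x, NCPath L n i (i + (m + 1 : ℕ)) x ∧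
    RingQuot.mkAlgHom L (NCRel L n) x = nE L n i * sB L n ^ (m + 1) := by
  induction m generalizing i with
  | zero =>
    refine ⟨ncB L n i, ?_, ?_⟩
    · simpa using NCPath.b (L := L) i
    · rw [zero_add, pow_one, nE_mul_sB]; rfl
  | succ m ih =>
    obtain ⟨x, hx, hx'⟩ := ih (i + 1)
    refine ⟨ncB L n i * x, ?_, ?_⟩
    · have := NCPath.comp (.b i) hx
      convert this using 1
      push_cast
      ring
    · have h : nB L n i = nB L n i * nE L n (i + 1) := by simp [nB_mul_nE]
      rw [map_mul, hx', ← mul_assoc, pow_succ' _ (m + 1), ← mul_assoc, nE_mul_sB]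
      change nB L n i * _ * _ = _
      rw [← h]

/-- `A^{m+1} e_i` is the path `a_{i+m} ⋯ a_{i+1} a_i`. -/
theorem exists_path_sA (m : ℕ) (i : ZMod n) : ∃ x, NCPath L n (i + (m + 1 : ℕ)) i x ∧
    RingQuot.mkAlgHom L (NCRel L n) x = sA L n ^ (m + 1) * nE L n i := by
  induction m generalizing i with
  | zero =>
    refine ⟨ncA L n i, ?_, ?_⟩
    · simpa using NCPath.a (L := L) i
    · rw [zero_add, pow_one, sA_mul_nE]; rfl
  | succ m ih =>
    obtain ⟨x, hx, hx'⟩ := ih (i + 1)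
    refine ⟨x * ncA L n i, ?_, ?_⟩
    · have := NCPath.comp hx (.a i)
      convert this using 1
      push_cast
      ring
    · have h : nA L n i = nE L n (i + 1) * nA L n i := by simp [nE_mul_nA]
      rw [map_mul, hx', mul_assoc, pow_succ _ (m + 1), mul_assoc _ _ (nE L n i), sA_mul_nE]
      change _ * (_ * nA L n i) = _
      rw [← h]

theorem sB_pow : sB L n ^ n = 0 := by
  refine eq_zero_of_idem_mul (sum_nE L n) fun i => ?_
  obtain ⟨m, hm⟩ := Nat.exists_eq_add_one_of_ne_zero (NeZero.ne n)
  obtain ⟨x, hx, hx'⟩ := exists_path_sB L n m i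
  rw [← hm, ZMod.natCast_self, add_zero] at hx
  rw [← hm] at hx'
  rw [← hx', cycle_eq_zero L n hx]

theorem sA_pow : sA L n ^ n = 0 := by
  rw [← mul_one (sA L n ^ n), ← sum_nE L n, Finset.mul_sum]
  refine Finset.sum_eq_zero fun i _ => ?_
  obtain ⟨m, hm⟩ := Nat.exists_eq_add_one_of_ne_zero (NeZero.ne n)
  obtain ⟨x, hx, hx'⟩ := exists_path_sA L n m i
  rw [← hm, ZMod.natCast_self, add_zero] at hx
  rw [← hm] at hx'
  rw [← hx', cycle_eq_zero L n hx]

variable {L n} {ζ : L}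

/-- The element `∑ ζ^{-i} e_i`, the counterpart of `g` in `N_L(n)`. -/
def sG (hζ : IsPrimitiveRoot ζ n) : NC L n := ∑ i, zchar hζ (-i) • nE L n i

theorem sG_pow (hζ : IsPrimitiveRoot ζ n) : sG hζ ^ n = 1 := by
  rw [sG, sum_smul_pow (nE_mul L n) (sum_nE L n), ← sum_nE L n]
  refine Finset.sum_congr rfl fun i _ => ?_
  rw [← AddChar.map_nsmul_eq_pow]
  simp

theorem sG_mul_sB (hζ : IsPrimitiveRoot ζ n) : sG hζ * sB L n = ζ • (sB L n * sG hζ) := by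
  have h : sG hζ = ∑ i, zchar hζ (-(i + 1)) • nE L n (i + 1) :=
    (Equiv.sum_comp (Equiv.addRight (1 : ZMod n)) fun i => zchar hζ (-i) • nE L n i).symm
  conv_rhs => rw [h]
  rw [sG, Finset.sum_mul, Finset.mul_sum, Finset.smul_sum]
  refine Finset.sum_congr rfl fun i _ => ?_
  rw [smul_mul_assoc, mul_smul_comm, nE_mul_sB, sB_mul_nE, smul_smul]
  nth_rw 2 [← zchar_one hζ]
  rw [← AddChar.map_add_eq_mul]
  congr 2
  ring

theorem sG_mul_sA (hζ : IsPrimitiveRoot ζ n) : sG hζ * sA L n = ζ⁻¹ • (sA L n * sG hζ) := by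
  have h : sG hζ = ∑ i, zchar hζ (-(i + 1)) • nE L n (i + 1) :=
    (Equiv.sum_comp (Equiv.addRight (1 : ZMod n)) fun i => zchar hζ (-i) • nE L n i).symm
  conv_lhs => rw [h]
  rw [sG, Finset.sum_mul, Finset.mul_sum, Finset.smul_sum]
  refine Finset.sum_congr rfl fun i _ => ?_
  rw [smul_mul_assoc, mul_smul_comm, nE_mul_sA, sA_mul_nE, smul_smul, ← zchar_neg_one hζ,
    ← AddChar.map_add_eq_mul]
  congr 2
  ring

end NoCycle

/-! ### The map from the skew coinvariant algebra to the no-cycle algebra -/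

section Psi

variable {L : Type} [Field L] {n : ℕ} [NeZero n] {ζ : L} (hζ : IsPrimitiveRoot ζ n)

/-- The algebra map on the free algebra with `X ↦ ∑ b_i`, `Y ↦ ∑ a_i`, `g ↦ ∑ ζ^{-i} e_i`. -/
def psiFree : FreeAlgebra L (Fin 3) →ₐ[L] NC L n :=
  FreeAlgebra.lift L ![sB L n, sA L n, sG hζ]

theorem psiFree_X : psiFree hζ (cX L) = sB L n := by simp [psiFree, cX]

theorem psiFree_Y : psiFree hζ (cY L) = sA L n := by simp [psiFree, cY]

theorem psiFree_G : psiFree hζ (cG L) = sG hζ := by simp [psiFree, cG]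

theorem psiFree_rel ⦃x y : FreeAlgebra L (Fin 3)⦄ (h : CRel L n ζ x y) :
    psiFree hζ x = psiFree hζ y := by
  cases h with
  | xn => rw [map_pow, psiFree_X, sB_pow, map_zero]
  | yn => rw [map_pow, psiFree_Y, sA_pow, map_zero]
  | xy => rw [map_mul, psiFree_X, psiFree_Y, sB_mul_sA, map_zero]
  | yx => rw [map_mul, psiFree_X, psiFree_Y, sA_mul_sB, map_zero]
  | gn => rw [map_pow, psiFree_G, sG_pow, map_one]
  | gx =>
    rw [map_mul, map_mul, map_mul, psiFree_X, psiFree_G, AlgHom.commutes, ← Algebra.smul_def,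
      sG_mul_sB]
  | gy =>
    rw [map_mul, map_mul, map_mul, psiFree_Y, psiFree_G, AlgHom.commutes, ← Algebra.smul_def,
      sG_mul_sA]

/-- The algebra map `C_L(n) → N_L(n)` with `X ↦ ∑ b_i`, `Y ↦ ∑ a_i`, `g ↦ ∑ ζ^{-i} e_i`. -/
def psi : CL L n ζ →ₐ[L] NC L n :=
  RingQuot.liftAlgHom L ⟨psiFree hζ, psiFree_rel hζ⟩

theorem psi_mk (x : FreeAlgebra L (Fin 3)) :
    psi hζ (RingQuot.mkAlgHom L (CRel L n ζ) x) = psiFree hζ x :=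
  RingQuot.liftAlgHom_mkAlgHom_apply ..

end Psi

/-! ### The map from the no-cycle algebra to the skew coinvariant algebra -/

section Phi

variable {L : Type} [Field L] {n : ℕ} {ζ : L}

variable (L n ζ) in
/-- The generator `X` of `C_L(n)`. -/
def qX : CL L n ζ := RingQuot.mkAlgHom L (CRel L n ζ) (cX L)

variable (L n ζ) in
/-- The generator `Y` of `C_L(n)`. -/
def qY : CL L n ζ := RingQuot.mkAlgHom L (CRel L n ζ) (cY L)

variable (L n ζ) in
/-- The generator `g` of `C_L(n)`. -/
def qG : CL L n ζ := RingQuot.mkAlgHom L (CRel L n ζ) (cG L)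

theorem qX_pow : qX L n ζ ^ n = 0 := by
  simpa only [qX, qY, qG, map_pow, map_zero] using
    RingQuot.mkAlgHom_rel L (CRel.xn (L := L) (n := n) (ζ := ζ))

theorem qY_pow : qY L n ζ ^ n = 0 := by
  simpa only [qX, qY, qG, map_pow, map_zero] using
    RingQuot.mkAlgHom_rel L (CRel.yn (L := L) (n := n) (ζ := ζ))

theorem qX_mul_qY : qX L n ζ * qY L n ζ = 0 := by
  simpa only [qX, qY, qG, map_mul, map_zero] using
    RingQuot.mkAlgHom_rel L (CRel.xy (L := L) (n := n) (ζ := ζ))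

theorem qY_mul_qX : qY L n ζ * qX L n ζ = 0 := by
  simpa only [qX, qY, qG, map_mul, map_zero] using
    RingQuot.mkAlgHom_rel L (CRel.yx (L := L) (n := n) (ζ := ζ))

theorem qG_pow : qG L n ζ ^ n = 1 := by
  simpa only [qX, qY, qG, map_pow, map_one] using
    RingQuot.mkAlgHom_rel L (CRel.gn (L := L) (n := n) (ζ := ζ))

theorem qG_mul_qX : qG L n ζ * qX L n ζ = ζ • (qX L n ζ * qG L n ζ) := by
  rw [Algebra.smul_def]
  simpa only [qX, qY, qG, map_mul, AlgHom.commutes] using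
    RingQuot.mkAlgHom_rel L (CRel.gx (L := L) (n := n) (ζ := ζ))

theorem qG_mul_qY : qG L n ζ * qY L n ζ = ζ⁻¹ • (qY L n ζ * qG L n ζ) := by
  rw [Algebra.smul_def]
  simpa only [qX, qY, qG, map_mul, AlgHom.commutes] using
    RingQuot.mkAlgHom_rel L (CRel.gy (L := L) (n := n) (ζ := ζ))

variable [NeZero n] (hζ : IsPrimitiveRoot ζ n)

/-- The Fourier idempotent `E_i = n⁻¹ ∑_j ζ^{ij} g^j` of `C_L(n)`. -/
def qE (i : ZMod n) : CL L n ζ := fourierIdem hζ (qG L n ζ) i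

theorem qE_mul (i j : ZMod n) : qE hζ i * qE hζ j = if i = j then qE hζ i else 0 :=
  fourierIdem_mul_fourierIdem hζ qG_pow i j

theorem sum_qE : ∑ i, qE hζ i = 1 := sum_fourierIdem hζ _

theorem qE_mul_qX (i : ZMod n) : qE hζ i * qX L n ζ = qX L n ζ * qE hζ (i + 1) :=
  fourierIdem_mul_of_comm hζ 1 (by rw [zchar_one, qG_mul_qX]) i

theorem qE_mul_qY (i : ZMod n) : qE hζ (i + 1) * qY L n ζ = qY L n ζ * qE hζ i := by
  have := fourierIdem_mul_of_comm hζ (g := qG L n ζ) (x := qY L n ζ) (-1)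
    (by rw [zchar_neg_one, qG_mul_qY]) (i + 1)
  rwa [add_neg_cancel_right] at this

theorem qE_mul_qX_pow (i : ZMod n) (m : ℕ) :
    qE hζ i * qX L n ζ ^ m = qX L n ζ ^ m * qE hζ (i + m) := by
  induction m with
  | zero => simp
  | succ m ih =>
    rw [pow_succ, ← mul_assoc, ih, mul_assoc, qE_mul_qX, ← mul_assoc]
    push_cast
    rw [add_assoc]

theorem qE_mul_qY_pow (i : ZMod n) (m : ℕ) :
    qE hζ (i + m) * qY L n ζ ^ m = qY L n ζ ^ m * qE hζ i := by
  induction m with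
  | zero => simp
  | succ m ih =>
    push_cast
    rw [pow_succ', ← mul_assoc, ← add_assoc, qE_mul_qY, mul_assoc, ih, ← mul_assoc]

/-- The algebra map on the free algebra with `e_i ↦ E_i`, `a_i ↦ Y E_i`, `b_i ↦ E_i X`. -/
def phiFree : FreeAlgebra L (Fin 3 × ZMod n) →ₐ[L] CL L n ζ :=
  FreeAlgebra.lift L fun p =>
    ![qE hζ p.2, qY L n ζ * qE hζ p.2, qE hζ p.2 * qX L n ζ] p.1

theorem phiFree_E (i : ZMod n) : phiFree hζ (ncE L n i) = qE hζ i := by simp [phiFree, ncE]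

theorem phiFree_A (i : ZMod n) : phiFree hζ (ncA L n i) = qY L n ζ * qE hζ i := by
  simp [phiFree, ncA]

theorem phiFree_B (i : ZMod n) : phiFree hζ (ncB L n i) = qE hζ i * qX L n ζ := by
  simp [phiFree, ncB]

/-- The image in `C_L(n)` of a path of positive length from `i` to `j`: zero when both kinds of
arrows occur, and otherwise determined by the length. -/
theorem pathImage {i j : ZMod n} {x : FreeAlgebra L (Fin 3 × ZMod n)} (h : NCPath L n i j x) :
    phiFree hζ x = 0 ∨
      (∃ m : ℕ, 0 < m ∧ j = i + m ∧ phiFree hζ x = qE hζ i * qX L n ζ ^ m) ∨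
      (∃ m : ℕ, 0 < m ∧ i = j + m ∧ phiFree hζ x = qY L n ζ ^ m * qE hζ j) := by
  have hXY {p q : ℕ} (hp : 0 < p) (hq : 0 < q) : qX L n ζ ^ p * qY L n ζ ^ q = 0 := by
    obtain ⟨p, rfl⟩ := Nat.exists_eq_add_one_of_ne_zero hp.ne'
    obtain ⟨q, rfl⟩ := Nat.exists_eq_add_one_of_ne_zero hq.ne'
    rw [pow_succ, pow_succ', mul_assoc, ← mul_assoc (qX L n ζ), qX_mul_qY, zero_mul, mul_zero]
  have hYX {p q : ℕ} (hp : 0 < p) (hq : 0 < q) : qY L n ζ ^ p * qX L n ζ ^ q = 0 := by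
    obtain ⟨p, rfl⟩ := Nat.exists_eq_add_one_of_ne_zero hp.ne'
    obtain ⟨q, rfl⟩ := Nat.exists_eq_add_one_of_ne_zero hq.ne'
    rw [pow_succ, pow_succ', mul_assoc, ← mul_assoc (qY L n ζ), qY_mul_qX, zero_mul, mul_zero]
  have hidem (i : ZMod n) : qE hζ i * qE hζ i = qE hζ i := by simp [qE_mul]
  induction h with
  | a i => exact .inr (.inr ⟨1, one_pos, by simp, by simp [phiFree_A]⟩)
  | b i => exact .inr (.inl ⟨1, one_pos, by simp, by simp [phiFree_B]⟩)
  | @comp i j l x y _ _ ihx ihy =>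
    rw [map_mul]
    rcases ihx with hx | ⟨p, hp, hj, hx⟩ | ⟨p, hp, hj, hx⟩
    · left; rw [hx, zero_mul]
    · rcases ihy with hy | ⟨q, hq, hl, hy⟩ | ⟨q, hq, hl, hy⟩
      · left; rw [hy, mul_zero]
      · right; left
        refine ⟨p + q, by omega, by rw [hl, hj]; push_cast; ring, ?_⟩
        rw [hx, hy, hj, ← mul_assoc, mul_assoc (qE hζ i), ← qE_mul_qX_pow, ← mul_assoc, hidem,
          mul_assoc, pow_add]
      · left
        rw [hx, hy, mul_assoc, ← mul_assoc (_ ^ p), hXY hp hq, zero_mul, mul_zero]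
    · rcases ihy with hy | ⟨q, hq, hl, hy⟩ | ⟨q, hq, hl, hy⟩
      · left; rw [hy, mul_zero]
      · left
        rw [hx, hy, mul_assoc, ← mul_assoc (qE hζ j), hidem, qE_mul_qX_pow, ← mul_assoc,
          hYX hp hq, zero_mul]
      · right; right
        refine ⟨p + q, by omega, by rw [hj, hl]; push_cast; ring, ?_⟩
        rw [hx, hy, hl, mul_assoc, ← mul_assoc (qE hζ _), qE_mul_qY_pow, mul_assoc (_ ^ q), hidem,
          ← mul_assoc, pow_add]

theorem phiFree_cycle {i : ZMod n} {x : FreeAlgebra L (Fin 3 × ZMod n)} (h : NCPath L n i i x) :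
    phiFree hζ x = 0 := by
  have hle {m : ℕ} (hm : 0 < m) (h : i = i + m) : n ≤ m :=
    Nat.le_of_dvd hm ((ZMod.natCast_eq_zero_iff m n).1 (left_eq_add.1 h))
  rcases pathImage hζ h with hx | ⟨m, hm, hi, hx⟩ | ⟨m, hm, hi, hx⟩
  · exact hx
  · rw [hx, pow_eq_zero_of_le (hle hm hi) qX_pow, mul_zero]
  · rw [hx, pow_eq_zero_of_le (hle hm hi) qY_pow, zero_mul]

theorem phiFree_rel ⦃x y : FreeAlgebra L (Fin 3 × ZMod n)⦄ (h : NCRel L n x y) :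
    phiFree hζ x = phiFree hζ y := by
  have hidem (i : ZMod n) : qE hζ i * qE hζ i = qE hζ i := by simp [qE_mul]
  cases h with
  | ee i j =>
    rw [map_mul, phiFree_E, phiFree_E, qE_mul]
    split_ifs
    · rw [phiFree_E]
    · rw [map_zero]
  | unit =>
    rw [finsum_eq_sum_of_fintype, map_sum, map_one, ← sum_qE hζ]
    exact Finset.sum_congr rfl fun i _ => phiFree_E hζ i
  | aspan i =>
    rw [map_mul, map_mul, phiFree_E, phiFree_E, phiFree_A, ← mul_assoc, qE_mul_qY, mul_assoc,
      mul_assoc, hidem, hidem]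
  | bspan i =>
    rw [map_mul, map_mul, phiFree_E, phiFree_E, phiFree_B, mul_assoc, mul_assoc, ← qE_mul_qX,
      ← mul_assoc, ← mul_assoc, hidem, hidem]
  | cyc i x hx => rw [phiFree_cycle hζ hx, map_zero]

/-- The algebra map `N_L(n) → C_L(n)` with `e_i ↦ E_i`, `a_i ↦ Y E_i`, `b_i ↦ E_i X`. -/
def phi : NC L n →ₐ[L] CL L n ζ :=
  RingQuot.liftAlgHom L ⟨phiFree hζ, phiFree_rel hζ⟩

theorem phi_mk (x : FreeAlgebra L (Fin 3 × ZMod n)) :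
    phi hζ (RingQuot.mkAlgHom L (NCRel L n) x) = phiFree hζ x :=
  RingQuot.liftAlgHom_mkAlgHom_apply ..

theorem phi_nE (i : ZMod n) : phi hζ (nE L n i) = qE hζ i := by rw [nE, phi_mk, phiFree_E]

theorem phi_sB : phi hζ (sB L n) = qX L n ζ := by
  simp only [sB, nB, map_sum, phi_mk, phiFree_B]
  rw [← Finset.sum_mul, sum_qE, one_mul]

theorem phi_sA : phi hζ (sA L n) = qY L n ζ := by
  simp only [sA, nA, map_sum, phi_mk, phiFree_A]
  rw [← Finset.mul_sum, sum_qE, mul_one]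

theorem phi_sG : phi hζ (sG hζ) = qG L n ζ := by
  simp only [sG, map_sum, map_smul, phi_nE]
  exact sum_smul_fourierIdem hζ qG_pow

end Phi

/-! ### The isomorphism -/

section Iso

variable {L : Type} [Field L] {n : ℕ} [NeZero n] {ζ : L} (hζ : IsPrimitiveRoot ζ n)

theorem psi_qX : psi hζ (qX L n ζ) = sB L n := by rw [qX, psi_mk, psiFree_X]

theorem psi_qY : psi hζ (qY L n ζ) = sA L n := by rw [qY, psi_mk, psiFree_Y]

theorem psi_qG : psi hζ (qG L n ζ) = sG hζ := by rw [qG, psi_mk, psiFree_G]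

theorem psi_qE (i : ZMod n) : psi hζ (qE hζ i) = nE L n i := by
  rw [← fourierIdem_eq (nE_mul L n) (sum_nE L n) hζ i, qE, fourierIdem, fourierIdem]
  simp only [map_smul, map_sum, map_pow, psi_qG]
  rfl

theorem phi_comp_psi : (phi hζ).comp (psi hζ) = AlgHom.id L (CL L n ζ) := by
  apply RingQuot.ringQuot_ext'
  apply FreeAlgebra.hom_ext
  funext k
  fin_cases k
  · exact (congrArg (phi hζ) (psi_qX hζ)).trans (phi_sB hζ)
  · exact (congrArg (phi hζ) (psi_qY hζ)).trans (phi_sA hζ)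
  · exact (congrArg (phi hζ) (psi_qG hζ)).trans (phi_sG hζ)

theorem psi_comp_phi : (psi hζ).comp (phi hζ) = AlgHom.id L (NC L n) := by
  apply RingQuot.ringQuot_ext'
  apply FreeAlgebra.hom_ext
  funext ⟨k, i⟩
  fin_cases k
  · change psi hζ (phi hζ (RingQuot.mkAlgHom L (NCRel L n) (ncE L n i))) = nE L n i
    rw [phi_mk, phiFree_E, psi_qE]
  · change psi hζ (phi hζ (RingQuot.mkAlgHom L (NCRel L n) (ncA L n i))) = nA L n i
    rw [phi_mk, phiFree_A, map_mul, psi_qE, psi_qY, sA_mul_nE]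
  · change psi hζ (phi hζ (RingQuot.mkAlgHom L (NCRel L n) (ncB L n i))) = nB L n i
    rw [phi_mk, phiFree_B, map_mul, psi_qE, psi_qX, nE_mul_sB]

end Iso

/-!
STATEMENT 17: There is an isomorphism of `L`-algebras `υ : N_L(n) → C_L(n)` which sends
`Σ_{k=1}^n b_k ↦ X`, `Σ_{k=1}^n a_k ↦ Y` and `Σ_{k=1}^n ζ^{n−k} e_k ↦ g` (the sums run
over all vertices `k ∈ ℤ/nℤ`, with `ζ^{n−k}` taken for the representative
`k ∈ {0, 1, …, n−1}`; note `ζ^n = ζ^0 = 1`).  In particular `N_L(n) ≅ C_L(n)`.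
-/

theorem statement_17 (L : Type) [Field L] (n : ℕ) (hn : 0 < n)
    (ζ : L) (hζ : IsPrimitiveRoot ζ n) :
    ∃ υ : NC L n ≃ₐ[L] CL L n ζ,
      υ (RingQuot.mkAlgHom L (NCRel L n) (∑ᶠ i : ZMod n, ncB L n i)) =
        RingQuot.mkAlgHom L (CRel L n ζ) (cX L) ∧
      υ (RingQuot.mkAlgHom L (NCRel L n) (∑ᶠ i : ZMod n, ncA L n i)) =
        RingQuot.mkAlgHom L (CRel L n ζ) (cY L) ∧
      υ (RingQuot.mkAlgHom L (NCRel L n)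
          (∑ᶠ i : ZMod n, algebraMap L _ (ζ ^ (n - i.val)) * ncE L n i)) =
        RingQuot.mkAlgHom L (CRel L n ζ) (cG L) := by
  have : NeZero n := ⟨hn.ne'⟩
  refine ⟨AlgEquiv.ofAlgHom (phi hζ) (psi hζ) (phi_comp_psi hζ) (psi_comp_phi hζ), ?_, ?_, ?_⟩
  · rw [finsum_eq_sum_of_fintype, map_sum]
    exact phi_sB hζ
  · rw [finsum_eq_sum_of_fintype, map_sum]
    exact phi_sA hζ
  · have h : RingQuot.mkAlgHom L (NCRel L n)
        (∑ᶠ i : ZMod n, algebraMap L _ (ζ ^ (n - i.val)) * ncE L n i) = sG hζ := by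
      rw [finsum_eq_sum_of_fintype, map_sum]
      refine Finset.sum_congr rfl fun i _ => ?_
      rw [← Algebra.smul_def, map_smul, zchar_neg]
      rfl
    rw [h]
    exact phi_sG hζ
end
end
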